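/- arXiv:1610.01916 — 3 statements merged into one kernel-verified Lean document; each statement's English description precedes it below -/
import Mathlib

section
/- Convergent expansion of an analytic germ in powers of P (Corollary 2.8): Let d ≥ 1, ℓ an injective linear form, P holomorphic in a neighborhood of 0 ∈ ℂ^d, not identically zero, with P(0) = 0, and let a ∈ ℕ^d be the ℓ-minimal exponent of the Taylor series of P at 0. Then for every f holomorphic in a neighborhood of 0 ∈ ℂ^d there exist ρ > 0 and a sequence (g_n) of bounded holomorphic functions on D(0;ρ) with ∂^β g_n(0) = 0 for every n and every β ∈ a + ℕ^d, such that the series Σ_{n=0}^∞ g_n(x)·P(x)^n converges uniformly on D(0;ρ) and its sum equals f(x) for all x ∈ D(0;ρ). -/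
open Set Complex

noncomputable section

/-- Open polydisk of radius `r` centered at `0` in `ℂ^d`. -/
def polydisk (d : ℕ) (r : ℝ) : Set (Fin d → ℂ) :=
  {x | ∀ j, ‖x j‖ < r}

/-- Partial derivative in the `j`-th coordinate direction. -/
def pderivCoord {d : ℕ} (j : Fin d) (f : (Fin d → ℂ) → ℂ) : (Fin d → ℂ) → ℂ :=
  fun x => fderiv ℂ f x (Pi.single j 1)

/-- Mixed partial derivative `∂^β = ∂^{β_1}_{x_1} ⋯ ∂^{β_d}_{x_d}`. -/
def mixedPartial {d : ℕ} (β : Fin d → ℕ) (f : (Fin d → ℂ) → ℂ) : (Fin d → ℂ) → ℂ :=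
  (List.finRange d).foldr (fun j g => (pderivCoord j)^[β j] g) f

/-!
Substituting `x_j = t ^ ℓ_j * y_j` with `t > 0` small makes the `y ^ a`-term of `P` larger, in `ℓ¹`
norm of coefficients, than all other terms together. Hence `c ↦ (P c) / y ^ a`, restricted to the
exponents in `a + ℕ^d`, is a small perturbation of a multiple of the identity on `ℓ¹` and can be
inverted, which gives a bounded division with remainder `f = R f + P * Q f` where `R f` has no
exponent in `a + ℕ^d`. Iterating, `f = ∑_{n < N} R (Q^n f) * P^n + P^N * Q^N f`, and the last term
decays geometrically where `‖P x‖ * ‖Q‖ < 1`, in particular near `0` since `P 0 = 0`.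
-/

open Filter Topology Function
open scoped lp Nat

/-! ### Division with remainder in `ℓ¹` -/

section EllOne

variable {𝕜 κ F : Type*} [NontriviallyNormedField 𝕜]

lemma hasSum_norm_ellOne (c : ℓ¹(κ, 𝕜)) : HasSum (fun i => ‖c i‖) ‖c‖ := by
  simpa using lp.hasSum_norm (p := 1) (by simp) c

lemma exists_ellOne_of_summable_norm {c : κ → 𝕜} (hc : Summable fun i => ‖c i‖) :
    ∃ C : ℓ¹(κ, 𝕜), ∀ i, C i = c i :=
  ⟨⟨c, memℓp_gen (by simpa using hc)⟩, fun _ => rfl⟩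

lemma norm_sub_smul_single_ellOne [DecidableEq κ] (c : ℓ¹(κ, 𝕜)) (a : κ) :
    ‖c - c a • lp.single 1 a (1 : 𝕜)‖ = ∑' i, update (fun i => ‖c i‖) a 0 i := by
  rw [← (hasSum_norm_ellOne _).tsum_eq]
  refine tsum_congr fun i => ?_
  have hi : (c - c a • lp.single 1 a (1 : 𝕜) : ℓ¹(κ, 𝕜)) i
      = c i - c a * (lp.single 1 a (1 : 𝕜) : ℓ¹(κ, 𝕜)) i := rfl
  rcases eq_or_ne i a with rfl | hia
  · simp [hi]
  · simp [hi, hia]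

lemma continuousLinearMap_ellOne_ext [DecidableEq κ] [AddCommGroup F] [Module 𝕜 F]
    [TopologicalSpace F] [T2Space F] {S T : ℓ¹(κ, 𝕜) →L[𝕜] F}
    (h : ∀ i, S (lp.single 1 i 1) = T (lp.single 1 i 1)) : S = T :=
  lp.ext_continuousLinearMap ENNReal.one_ne_top fun i =>
    ContinuousLinearMap.ext_ring (by simpa using h i)

section Lift

variable [NormedAddCommGroup F] [NormedSpace 𝕜 F] [CompleteSpace F] {K : ℝ}

/-- The universal property of `ℓ¹`: a bounded family `v` in a Banach space extends to the
continuous linear map `c ↦ ∑ c i • v i`, which sends the `i`-th unit vector to `v i`. -/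
def ellOneLift (v : κ → F) (hK : 0 ≤ K) (hv : ∀ i, ‖v i‖ ≤ K) : ℓ¹(κ, 𝕜) →L[𝕜] F :=
  (lp.tsumCLM 𝕜 κ F).comp <| lp.mapCLM 1 (fun i => ContinuousLinearMap.toSpanSingleton 𝕜 (v i)) hK
    fun i => by simpa using hv i

lemma ellOneLift_apply (v : κ → F) (hK : 0 ≤ K) (hv : ∀ i, ‖v i‖ ≤ K) (c : ℓ¹(κ, 𝕜)) :
    ellOneLift v hK hv c = ∑' i, c i • v i :=
  rfl

lemma norm_ellOneLift_le (v : κ → F) (hK : 0 ≤ K) (hv : ∀ i, ‖v i‖ ≤ K) :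
    ‖(ellOneLift v hK hv : ℓ¹(κ, 𝕜) →L[𝕜] F)‖ ≤ K :=
  calc ‖(ellOneLift v hK hv : ℓ¹(κ, 𝕜) →L[𝕜] F)‖
    _ ≤ 1 * K := (ContinuousLinearMap.opNorm_comp_le _ _).trans <|
        mul_le_mul lp.norm_tsumCLM_le (lp.norm_mapCLM_le ..) (norm_nonneg _) zero_le_one
    _ = K := one_mul K

lemma ellOneLift_single [DecidableEq κ] (v : κ → F) (hK : 0 ≤ K) (hv : ∀ i, ‖v i‖ ≤ K) (i : κ) :
    ellOneLift v hK hv (lp.single 1 i (1 : 𝕜)) = v i := by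
  rw [ellOneLift_apply, tsum_eq_single i fun k hk => by simp [hk], lp.single_apply_self, one_smul]

end Lift

lemma norm_pow_continuousLinearMap_apply_le [SeminormedAddCommGroup F] [NormedSpace 𝕜 F]
    (Q : F →L[𝕜] F) (x : F) (n : ℕ) : ‖(Q ^ n) x‖ ≤ ‖Q‖ ^ n * ‖x‖ := by
  induction n with
  | zero => simp
  | succ n ih =>
    calc ‖(Q ^ (n + 1)) x‖ = ‖Q ((Q ^ n) x)‖ := by rw [pow_succ', mul_apply_eq_comp]
      _ ≤ ‖Q‖ * ‖(Q ^ n) x‖ := Q.le_opNorm _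
      _ ≤ ‖Q‖ * (‖Q‖ ^ n * ‖x‖) := by gcongr
      _ = ‖Q‖ ^ (n + 1) * ‖x‖ := by ring

section Convolution

variable {M : Type*} [AddCancelCommMonoid M]

/-- The operator sending `(c β)` to `(c (β + γ))`: the quotient by the monomial `x ^ γ` of the part
of the series which that monomial divides. -/
def ellOneUnshift (γ : M) : ℓ¹(M, 𝕜) →L[𝕜] ℓ¹(M, 𝕜) :=
  LinearMap.mkContinuous
    { toFun c := ⟨fun β => c (β + γ), memℓp_gen <| by
        simpa [comp_def] using
          (hasSum_norm_ellOne c).summable.comp_injective (add_left_injective γ)⟩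
      map_add' _ _ := rfl
      map_smul' _ _ := rfl } 1 fun c => by
    rw [one_mul, ← (hasSum_norm_ellOne c).tsum_eq, ← (hasSum_norm_ellOne _).tsum_eq]
    exact tsum_comp_le_tsum_of_inj (hasSum_norm_ellOne c).summable (fun _ => norm_nonneg _)
      (add_left_injective γ)

lemma ellOneUnshift_apply (γ β : M) (c : ℓ¹(M, 𝕜)) : ellOneUnshift γ c β = c (β + γ) :=
  rfl

lemma norm_ellOneUnshift_le (γ : M) : ‖(ellOneUnshift γ : ℓ¹(M, 𝕜) →L[𝕜] ℓ¹(M, 𝕜))‖ ≤ 1 :=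
  LinearMap.mkContinuous_norm_le _ zero_le_one _

variable [DecidableEq M] [CompleteSpace 𝕜]

/-- Translation of the exponents by `γ`, that is multiplication by the monomial `x ^ γ`. -/
def ellOneShift (γ : M) : ℓ¹(M, 𝕜) →L[𝕜] ℓ¹(M, 𝕜) :=
  ellOneLift (fun β => lp.single 1 (β + γ) 1) zero_le_one fun _ => by simp [lp.norm_single]

lemma norm_ellOneShift_le (γ : M) : ‖(ellOneShift γ : ℓ¹(M, 𝕜) →L[𝕜] ℓ¹(M, 𝕜))‖ ≤ 1 :=
  norm_ellOneLift_le ..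

/-- The convolution product on `ℓ¹(M, 𝕜)`, that is the product of power series with exponents in
`M`, as a continuous bilinear map. -/
def ellOneConv : ℓ¹(M, 𝕜) →L[𝕜] ℓ¹(M, 𝕜) →L[𝕜] ℓ¹(M, 𝕜) :=
  ellOneLift ellOneShift zero_le_one norm_ellOneShift_le

lemma ellOneConv_single (γ : M) :
    ellOneConv (lp.single 1 γ (1 : 𝕜)) = (ellOneShift γ : ℓ¹(M, 𝕜) →L[𝕜] ℓ¹(M, 𝕜)) :=
  ellOneLift_single ..

lemma norm_ellOneConv_apply_le (p : ℓ¹(M, 𝕜)) : ‖ellOneConv p‖ ≤ ‖p‖ := by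
  simpa using (ellOneConv (𝕜 := 𝕜) (M := M)).le_of_opNorm_le (norm_ellOneLift_le ..) p

lemma ellOneLift_conv {v : M → 𝕜} (hv : ∀ β, ‖v β‖ ≤ 1) (hadd : ∀ β γ, v (β + γ) = v β * v γ)
    (p c : ℓ¹(M, 𝕜)) :
    ellOneLift v zero_le_one hv (ellOneConv p c)
      = ellOneLift v zero_le_one hv p * ellOneLift v zero_le_one hv c := by
  set χ : ℓ¹(M, 𝕜) →L[𝕜] 𝕜 := ellOneLift v zero_le_one hv
  suffices (ContinuousLinearMap.compL 𝕜 _ _ _ χ).comp ellOneConv = χ.smulRight χ from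
    DFunLike.congr_fun (DFunLike.congr_fun this p) c
  refine continuousLinearMap_ellOne_ext fun γ => continuousLinearMap_ellOne_ext fun β => ?_
  simp [ellOneConv_single, ellOneShift, ellOneLift_single, χ, hadd, mul_comm]

lemma ellOneUnshift_comp_ellOneShift (γ : M) :
    (ellOneUnshift γ).comp (ellOneShift γ) = (1 : ℓ¹(M, 𝕜) →L[𝕜] ℓ¹(M, 𝕜)) := by
  refine continuousLinearMap_ellOne_ext fun β => ?_
  ext δ
  simp [ellOneShift, ellOneLift_single, ellOneUnshift_apply, Pi.single_apply]

variable {a : M} {p : ℓ¹(M, 𝕜)}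

lemma isUnit_ellOneUnshift_comp_ellOneConv (hp : ‖p - p a • lp.single 1 a (1 : 𝕜)‖ < ‖p a‖) :
    IsUnit ((ellOneUnshift a).comp (ellOneConv p)) := by
  have hpa : p a ≠ 0 := norm_pos_iff.1 ((norm_nonneg _).trans_lt hp)
  set q := p - p a • lp.single 1 a (1 : 𝕜) with hq
  set T := -(p a)⁻¹ • (ellOneUnshift a).comp (ellOneConv q) with hT
  have hT_lt : ‖T‖ < 1 := by
    have hcomp : ‖(ellOneUnshift a).comp (ellOneConv q)‖ ≤ 1 * ‖q‖ :=
      (ContinuousLinearMap.opNorm_comp_le _ _).trans <| mul_le_mul (norm_ellOneUnshift_le a)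
        (norm_ellOneConv_apply_le q) (norm_nonneg _) zero_le_one
    rw [hT, norm_smul, norm_neg, norm_inv, inv_mul_lt_iff₀ (norm_pos_iff.2 hpa), mul_one]
    exact (hcomp.trans_eq (one_mul _)).trans_lt hp
  have hfactor : (ellOneUnshift a).comp (ellOneConv p) = Units.mk0 (p a) hpa • (1 - T) := by
    have hpq : ellOneConv p = p a • ellOneShift a + ellOneConv q := by
      rw [hq, map_sub, map_smul, ellOneConv_single, add_sub_cancel]
    rw [hpq, ContinuousLinearMap.comp_add, ContinuousLinearMap.comp_smul,
      ellOneUnshift_comp_ellOneShift, hT, Units.smul_mk0, smul_sub, smul_smul]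
    simp [hpa]
  rw [hfactor]
  exact (isUnit_one_sub_of_norm_lt_one hT_lt).smul _

theorem exists_ellOne_division (hp : ‖p - p a • lp.single 1 a (1 : 𝕜)‖ < ‖p a‖) :
    ∃ Q R : ℓ¹(M, 𝕜) →L[𝕜] ℓ¹(M, 𝕜),
      (∀ c, c = R c + ellOneConv p (Q c)) ∧ ∀ c β, R c (β + a) = 0 := by
  obtain ⟨U, hU⟩ := isUnit_ellOneUnshift_comp_ellOneConv hp
  set Q : ℓ¹(M, 𝕜) →L[𝕜] ℓ¹(M, 𝕜) := (U⁻¹).val.comp (ellOneUnshift a)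
  have hunshift (c) : ellOneUnshift a (ellOneConv p (Q c)) = ellOneUnshift a c := by
    have := DFunLike.congr_fun U.mul_inv (ellOneUnshift a c)
    rwa [hU] at this
  refine ⟨Q, 1 - (ellOneConv p).comp Q, fun c => by simp, fun c β => ?_⟩
  have := congrArg (fun b : ℓ¹(M, 𝕜) => b β) (hunshift c)
  simp only [ellOneUnshift_apply] at this
  simp [this]

theorem exists_ellOne_expansion (hp : ‖p - p a • lp.single 1 a (1 : 𝕜)‖ < ‖p a‖)
    (c : ℓ¹(M, 𝕜)) :
    ∃ (G : ℕ → ℓ¹(M, 𝕜)) (K : ℝ), 0 ≤ K ∧ (∀ n β, G n (β + a) = 0) ∧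
      ∀ χ : ℓ¹(M, 𝕜) →L[𝕜] 𝕜, ‖χ‖ ≤ 1 → (∀ b, χ (ellOneConv p b) = χ p * χ b) →
        ∀ N, ‖χ c - ∑ n ∈ Finset.range N, χ (G n) * χ p ^ n‖ ≤ ‖c‖ * (‖χ p‖ * K) ^ N := by
  obtain ⟨Q, R, hdiv, hR⟩ := exists_ellOne_division hp
  refine ⟨fun n => R ((Q ^ n) c), ‖Q‖, norm_nonneg _, fun n => hR _, fun χ hχ hmul N => ?_⟩
  have hremainder : χ c - ∑ n ∈ Finset.range N, χ (R ((Q ^ n) c)) * χ p ^ n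
      = χ p ^ N * χ ((Q ^ N) c) := by
    clear hχ
    induction N with
    | zero => simp
    | succ N ih =>
      have hstep : χ ((Q ^ N) c) = χ (R ((Q ^ N) c)) + χ p * χ ((Q ^ (N + 1)) c) := by
        rw [pow_succ', mul_apply_eq_comp, ← hmul, ← map_add, ← hdiv]
      rw [Finset.sum_range_succ, ← sub_sub, ih, hstep]
      ring
  calc ‖χ c - ∑ n ∈ Finset.range N, χ (R ((Q ^ n) c)) * χ p ^ n‖
    _ = ‖χ p‖ ^ N * ‖χ ((Q ^ N) c)‖ := by rw [hremainder, norm_mul, norm_pow]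
    _ ≤ ‖χ p‖ ^ N * (‖Q‖ ^ N * ‖c‖) := by
      gcongr
      exact (χ.le_of_opNorm_le hχ _).trans <|
        (one_mul _).trans_le (norm_pow_continuousLinearMap_apply_le Q c N)
    _ = ‖c‖ * (‖χ p‖ * ‖Q‖) ^ N := by ring

end Convolution

end EllOne

/-! ### Monomials -/

section MultiPow

variable {ι : Type*} [Fintype ι]

/-- The monomial `x ^ β = ∏ j, x j ^ β j` in multi-index notation. -/
def multiPow {R : Type*} [CommMonoid R] (x : ι → R) (β : ι → ℕ) : R :=
  ∏ j, x j ^ β j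

lemma multiPow_add {R : Type*} [CommMonoid R] (x : ι → R) (β γ : ι → ℕ) :
    multiPow x (β + γ) = multiPow x β * multiPow x γ := by
  simp [multiPow, pow_add, Finset.prod_mul_distrib]

lemma multiPow_zero_left {R : Type*} [CommSemiring R] {β : ι → ℕ} (hβ : β ≠ 0) :
    multiPow (0 : ι → R) β = 0 := by
  obtain ⟨j, hj⟩ := ne_iff.1 hβ
  exact Finset.prod_eq_zero (Finset.mem_univ j) (zero_pow hj)

lemma multiPow_update [DecidableEq ι] {R : Type*} [CommMonoid R] (x : ι → R) (j : ι) (z : R)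
    (β : ι → ℕ) : multiPow (update x j z) β = z ^ β j * ∏ i ∈ Finset.univ.erase j, x i ^ β i := by
  rw [multiPow, ← Finset.mul_prod_erase _ _ (Finset.mem_univ j), update_self]
  exact congrArg _ <| Finset.prod_congr rfl fun i hi => by
    rw [update_of_ne (Finset.ne_of_mem_erase hi)]

variable {𝕜 : Type*} [NormedField 𝕜]

lemma multiPow_ne_zero {r : ι → 𝕜} (hr : ∀ j, r j ≠ 0) (β : ι → ℕ) : multiPow r β ≠ 0 :=
  Finset.prod_ne_zero_iff.2 fun j _ => pow_ne_zero _ (hr j)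

lemma multiPow_mul_multiPow_div {r : ι → 𝕜} (hr : ∀ j, r j ≠ 0) (x : ι → 𝕜) (β : ι → ℕ) :
    multiPow r β * multiPow (x / r) β = multiPow x β := by
  rw [multiPow, multiPow, multiPow, ← Finset.prod_mul_distrib]
  exact Finset.prod_congr rfl fun j _ => by rw [← mul_pow, Pi.div_apply, mul_div_cancel₀ _ (hr j)]

lemma norm_multiPow (x : ι → 𝕜) (β : ι → ℕ) : ‖multiPow x β‖ = multiPow (fun j => ‖x j‖) β := by
  simp [multiPow, norm_prod]

lemma norm_multiPow_le {x : ι → 𝕜} {s : ℝ} (hx : ‖x‖ ≤ s) (β : ι → ℕ) :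
    ‖multiPow x β‖ ≤ s ^ ∑ j, β j := by
  rw [norm_multiPow, multiPow, ← Finset.prod_pow_eq_pow_sum]
  gcongr with j
  exact (norm_le_pi_norm x j).trans hx

lemma pow_sum_le_norm_multiPow {r : ι → 𝕜} {ρ : ℝ} (hρ : 0 ≤ ρ) (hr : ∀ j, ρ ≤ ‖r j‖)
    (β : ι → ℕ) : ρ ^ ∑ j, β j ≤ ‖multiPow r β‖ := by
  rw [norm_multiPow, multiPow, ← Finset.prod_pow_eq_pow_sum]
  gcongr with j
  exact hr j

end MultiPow

/-! ### Power series in several variables -/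

section MonomialExpansion

variable {ι 𝕜 : Type*} [Fintype ι] [NontriviallyNormedField 𝕜]

/-- `F` is the sum of the power series `∑ c β * x ^ β` on the closed polydisk of radius `s > 0`,
on which that series converges normally. -/
structure HasMonomialExpansion (F : (ι → 𝕜) → 𝕜) (c : (ι → ℕ) → 𝕜) (s : ℝ) : Prop where
  pos : 0 < s
  summable : Summable fun β => ‖c β‖ * s ^ ∑ j, β j
  hasSum : ∀ x, ‖x‖ ≤ s → HasSum (fun β => c β * multiPow x β) (F x)

namespace HasMonomialExpansion

variable {F : (ι → 𝕜) → 𝕜} {c : (ι → ℕ) → 𝕜} {s : ℝ}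

lemma norm_le (hF : HasMonomialExpansion F c s) {x : ι → 𝕜} (hx : ‖x‖ ≤ s) :
    ‖F x‖ ≤ ∑' β, ‖c β‖ * s ^ ∑ j, β j :=
  (hF.hasSum x hx).norm_le_of_bounded hF.summable.hasSum fun β => by
    rw [norm_mul]
    gcongr
    exact norm_multiPow_le hx β

lemma apply_zero (hF : HasMonomialExpansion F c s) : F 0 = c 0 := by
  have hsingle : HasSum (fun β => c β * multiPow 0 β) (c 0 * multiPow 0 0) :=
    hasSum_single 0 fun β hβ => by rw [multiPow_zero_left hβ, mul_zero]
  simpa [multiPow] using (hF.hasSum 0 (by simpa using hF.pos.le)).unique hsingle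

end HasMonomialExpansion

/-- The monomial `x ^ β` as a multilinear form in `n = |β|` variables. -/
def monomialForm (β : ι → ℕ) {n : ℕ} (hβ : ∑ j, β j = n) :
    ContinuousMultilinearMap 𝕜 (fun _ : Fin n => ι → 𝕜) 𝕜 :=
  ((ContinuousMultilinearMap.mkPiAlgebra 𝕜 (Σ j, Fin (β j)) 𝕜).compContinuousLinearMap
    fun i => ContinuousLinearMap.proj i.1).domDomCongr
      (Fintype.equivFinOfCardEq (by simpa using hβ))

lemma monomialForm_apply (β : ι → ℕ) {n : ℕ} (hβ : ∑ j, β j = n) (x : ι → 𝕜) :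
    monomialForm β hβ (fun _ => x) = multiPow x β := by
  simp [monomialForm, multiPow, Fintype.prod_sigma]

lemma norm_monomialForm_le (β : ι → ℕ) {n : ℕ} (hβ : ∑ j, β j = n) :
    ‖(monomialForm β hβ : ContinuousMultilinearMap 𝕜 (fun _ : Fin n => ι → 𝕜) 𝕜)‖ ≤ 1 := by
  refine ContinuousMultilinearMap.opNorm_le_bound zero_le_one fun v => ?_
  set e : (Σ j, Fin (β j)) ≃ Fin n := Fintype.equivFinOfCardEq (by simpa using hβ)
  calc ‖monomialForm β hβ v‖ = ∏ i, ‖v (e i) i.1‖ := by simp [monomialForm, norm_prod, e]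
    _ ≤ ∏ i, ‖v (e i)‖ := by gcongr with i; exact norm_le_pi_norm _ _
    _ = 1 * ∏ i, ‖v i‖ := by rw [one_mul, e.prod_comp fun i => ‖v i‖]

section MonomialSeries

variable [DecidableEq ι]

/-- The formal multilinear series whose homogeneous part of degree `n` is
`∑ c β * x ^ β` over the multi-indices of degree `n`. -/
def monomialSeries (c : (ι → ℕ) → 𝕜) : FormalMultilinearSeries 𝕜 (ι → 𝕜) 𝕜 :=
  fun n => ∑ β ∈ (Finset.piAntidiag Finset.univ n).attach,
    c β • monomialForm β.1 (Finset.mem_piAntidiag.1 β.2).1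

lemma monomialSeries_apply (c : (ι → ℕ) → 𝕜) (n : ℕ) (x : ι → 𝕜) :
    monomialSeries c n (fun _ => x)
      = ∑ β ∈ Finset.piAntidiag Finset.univ n, c β * multiPow x β := by
  rw [← Finset.sum_attach]
  simp [monomialSeries, _root_.sum_apply, monomialForm_apply]

lemma norm_monomialSeries_le (c : (ι → ℕ) → 𝕜) (n : ℕ) :
    ‖monomialSeries c n‖ ≤ ∑ β ∈ Finset.piAntidiag Finset.univ n, ‖c β‖ := by
  rw [← Finset.sum_attach]
  refine norm_sum_le_of_le _ fun β _ => ?_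
  rw [norm_smul]
  exact mul_le_of_le_one_right (norm_nonneg _) (norm_monomialForm_le ..)

namespace HasMonomialExpansion

variable {F : (ι → 𝕜) → 𝕜} {c : (ι → ℕ) → 𝕜} {s : ℝ}

lemma le_radius_monomialSeries (hF : HasMonomialExpansion F c s) :
    ENNReal.ofReal s ≤ (monomialSeries c).radius := by
  refine (monomialSeries c).le_radius_of_bound (∑' β, ‖c β‖ * s ^ ∑ j, β j) fun n => ?_
  have hs := hF.pos.le
  rw [Real.coe_toNNReal _ hs]
  calc ‖monomialSeries c n‖ * s ^ n
    _ ≤ (∑ β ∈ Finset.piAntidiag Finset.univ n, ‖c β‖) * s ^ n := by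
      gcongr
      exact norm_monomialSeries_le c n
    _ = ∑ β ∈ Finset.piAntidiag Finset.univ n, ‖c β‖ * s ^ ∑ j, β j := by
      rw [Finset.sum_mul]
      exact Finset.sum_congr rfl fun β hβ => by rw [(Finset.mem_piAntidiag.1 hβ).1]
    _ ≤ ∑' β, ‖c β‖ * s ^ ∑ j, β j := hF.summable.sum_le_tsum _ fun _ _ => by positivity

variable [CompleteSpace 𝕜]

lemma hasSum_monomialSeries (hF : HasMonomialExpansion F c s) {x : ι → 𝕜} (hx : ‖x‖ ≤ s) :
    HasSum (fun n => monomialSeries c n fun _ => x) (F x) := by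
  have hdegree (n) : ∑' β : (fun β : ι → ℕ => ∑ j, β j) ⁻¹' {n}, c β * multiPow x β
      = monomialSeries c n fun _ => x := by
    have hfiber : (fun β : ι → ℕ => ∑ j, β j) ⁻¹' {n}
        = (Finset.piAntidiag Finset.univ n : Finset (ι → ℕ)) := by
      ext β
      simp [Finset.mem_piAntidiag]
    rw [hfiber, Finset.tsum_subtype' _ fun β => c β * multiPow x β, monomialSeries_apply]
  simpa only [hdegree] using (hF.hasSum x hx).tsum_fiberwise fun β => ∑ j, β j

lemma hasFPowerSeriesOnBall (hF : HasMonomialExpansion F c s) :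
    HasFPowerSeriesOnBall F (monomialSeries c) 0 (ENNReal.ofReal s) where
  r_le := hF.le_radius_monomialSeries
  r_pos := ENNReal.ofReal_pos.2 hF.pos
  hasSum {x} hx := by
    rw [Metric.eball_ofReal, mem_ball_zero_iff] at hx
    rw [zero_add]
    exact hF.hasSum_monomialSeries hx.le

end HasMonomialExpansion

end MonomialSeries

lemma HasMonomialExpansion.analyticOnNhd [CompleteSpace 𝕜] {F : (ι → 𝕜) → 𝕜} {c : (ι → ℕ) → 𝕜}
    {s : ℝ} (hF : HasMonomialExpansion F c s) :
    AnalyticOnNhd 𝕜 F (Metric.ball 0 s) := by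
  classical
  simpa only [Metric.eball_ofReal] using hF.hasFPowerSeriesOnBall.analyticOnNhd

section Words

variable [DecidableEq ι]

/-- The multi-index recording how often each letter occurs in a word over the alphabet `ι`; words
of length `n` index the coefficients of a multilinear form in `n` variables of `ι → 𝕜`. -/
def wordContent (w : Σ n, Fin n → ι) : ι → ℕ :=
  ∑ i, Pi.single (w.2 i) 1

lemma sum_wordContent (w : Σ n, Fin n → ι) : ∑ j, wordContent w j = w.1 := by
  simp [wordContent, Finset.sum_apply, Finset.sum_comm (γ := ι)]

lemma multiPow_wordContent {R : Type*} [CommMonoid R] (x : ι → R) (w : Σ n, Fin n → ι) :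
    multiPow x (wordContent w) = ∏ i, x (w.2 i) := by
  simp only [multiPow, wordContent, Finset.sum_apply, ← Finset.prod_pow_eq_pow_sum]
  rw [Finset.prod_comm]
  refine Finset.prod_congr rfl fun i _ => ?_
  rw [Finset.prod_eq_single (w.2 i) (fun j _ hj => by simp [hj]) (by simp)]
  simp

lemma multilinear_apply_eq_sum_words {n : ℕ}
    (m : ContinuousMultilinearMap 𝕜 (fun _ : Fin n => ι → 𝕜) 𝕜) (x : ι → 𝕜) :
    m (fun _ => x) = ∑ w : Fin n → ι, m (fun i => Pi.single (w i) 1) *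
      multiPow x (wordContent ⟨n, w⟩) := by
  have hx : x = ∑ j, x j • (Pi.single j 1 : ι → 𝕜) := pi_eq_sum_univ' x
  conv_lhs => rw [hx, m.map_sum fun _ j => x j • (Pi.single j 1 : ι → 𝕜)]
  refine Finset.sum_congr rfl fun w _ => ?_
  rw [m.map_smul_univ (fun i => x (w i)) fun i => Pi.single (w i) 1, smul_eq_mul, mul_comm,
    multiPow_wordContent]

lemma norm_multilinear_word_le {n : ℕ}
    (m : ContinuousMultilinearMap 𝕜 (fun _ : Fin n => ι → 𝕜) 𝕜) (w : Fin n → ι) :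
    ‖m fun i => Pi.single (w i) 1‖ ≤ ‖m‖ :=
  (m.le_opNorm _).trans <| mul_le_of_le_one_right (norm_nonneg _) <|
    Finset.prod_le_one (fun _ _ => norm_nonneg _) fun i _ => by simp [Pi.norm_single]

lemma summable_norm_words {p : FormalMultilinearSeries 𝕜 (ι → 𝕜) 𝕜} {q s C : ℝ}
    (hs : 0 ≤ s) (hsq : Fintype.card ι * s ≤ q / 2) (hp : ∀ n, ‖p n‖ * q ^ n ≤ C) :
    Summable fun w : Σ n, Fin n → ι => ‖p w.1 fun i => Pi.single (w.2 i) 1‖ * s ^ w.1 := by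
  have hdegree (n : ℕ) : ∑' w : Fin n → ι, ‖p n fun i => Pi.single (w i) 1‖ * s ^ n
      ≤ C * (1 / 2) ^ n :=
    calc ∑' w : Fin n → ι, ‖p n fun i => Pi.single (w i) 1‖ * s ^ n
      _ ≤ ∑ _w : Fin n → ι, ‖p n‖ * s ^ n := by
        rw [tsum_fintype]
        gcongr
        exact norm_multilinear_word_le ..
      _ = ‖p n‖ * (Fintype.card ι * s) ^ n := by simp [mul_pow]; ring
      _ ≤ ‖p n‖ * (q / 2) ^ n := by gcongr
      _ = ‖p n‖ * q ^ n * (1 / 2) ^ n := by rw [div_pow, one_div, inv_pow]; ring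
      _ ≤ C * (1 / 2) ^ n := by gcongr; exact hp n
  refine (summable_sigma_of_nonneg fun w => by positivity).2 ⟨fun n => .of_finite, ?_⟩
  exact .of_nonneg_of_le (fun n => tsum_nonneg fun _ => by positivity) hdegree
    (summable_geometric_two.mul_left C)

lemma hasSum_words [CompleteSpace 𝕜] {p : FormalMultilinearSeries 𝕜 (ι → 𝕜) 𝕜} {s : ℝ}
    (hp : Summable fun w : Σ n, Fin n → ι => ‖p w.1 fun i => Pi.single (w.2 i) 1‖ * s ^ w.1)
    {x : ι → 𝕜} (hx : ‖x‖ ≤ s) {b : 𝕜} (hb : HasSum (fun n => p n fun _ => x) b) :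
    HasSum (fun w : Σ n, Fin n → ι =>
      p w.1 (fun i => Pi.single (w.2 i) 1) * multiPow x (wordContent w)) b := by
  have hsummable : Summable fun w : Σ n, Fin n → ι =>
      p w.1 (fun i => Pi.single (w.2 i) 1) * multiPow x (wordContent w) := by
    refine hp.of_norm_bounded fun w => ?_
    rw [norm_mul]
    gcongr
    simpa only [sum_wordContent] using norm_multiPow_le hx (wordContent w)
  have hsigma := hsummable.hasSum.sigma fun n => hasSum_fintype _
  simp only [← multilinear_apply_eq_sum_words] at hsigma
  exact hsigma.unique hb ▸ hsummable.hasSum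

end Words

variable [CompleteSpace 𝕜]

lemma HasMonomialExpansion.of_indexed {A : Type*} (τ : A → ι → ℕ) {u : A → 𝕜}
    {F : (ι → 𝕜) → 𝕜} {s : ℝ} (hs : 0 < s) (hu : Summable fun a => ‖u a‖ * s ^ ∑ j, τ a j)
    (hF : ∀ x, ‖x‖ ≤ s → HasSum (fun a => u a * multiPow x (τ a)) (F x)) :
    HasMonomialExpansion F (fun β => ∑' a : τ ⁻¹' {β}, u a) s where
  pos := hs
  summable := by
    have hfiber (β) : ∑' a : τ ⁻¹' {β}, ‖u a‖ * s ^ ∑ j, τ a j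
        = (∑' a : τ ⁻¹' {β}, ‖u a‖) * s ^ ∑ j, β j := by
      rw [← tsum_mul_right]
      exact tsum_congr fun a => by rw [a.2]
    have hsummable (β) : Summable fun a : τ ⁻¹' {β} => ‖u a‖ := by
      rw [← summable_mul_right_iff (pow_pos hs (∑ j, β j)).ne']
      exact (hu.subtype (τ ⁻¹' {β})).congr fun a => by rw [comp_apply, show τ a.1 = β from a.2]
    refine .of_nonneg_of_le (fun β => by positivity) (fun β => ?_)
      (hu.hasSum.tsum_fiberwise τ).summable
    rw [hfiber]
    gcongr
    exact norm_tsum_le_tsum_norm (hsummable β)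
  hasSum x hx := by
    have hfiber (β) : ∑' a : τ ⁻¹' {β}, u a * multiPow x (τ a)
        = (∑' a : τ ⁻¹' {β}, u a) * multiPow x β := by
      rw [← tsum_mul_right]
      exact tsum_congr fun a => by rw [a.2]
    simpa only [hfiber] using (hF x hx).tsum_fiberwise τ

theorem exists_hasMonomialExpansion {F : (ι → 𝕜) → 𝕜} (hF : AnalyticAt 𝕜 F 0) :
    ∃ c s, HasMonomialExpansion F c s := by
  classical
  obtain ⟨p, R, hp⟩ := hF
  obtain ⟨q, hq, hqR⟩ := ENNReal.lt_iff_exists_nnreal_btwn.1 hp.r_pos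
  obtain ⟨C, -, hC⟩ := p.norm_mul_pow_le_of_lt_radius (hqR.trans_le hp.r_le)
  have hq : (0 : ℝ) < q := by exact_mod_cast hq
  set s : ℝ := q / (2 * (Fintype.card ι + 1)) with hs_def
  have hs : 0 < s := by positivity
  have hsq : s < q := div_lt_self hq (by linarith [(Fintype.card ι).cast_nonneg (α := ℝ)])
  have hcard : Fintype.card ι * s ≤ q / 2 := by rw [hs_def]; field_simp; linarith
  have hwords := summable_norm_words hs.le hcard hC
  refine ⟨_, s, .of_indexed wordContent hs (by simpa only [sum_wordContent] using hwords)
    fun x hx => hasSum_words hwords hx ?_⟩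
  have hxR : x ∈ Metric.eball 0 R := by
    rw [Metric.mem_eball, edist_zero_right, enorm_eq_nnnorm]
    exact (ENNReal.coe_lt_coe.2 (hx.trans_lt hsq)).trans hqR
  simpa using hp.hasSum hxR

end MonomialExpansion

/-! ### Partial derivatives and coefficients -/

section Derivatives

lemma hasDerivAt_multiPow_update {ι 𝕜 : Type*} [Fintype ι] [DecidableEq ι]
    [NontriviallyNormedField 𝕜] (x : ι → 𝕜) (j : ι) (β : ι → ℕ) :
    HasDerivAt (fun z => multiPow (update x j z) β) (β j * multiPow x (β - Pi.single j 1))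
      (x j) := by
  have hmonomial : multiPow x (β - Pi.single j 1)
      = x j ^ (β j - 1) * ∏ i ∈ Finset.univ.erase j, x i ^ β i := by
    rw [← update_eq_self j x, multiPow_update, update_eq_self]
    refine congrArg₂ _ (by simp) (Finset.prod_congr rfl fun i hi => ?_)
    simp [Finset.ne_of_mem_erase hi]
  simp only [multiPow_update, hmonomial, ← mul_assoc]
  exact (hasDerivAt_pow (β j) (x j)).mul_const _

/-- The coefficients of `∂F/∂x_j` in terms of the coefficients `c` of `F`. -/
def coeffDeriv {ι R : Type*} [DecidableEq ι] [Semiring R] (j : ι) (c : (ι → ℕ) → R) :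
    (ι → ℕ) → R :=
  fun β => (β j + 1) * c (β + Pi.single j 1)

lemma iterate_coeffDeriv {ι R : Type*} [DecidableEq ι] [CommSemiring R] (j : ι) (k : ℕ)
    (c : (ι → ℕ) → R) (γ : ι → ℕ) :
    (coeffDeriv j)^[k] c γ = (γ j + 1).ascFactorial k * c (γ + Pi.single j k) := by
  induction k generalizing c with
  | zero => simp
  | succ k ih =>
    rw [iterate_succ_apply, ih, coeffDeriv, Nat.ascFactorial_succ, add_assoc, ← Pi.single_add]
    simp only [Pi.add_apply, Pi.single_eq_same]
    push_cast
    ring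

lemma foldr_coeffDeriv {ι R : Type*} [DecidableEq ι] [CommSemiring R] (β : ι → ℕ)
    {l : List ι} (hl : l.Nodup) (c : (ι → ℕ) → R) (γ : ι → ℕ) :
    l.foldr (fun j b => (coeffDeriv j)^[β j] b) c γ
      = (l.map fun j => ((γ j + 1).ascFactorial (β j) : R)).prod
        * c (γ + (l.map fun j => Pi.single j (β j)).sum) := by
  induction l generalizing γ with
  | nil => simp
  | cons j l ih =>
    obtain ⟨hj, hl⟩ := List.nodup_cons.1 hl
    have hγ : (l.map fun i => (((γ + Pi.single j (β j) : ι → ℕ) i + 1).ascFactorial (β i) : R))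
        = l.map fun i => ((γ i + 1).ascFactorial (β i) : R) :=
      List.map_congr_left fun i hi => by simp [ne_of_mem_of_not_mem hi hj]
    rw [List.foldr_cons, iterate_coeffDeriv, ih hl, hγ]
    simp [add_assoc, mul_assoc]

variable {d : ℕ} {F : (Fin d → ℂ) → ℂ} {c : (Fin d → ℕ) → ℂ} {s : ℝ}

lemma pderivCoord_eq_deriv_update {x : Fin d → ℂ} (hF : DifferentiableAt ℂ F x) (j : Fin d) :
    pderivCoord j F x = deriv (fun z => F (update x j z)) (x j) := by
  rw [← update_eq_self j x] at hF
  have := (hF.hasFDerivAt.comp_hasDerivAt (x j) (hasDerivAt_update x j (x j))).deriv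
  rw [update_eq_self] at this
  exact this.symm

namespace HasMonomialExpansion

lemma summable_coeffDeriv (hF : HasMonomialExpansion F c s) (j : Fin d) :
    Summable fun β => ‖coeffDeriv j c β‖ * (s / 2) ^ ∑ i, β i := by
  have hs := hF.pos
  have hshift := (hF.summable.comp_injective (add_left_injective (Pi.single j 1))).mul_left s⁻¹
  refine .of_nonneg_of_le (fun β => by positivity) (fun β => ?_) hshift
  have hdegree : ∑ i, (β + Pi.single j 1 : Fin d → ℕ) i = ∑ i, β i + 1 := by
    simp [Finset.sum_add_distrib]
  have hfactor : ‖(β j : ℂ) + 1‖ ≤ 2 ^ ∑ i, β i := by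
    have hβj : β j ≤ ∑ i, β i := Finset.single_le_sum (fun _ _ => Nat.zero_le _) (Finset.mem_univ j)
    have hpow : β j + 1 ≤ 2 ^ ∑ i, β i := hβj.trans_lt Nat.lt_two_pow_self
    rw [← Nat.cast_add_one, Complex.norm_natCast]
    exact_mod_cast hpow
  calc ‖coeffDeriv j c β‖ * (s / 2) ^ ∑ i, β i
    _ = ‖(β j : ℂ) + 1‖ * ‖c (β + Pi.single j 1)‖ * (s / 2) ^ ∑ i, β i := by
      rw [coeffDeriv, norm_mul]
    _ ≤ 2 ^ (∑ i, β i) * ‖c (β + Pi.single j 1)‖ * (s / 2) ^ ∑ i, β i := by gcongr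
    _ = s⁻¹ * (‖c (β + Pi.single j 1)‖ * s ^ (∑ i, β i + 1)) := by
      rw [div_pow, pow_succ]
      field_simp
    _ = _ := by rw [comp_apply, hdegree]

lemma hasSum_pderivCoord (hF : HasMonomialExpansion F c s) (j : Fin d) {x : Fin d → ℂ}
    (hx : ‖x‖ < s) :
    HasSum (fun β => c β * (β j * multiPow x (β - Pi.single j 1))) (pderivCoord j F x) := by
  have hupdate {z : ℂ} (hz : z ∈ Metric.ball 0 s) : ‖update x j z‖ ≤ s := by
    refine (pi_norm_le_iff_of_nonneg hF.pos.le).2 fun i => ?_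
    rcases eq_or_ne i j with rfl | hij
    · simpa using (mem_ball_zero_iff.1 hz).le
    · simpa [hij] using (norm_le_pi_norm x i).trans hx.le
  have hxj : x j ∈ Metric.ball 0 s := mem_ball_zero_iff.2 ((norm_le_pi_norm x j).trans_lt hx)
  have hFx : DifferentiableAt ℂ F x :=
    (hF.analyticOnNhd x (mem_ball_zero_iff.2 hx)).differentiableAt
  have hsum := Complex.hasSum_deriv_of_summable_norm (U := Metric.ball 0 s)
    (F := fun β z => c β * multiPow (update x j z) β) hF.summable
    (fun β => by simp only [multiPow_update]; fun_prop) Metric.isOpen_ball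
    (fun β z hz => by
      rw [norm_mul]
      gcongr
      exact norm_multiPow_le (hupdate hz) β) hxj
  have hF_update : (fun z => ∑' β, c β * multiPow (update x j z) β)
      =ᶠ[𝓝 (x j)] fun z => F (update x j z) := by
    filter_upwards [Metric.isOpen_ball.mem_nhds hxj] with z hz
    exact (hF.hasSum _ (hupdate hz)).tsum_eq
  rw [hF_update.deriv_eq, ← pderivCoord_eq_deriv_update hFx] at hsum
  simpa only [((hasDerivAt_multiPow_update x j _).const_mul _).deriv] using hsum

lemma pderiv (hF : HasMonomialExpansion F c s) (j : Fin d) :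
    HasMonomialExpansion (pderivCoord j F) (coeffDeriv j c) (s / 2) where
  pos := half_pos hF.pos
  summable := hF.summable_coeffDeriv j
  hasSum x hx := by
    have hsum := hF.hasSum_pderivCoord j (hx.trans_lt (half_lt_self hF.pos))
    rw [← (add_left_injective (Pi.single j 1)).hasSum_iff] at hsum
    · simpa [comp_def, coeffDeriv, mul_assoc, mul_left_comm] using hsum
    · intro β hβ
      have hβj : β j = 0 := by
        by_contra hβj
        refine hβ ⟨β - Pi.single j 1, tsub_add_cancel_of_le fun i => ?_⟩
        rcases eq_or_ne i j with rfl | hij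
        · simpa [Nat.one_le_iff_ne_zero] using hβj
        · simp [hij]
      simp [hβj]

lemma iterate_pderiv (hF : HasMonomialExpansion F c s) (j : Fin d) (k : ℕ) :
    ∃ s', HasMonomialExpansion ((pderivCoord j)^[k] F) ((coeffDeriv j)^[k] c) s' := by
  induction k with
  | zero => exact ⟨s, hF⟩
  | succ k ih =>
    obtain ⟨s', hs'⟩ := ih
    simp only [iterate_succ_apply']
    exact ⟨_, hs'.pderiv j⟩

lemma foldr_pderiv (hF : HasMonomialExpansion F c s) (β : Fin d → ℕ) (l : List (Fin d)) :
    ∃ s', HasMonomialExpansion (l.foldr (fun j g => (pderivCoord j)^[β j] g) F)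
      (l.foldr (fun j b => (coeffDeriv j)^[β j] b) c) s' := by
  induction l with
  | nil => exact ⟨s, hF⟩
  | cons j l ih => exact ih.elim fun _ hs' => hs'.iterate_pderiv j (β j)

theorem mixedPartial_zero (hF : HasMonomialExpansion F c s) (β : Fin d → ℕ) :
    mixedPartial β F 0 = (∏ j, (β j)! : ℕ) * c β := by
  obtain ⟨s', hs'⟩ := hF.foldr_pderiv β (List.finRange d)
  have hsum : ((List.finRange d).map fun j => (Pi.single j (β j) : Fin d → ℕ)).sum = β := by
    rw [← List.ofFn_eq_map, List.sum_ofFn, Finset.univ_sum_single]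
  rw [mixedPartial, hs'.apply_zero, foldr_coeffDeriv β (List.nodup_finRange d), hsum, zero_add,
    ← List.ofFn_eq_map, List.prod_ofFn]
  simp [Nat.one_ascFactorial]

lemma mixedPartial_zero_eq_zero_iff (hF : HasMonomialExpansion F c s) (β : Fin d → ℕ) :
    mixedPartial β F 0 = 0 ↔ c β = 0 := by
  simp [hF.mixedPartial_zero, Finset.prod_eq_zero_iff, Nat.factorial_ne_zero]

end HasMonomialExpansion

end Derivatives

/-! ### Expansion in powers of a function with a dominant coefficient -/

section Rescaling

variable {ι 𝕜 : Type*} [Fintype ι] [NontriviallyNormedField 𝕜]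

lemma norm_div_le_one_of_forall_le {x r : ι → 𝕜} {ρ : ℝ} (hρ : 0 < ρ) (hr : ∀ j, ρ ≤ ‖r j‖)
    (hx : ‖x‖ ≤ ρ) : ‖x / r‖ ≤ 1 := by
  refine (pi_norm_le_iff_of_nonneg zero_le_one).2 fun j => ?_
  rw [Pi.div_apply, norm_div, div_le_one (hρ.trans_le (hr j))]
  exact (norm_le_pi_norm x j).trans (hx.trans (hr j))

lemma norm_le_norm_of_norm_div_le_one {x r : ι → 𝕜} (hr : ∀ j, r j ≠ 0) (hx : ‖x / r‖ ≤ 1) :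
    ‖x‖ ≤ ‖r‖ := by
  refine (pi_norm_le_iff_of_nonneg (norm_nonneg r)).2 fun j => ?_
  have hj := (norm_le_pi_norm (x / r) j).trans hx
  rw [Pi.div_apply, norm_div, div_le_one (norm_pos_iff.2 (hr j))] at hj
  exact hj.trans (norm_le_pi_norm r j)

variable [CompleteSpace 𝕜]

/-- Evaluation at a point `y` of the closed unit polydisk of a power series with absolutely summable
coefficients. -/
def ellOneEval (y : ι → 𝕜) (hy : ‖y‖ ≤ 1) : ℓ¹(ι → ℕ, 𝕜) →L[𝕜] 𝕜 :=
  ellOneLift (multiPow y) zero_le_one fun β => by simpa using norm_multiPow_le hy β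

lemma hasSum_ellOneEval {y : ι → 𝕜} (hy : ‖y‖ ≤ 1) (C : ℓ¹(ι → ℕ, 𝕜)) :
    HasSum (fun β => C β * multiPow y β) (ellOneEval y hy C) := by
  refine Summable.hasSum <| (hasSum_norm_ellOne C).summable.of_norm_bounded fun β => ?_
  rw [norm_mul]
  exact mul_le_of_le_one_right (norm_nonneg _) (by simpa using norm_multiPow_le hy β)

lemma HasMonomialExpansion.exists_rescaled {F : (ι → 𝕜) → 𝕜} {c : (ι → ℕ) → 𝕜} {s : ℝ}
    (hF : HasMonomialExpansion F c s) {r : ι → 𝕜} (hr : ∀ j, r j ≠ 0) (hrs : ‖r‖ ≤ s) :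
    ∃ C : ℓ¹(ι → ℕ, 𝕜), (∀ β, C β = c β * multiPow r β) ∧
      ∀ x (hx : ‖x / r‖ ≤ 1), ellOneEval (x / r) hx C = F x := by
  have hsummable : Summable fun β => ‖c β * multiPow r β‖ := by
    refine .of_nonneg_of_le (fun _ => norm_nonneg _) (fun β => ?_) hF.summable
    rw [norm_mul]
    gcongr
    exact norm_multiPow_le hrs β
  obtain ⟨C, hC⟩ := exists_ellOne_of_summable_norm hsummable
  refine ⟨C, hC, fun x hx => (hasSum_ellOneEval hx C).unique ?_⟩
  simp only [hC, mul_assoc, multiPow_mul_multiPow_div hr]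
  exact hF.hasSum x ((norm_le_norm_of_norm_div_le_one hr hx).trans hrs)

lemma hasMonomialExpansion_of_ellOne (C : ℓ¹(ι → ℕ, 𝕜)) {r : ι → 𝕜} {ρ : ℝ} (hρ : 0 < ρ)
    (hr : ∀ j, ρ ≤ ‖r j‖) :
    HasMonomialExpansion (fun x => ∑' β, C β * multiPow (x / r) β)
      (fun β => C β / multiPow r β) ρ where
  pos := hρ
  summable := by
    refine .of_nonneg_of_le (fun β => by positivity) (fun β => ?_) (hasSum_norm_ellOne C).summable
    rw [norm_div, div_mul_eq_mul_div]
    exact div_le_of_le_mul₀ (norm_nonneg _) (norm_nonneg _)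
      (by gcongr; exact pow_sum_le_norm_multiPow hρ.le hr β)
  hasSum x hx := by
    have hr0 (j) : r j ≠ 0 := norm_pos_iff.1 (hρ.trans_le (hr j))
    have hterm (β) : C β / multiPow r β * multiPow x β = C β * multiPow (x / r) β := by
      rw [← multiPow_mul_multiPow_div hr0 x, ← mul_assoc,
        div_mul_cancel₀ _ (multiPow_ne_zero hr0 β)]
    simp only [hterm]
    exact (hasSum_ellOneEval (norm_div_le_one_of_forall_le hρ hr hx) C).summable.hasSum

theorem exists_expansion_of_dominant_coeff {P f : (ι → 𝕜) → 𝕜}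
    {p c : (ι → ℕ) → 𝕜} {s s' : ℝ} (hP : HasMonomialExpansion P p s)
    (hf : HasMonomialExpansion f c s') {r : ι → 𝕜} (hr : ∀ j, r j ≠ 0) (hrs : ‖r‖ ≤ s)
    (hrs' : ‖r‖ ≤ s') {a : ι → ℕ}
    (hdom : ∑' β, update (fun β => ‖p β * multiPow r β‖) a 0 β < ‖p a * multiPow r a‖) :
    ∃ (g : ℕ → (ι → 𝕜) → 𝕜) (b : ℕ → (ι → ℕ) → 𝕜) (ρ A K : ℝ), 0 ≤ A ∧ 0 ≤ K ∧
      (∀ n, HasMonomialExpansion (g n) (b n) ρ) ∧ (∀ n β, b n (β + a) = 0) ∧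
      ∀ x, ‖x‖ ≤ ρ → ∀ N,
        ‖f x - ∑ n ∈ Finset.range N, g n x * P x ^ n‖ ≤ A * (‖P x‖ * K) ^ N := by
  obtain ⟨p', hp', hPeval⟩ := hP.exists_rescaled hr hrs
  obtain ⟨c', -, hfeval⟩ := hf.exists_rescaled hr hrs'
  have hdom' : ‖p' - p' a • lp.single 1 a (1 : 𝕜)‖ < ‖p' a‖ := by
    rw [norm_sub_smul_single_ellOne]
    simpa only [hp'] using hdom
  obtain ⟨G, K, hK, hG, hbound⟩ := exists_ellOne_expansion hdom' c'
  obtain ⟨ρ, hρr, hρ⟩ : ∃ ρ, (∀ j, ρ ≤ ‖r j‖) ∧ 0 < ρ :=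
    ((eventually_all.2 fun j => eventually_le_nhds (norm_pos_iff.2 (hr j))).filter_mono
      nhdsWithin_le_nhds |>.and self_mem_nhdsWithin : ∀ᶠ ρ in 𝓝[>] (0 : ℝ), _).exists
  refine ⟨_, _, ρ, ‖c'‖, K, norm_nonneg _, hK, fun n => hasMonomialExpansion_of_ellOne (G n) hρ hρr,
    fun n β => by rw [hG, zero_div], fun x hx N => ?_⟩
  have hy := norm_div_le_one_of_forall_le hρ hρr hx
  have heval := hbound (ellOneEval (x / r) hy) (norm_ellOneLift_le ..)
    (ellOneLift_conv _ (multiPow_add _) p') N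
  rwa [hfeval, hPeval] at heval

end Rescaling

/-! ### Weighted rescaling -/

section Dominance

lemma tendsto_tsum_mul_rpow_zero {κ : Type*} {b w : κ → ℝ} {t₀ : ℝ} (ht₀ : 0 < t₀)
    (hsum : Summable fun k => b k * t₀ ^ w k) (hw : ∀ k, b k ≠ 0 → 0 < w k) :
    Tendsto (fun t : ℝ => ∑' k, b k * t ^ w k) (𝓝[>] 0) (𝓝 0) := by
  have hterm (k) : Tendsto (fun t : ℝ => b k * t ^ w k) (𝓝[>] 0) (𝓝 0) := by
    rcases eq_or_ne (b k) 0 with hbk | hbk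
    · simp [hbk]
    have hrpow := (Real.continuousAt_rpow_const 0 (w k) (.inr (hw k hbk).le)).tendsto
    simpa [(hw k hbk).ne'] using (hrpow.mono_left nhdsWithin_le_nhds).const_mul (b k)
  have hbound : ∀ᶠ t in 𝓝[>] (0 : ℝ), ∀ k, ‖b k * t ^ w k‖ ≤ ‖b k * t₀ ^ w k‖ := by
    filter_upwards [Ioc_mem_nhdsGT ht₀] with t ⟨ht, htt₀⟩ k
    rcases eq_or_ne (b k) 0 with hbk | hbk
    · simp [hbk]
    rw [norm_mul, norm_mul, Real.norm_of_nonneg (Real.rpow_nonneg ht.le _),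
      Real.norm_of_nonneg (Real.rpow_nonneg ht₀.le _)]
    gcongr
    exact (hw k hbk).le
  simpa using tendsto_tsum_of_dominated_convergence hsum.norm hterm hbound

lemma eventually_tsum_update_mul_rpow_lt {κ : Type*} [DecidableEq κ] {b w : κ → ℝ} {a : κ}
    {t₀ : ℝ} (ht₀ : 0 < t₀) (hsum : Summable fun k => b k * t₀ ^ w k) (ha : 0 < b a)
    (hw : ∀ k ≠ a, b k ≠ 0 → w a < w k) :
    ∀ᶠ t in 𝓝[>] (0 : ℝ), ∑' k, update (fun k => b k * t ^ w k) a 0 k < b a * t ^ w a := by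
  have hfactor {t : ℝ} (ht : 0 < t) (k) : update b a 0 k * t ^ (w k - w a)
      = update (fun k => b k * t ^ w k) a 0 k / t ^ w a := by
    rcases eq_or_ne k a with rfl | hka
    · simp
    · simp [hka, Real.rpow_sub ht, mul_div_assoc]
  have hlim : Tendsto (fun t : ℝ => ∑' k, update b a 0 k * t ^ (w k - w a)) (𝓝[>] 0) (𝓝 0) := by
    refine tendsto_tsum_mul_rpow_zero ht₀ ?_ fun k hk => ?_
    · simp only [hfactor ht₀]
      exact (hsum.update a 0).div_const _
    · have hka : k ≠ a := fun hka => hk (by simp [hka])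
      exact sub_pos.2 (hw k hka (by simpa [hka] using hk))
  filter_upwards [hlim.eventually_lt_const ha, self_mem_nhdsWithin] with t ht (ht0 : 0 < t)
  simp only [hfactor ht0, tsum_div_const] at ht
  exact (div_lt_iff₀ (Real.rpow_pos_of_pos ht0 _)).1 ht

variable {ι 𝕜 : Type*} [Fintype ι] [RCLike 𝕜]

lemma norm_multiPow_ofReal_rpow {t : ℝ} (ht : 0 < t) (ℓ : ι → ℝ) (β : ι → ℕ) :
    ‖multiPow (fun j => ((t ^ ℓ j : ℝ) : 𝕜)) β‖ = t ^ ∑ j, ℓ j * β j := by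
  rw [norm_multiPow, multiPow, Real.rpow_sum_of_pos ht]
  refine Finset.prod_congr rfl fun j _ => ?_
  rw [RCLike.norm_ofReal, abs_of_pos (Real.rpow_pos_of_pos ht _), Real.rpow_mul_natCast ht.le]

lemma eventually_norm_ofReal_rpow_le {ℓ : ι → ℝ} (hℓ : ∀ j, 0 < ℓ j) {s : ℝ} (hs : 0 < s) :
    ∀ᶠ t in 𝓝[>] (0 : ℝ), ‖fun j => ((t ^ ℓ j : ℝ) : 𝕜)‖ ≤ s := by
  have hcont : ContinuousAt (fun t : ℝ => fun j => ((t ^ ℓ j : ℝ) : 𝕜)) 0 :=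
    continuousAt_pi.2 fun j => RCLike.continuous_ofReal.continuousAt.comp
      (Real.continuousAt_rpow_const 0 _ (.inr (hℓ j).le))
  have hzero : ‖fun j => (((0 : ℝ) ^ ℓ j : ℝ) : 𝕜)‖ < s := by
    simpa [Real.zero_rpow (hℓ _).ne', ← Pi.zero_def] using hs
  exact ((hcont.norm.eventually_lt_const hzero).filter_mono nhdsWithin_le_nhds).mono
    fun t ht => ht.le

theorem exists_dominant_rescaling {P : (ι → 𝕜) → 𝕜} {p : (ι → ℕ) → 𝕜} {s : ℝ}
    (hP : HasMonomialExpansion P p s) {ℓ : ι → ℝ} (hℓ : ∀ j, 0 < ℓ j) {a : ι → ℕ} (ha : p a ≠ 0)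
    (hmin : ∀ β ≠ a, p β ≠ 0 → ∑ j, ℓ j * a j < ∑ j, ℓ j * β j) {ε : ℝ} (hε : 0 < ε) :
    ∃ r : ι → 𝕜, (∀ j, r j ≠ 0) ∧ ‖r‖ ≤ ε ∧
      ∑' β, update (fun β => ‖p β * multiPow r β‖) a 0 β < ‖p a * multiPow r a‖ := by
  obtain ⟨t₀, ht₀s, ht₀ : 0 < t₀⟩ :=
    ((eventually_norm_ofReal_rpow_le (𝕜 := 𝕜) hℓ hP.pos).and self_mem_nhdsWithin).exists
  have hsummable : Summable fun β => ‖p β‖ * t₀ ^ ∑ j, ℓ j * β j := by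
    refine .of_nonneg_of_le (fun β => by positivity) (fun β => ?_) hP.summable
    rw [← norm_multiPow_ofReal_rpow (𝕜 := 𝕜) ht₀]
    gcongr
    exact norm_multiPow_le ht₀s β
  have hdom := eventually_tsum_update_mul_rpow_lt ht₀ hsummable
    (norm_pos_iff.2 ha) fun β hβ hpβ => hmin β hβ (norm_ne_zero_iff.1 hpβ)
  obtain ⟨t, ⟨ht_dom, ht_le⟩, ht : 0 < t⟩ :=
    ((hdom.and (eventually_norm_ofReal_rpow_le (𝕜 := 𝕜) hℓ hε)).and self_mem_nhdsWithin).exists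
  refine ⟨fun j => ((t ^ ℓ j : ℝ) : 𝕜), fun j => ?_, ht_le, ?_⟩
  · exact RCLike.ofReal_ne_zero.2 (Real.rpow_pos_of_pos ht _).ne'
  · simpa only [norm_mul, norm_multiPow_ofReal_rpow ht] using ht_dom

end Dominance

lemma polydisk_eq_ball (d : ℕ) {ρ : ℝ} (hρ : 0 < ρ) : polydisk d ρ = Metric.ball 0 ρ := by
  ext x
  simp [polydisk, pi_norm_lt_iff hρ]

lemma tendstoUniformlyOn_of_norm_sub_le_geometric {X E : Type*} [SeminormedAddCommGroup E]
    {S : ℕ → X → E} {f : X → E} {D : Set X} {A q : ℝ} (hq0 : 0 ≤ q) (hq1 : q < 1)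
    (h : ∀ x ∈ D, ∀ N, ‖f x - S N x‖ ≤ A * q ^ N) : TendstoUniformlyOn S f atTop D := by
  refine Metric.tendstoUniformlyOn_iff.2 fun ε hε => ?_
  have hlim : Tendsto (fun N => A * q ^ N) atTop (𝓝 0) := by
    simpa using (tendsto_pow_atTop_nhds_zero_of_lt_one hq0 hq1).const_mul A
  filter_upwards [hlim.eventually_lt_const hε] with N hN x hx
  exact (dist_eq_norm _ _).trans_lt ((h x hx N).trans_lt hN)

theorem convergent_expansion_in_powers_of_P_general {d : ℕ} {ℓ : Fin d → ℝ} (hℓ : ∀ j, 0 < ℓ j)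
    {P : (Fin d → ℂ) → ℂ} (hP : AnalyticAt ℂ P 0) (hP0 : P 0 = 0) {a : Fin d → ℕ}
    (ha : mixedPartial a P 0 ≠ 0)
    (hamin : ∀ β : Fin d → ℕ, mixedPartial β P 0 ≠ 0 → β ≠ a →
      ∑ j, ℓ j * (a j : ℝ) < ∑ j, ℓ j * (β j : ℝ))
    {f : (Fin d → ℂ) → ℂ} (hf : AnalyticAt ℂ f 0) :
    ∃ g : ℕ → (Fin d → ℂ) → ℂ, ∀ᶠ ρ in 𝓝[>] (0 : ℝ),
      (∀ n, AnalyticOnNhd ℂ (g n) (polydisk d ρ)) ∧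
      (∀ n, ∃ M, ∀ x ∈ polydisk d ρ, ‖g n x‖ ≤ M) ∧
      (∀ n, ∀ β : Fin d → ℕ, (∀ j, a j ≤ β j) → mixedPartial β (g n) 0 = 0) ∧
      TendstoUniformlyOn (fun N x => ∑ n ∈ Finset.range N, g n x * P x ^ n) f
        atTop (polydisk d ρ) := by
  obtain ⟨p, s, hp⟩ := exists_hasMonomialExpansion hP
  obtain ⟨c, s', hc⟩ := exists_hasMonomialExpansion hf
  simp only [ne_eq, hp.mixedPartial_zero_eq_zero_iff] at ha hamin
  obtain ⟨r, hr, hrs, hdom⟩ := exists_dominant_rescaling hp hℓ ha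
    (fun β hβ hpβ => hamin β hpβ hβ) (lt_min hp.pos hc.pos)
  obtain ⟨hrs, hrs'⟩ := le_min_iff.1 hrs
  obtain ⟨g, b, ρ₀, A, K, hA, hK, hg, hb, hbound⟩ :=
    exists_expansion_of_dominant_coeff hp hc hr hrs hrs' hdom
  have hsmall : ∀ᶠ x in 𝓝 0, ‖P x‖ * K < 1 / 2 :=
    (hP.continuousAt.norm.mul_const K).eventually_lt_const (by simp [hP0])
  obtain ⟨ρ₁, hρ₁, hsmall⟩ := Metric.eventually_nhds_iff_ball.1 hsmall
  refine ⟨g, ?_⟩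
  filter_upwards [Ioc_mem_nhdsGT (lt_min (hg 0).pos hρ₁)] with ρ ⟨hρ, hρ_le⟩
  obtain ⟨hρ₀, hρ₁⟩ := le_min_iff.1 hρ_le
  have hball {x : Fin d → ℂ} (hx : x ∈ Metric.ball 0 ρ) : ‖x‖ ≤ ρ₀ :=
    (mem_ball_zero_iff.1 hx).le.trans hρ₀
  rw [polydisk_eq_ball d hρ]
  refine ⟨fun n => (hg n).analyticOnNhd.mono (Metric.ball_subset_ball hρ₀),
    fun n => ⟨_, fun x hx => (hg n).norm_le (hball hx)⟩, fun n β hβ => ?_, ?_⟩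
  · rw [(hg n).mixedPartial_zero_eq_zero_iff, ← tsub_add_cancel_of_le (show a ≤ β from hβ), hb]
  · refine tendstoUniformlyOn_of_norm_sub_le_geometric (A := A) (q := 1 / 2) (by norm_num)
      (by norm_num) fun x hx N => (hbound x (hball hx) N).trans ?_
    gcongr
    exact (hsmall x (Metric.ball_subset_ball hρ₁ hx)).le

/-- **Convergent expansion of an analytic germ in powers of `P`** (Corollary 2.8).
With `ℓ` an injective linear form, `P` holomorphic near `0`, not identically zero,
`P(0) = 0`, with `ℓ`-minimal Taylor exponent `a`, every `f` holomorphic near `0` admits a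
uniformly convergent expansion `f = Σ g_n·P^n` on some polydisk `D(0;ρ)`, where each `g_n`
is bounded holomorphic with Taylor coefficients supported off `a + ℕ^d`. -/
theorem convergent_expansion_in_powers_of_P
    (d : ℕ) (hd : 1 ≤ d) (ℓ : Fin d → ℝ) (hℓpos : ∀ j, 0 < ℓ j)
    (hℓinj : Function.Injective fun β : Fin d → ℕ => ∑ j, ℓ j * (β j : ℝ))
    (r0 : ℝ) (hr0 : 0 < r0)
    (P : (Fin d → ℂ) → ℂ) (hP : AnalyticOnNhd ℂ P (polydisk d r0))
    (hPne : ∃ x ∈ polydisk d r0, P x ≠ 0) (hP0 : P 0 = 0)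
    (a : Fin d → ℕ)
    (ha : mixedPartial a P 0 ≠ 0)
    (hamin : ∀ β : Fin d → ℕ, mixedPartial β P 0 ≠ 0 → β ≠ a →
      ∑ j, ℓ j * (a j : ℝ) < ∑ j, ℓ j * (β j : ℝ))
    (r1 : ℝ) (hr1 : 0 < r1)
    (f : (Fin d → ℂ) → ℂ) (hf : AnalyticOnNhd ℂ f (polydisk d r1)) :
    ∃ ρ > 0, ρ ≤ r0 ∧ ρ ≤ r1 ∧
      ∃ g : ℕ → (Fin d → ℂ) → ℂ,
        (∀ n, AnalyticOnNhd ℂ (g n) (polydisk d ρ)) ∧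
        (∀ n, ∃ M, ∀ x ∈ polydisk d ρ, ‖g n x‖ ≤ M) ∧
        (∀ n, ∀ β : Fin d → ℕ, (∀ j, a j ≤ β j) → mixedPartial β (g n) 0 = 0) ∧
        TendstoUniformlyOn (fun N x => ∑ n ∈ Finset.range N, g n x * P x ^ n) f
          Filter.atTop (polydisk d ρ) := by
  obtain ⟨g, hg⟩ := convergent_expansion_in_powers_of_P_general hℓpos
    (hP 0 fun _ => by simpa using hr0) hP0 ha hamin (hf 0 fun _ => by simpa using hr1)
  obtain ⟨ρ, hgρ, hρ, hρle⟩ := (hg.and (Ioc_mem_nhdsGT (lt_min hr0 hr1))).exists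
  exact ⟨ρ, hρ, hρle.trans (min_le_left ..), hρle.trans (min_le_right ..), g, hgρ⟩
end
end

section
/- Uniqueness of P-asymptotic expansions (Lemma 4.4): Let d ≥ 1, let P be holomorphic on D(0;R) with P(0) = 0 and P not identically zero, and let Π = Π_P(a,b;R) be a P-sector. Let f : Π → ℂ be holomorphic and suppose (f_n) and (g_n) are sequences of holomorphic functions on D(0;ρ) (0 < ρ ≤ R) and (C_n) are constants with |f(x) − f_n(x)| ≤ C_n·|P(x)|^n and |f(x) − g_n(x)| ≤ C_n·|P(x)|^n for all n ∈ ℕ and all x ∈ Π ∩ D(0;ρ). Then for every n there exist ρ_n > 0 and a holomorphic function h_n on D(0;ρ_n) with f_n(x) − g_n(x) = h_n(x)·P(x)^n for all x ∈ D(0;ρ_n). -/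
open Set Complex

noncomputable section

/-- The `P`-sector `Π_P(a,b;r)`. -/
def PSector (d : ℕ) (P : (Fin d → ℂ) → ℂ) (a b r : ℝ) : Set (Fin d → ℂ) :=
  {x | (∀ j, 0 < ‖x j‖ ∧ ‖x j‖ < r) ∧ P x ≠ 0 ∧
    ∃ θ ∈ Set.Ioo a b, P x = (‖P x‖ : ℂ) * Complex.exp (θ * Complex.I)}

/-!
Put `F = f_n - g_n`, so that `F` is bounded by a multiple of `P ^ n` on the sector. Fix a direction
`v`, with no vanishing coordinate, along which `P` is not identically zero near the origin. At a
zero of `P` on a complex line in direction `v`, the open mapping theorem makes `P` take values of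
every argument arbitrarily close by. Such a zero is therefore a limit of points of the sector on
that line, and `F / P ^ n`, bounded at these points, has no pole there. By the mean value property,
`F / P ^ n` at `x` is then its average over the circle `x + s • v`, `|s| = ε`, where `ε` is chosen
so that `P` has no zero on this circle for `x = 0`, hence for all `x` near `0`.

This average is analytic in `x`: composition with an analytic function is an analytic map between
spaces of continuous functions on a compact space, inversion is analytic on the units of the
Banach algebra of continuous functions on the circle, and integration is linear.
-/

open Filter Topology Metric MeasureTheory

section Superposition

variable {𝕜 K E G : Type*} [NontriviallyNormedField 𝕜] [TopologicalSpace K] [CompactSpace K]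
  [NormedAddCommGroup E] [NormedSpace 𝕜 E] [NormedAddCommGroup G] [NormedSpace 𝕜 G]

variable (K) in
/-- The multilinear map on spaces of continuous functions on a compact space `K` obtained by
applying a continuous multilinear map at each point of `K`. -/
def pointwiseMultilinear {ι : Type*} [Fintype ι]
    (m : ContinuousMultilinearMap 𝕜 (fun _ : ι ↦ E) G) :
    ContinuousMultilinearMap 𝕜 (fun _ : ι ↦ C(K, E)) C(K, G) :=
  MultilinearMap.mkContinuous
    { toFun := fun y ↦ ⟨fun k ↦ m fun i ↦ y i k, by fun_prop⟩
      map_update_add' := fun y i _ _ ↦ by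
        ext k
        simp [Function.apply_update (fun _ (z : C(K, E)) ↦ z k)]
      map_update_smul' := fun y i _ _ ↦ by
        ext k
        simp [Function.apply_update (fun _ (z : C(K, E)) ↦ z k)] }
    ‖m‖ fun y ↦ by
      refine (ContinuousMap.norm_le _ (by positivity)).2 fun k ↦ (m.le_opNorm _).trans ?_
      gcongr with i
      exact (y i).norm_coe_le_norm k

theorem norm_pointwiseMultilinear_le {ι : Type*} [Fintype ι]
    (m : ContinuousMultilinearMap 𝕜 (fun _ : ι ↦ E) G) : ‖pointwiseMultilinear K m‖ ≤ ‖m‖ :=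
  MultilinearMap.mkContinuous_norm_le _ (norm_nonneg _) _

variable (K) in
/-- The power series on `C(K, E)` induced pointwise by a power series on `E`. -/
def pointwiseSeries (p : FormalMultilinearSeries 𝕜 E G) :
    FormalMultilinearSeries 𝕜 C(K, E) C(K, G) :=
  fun n ↦ pointwiseMultilinear K (p n)

theorem radius_le_radius_pointwiseSeries (p : FormalMultilinearSeries 𝕜 E G) :
    p.radius ≤ (pointwiseSeries K p).radius := by
  refine ENNReal.le_of_forall_nnreal_lt fun r hr ↦ ?_
  obtain ⟨C, -, hC⟩ := p.norm_mul_pow_le_of_lt_radius hr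
  refine (pointwiseSeries K p).le_radius_of_bound C fun n ↦ le_trans ?_ (hC n)
  gcongr
  exact norm_pointwiseMultilinear_le (p n)

theorem pointwiseSeries_sum_apply [CompleteSpace G] {p : FormalMultilinearSeries 𝕜 E G}
    {y : C(K, E)} (hy : y ∈ eball 0 p.radius) (k : K) :
    (pointwiseSeries K p).sum y k = p.sum (y k) := by
  have hyk : y k ∈ eball (0 : E) p.radius := by
    rw [mem_eball, edist_zero_right] at hy ⊢
    refine lt_of_le_of_lt ?_ hy
    exact enorm_le_iff_norm_le.2 (y.norm_coe_le_norm k)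
  have hsum := (pointwiseSeries K p).hasSum
    (eball_subset_eball (radius_le_radius_pointwiseSeries p) hy)
  exact ((ContinuousMap.evalCLM 𝕜 k).hasSum hsum).unique (p.hasSum hyk)

theorem exists_analyticAt_superposition [CompleteSpace G] {F : E → G} {x : E}
    (hF : AnalyticAt 𝕜 F x) :
    ∃ T : C(K, E) → C(K, G), AnalyticAt 𝕜 T (.const K x) ∧
      ∀ᶠ y in 𝓝 (.const K x), ∀ k, T y k = F (y k) := by
  obtain ⟨p, r, hp⟩ := hF
  have hq := (pointwiseSeries K p).hasFPowerSeriesOnBall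
    (hp.radius_pos.trans_le (radius_le_radius_pointwiseSeries p))
  refine ⟨fun y ↦ (pointwiseSeries K p).sum (y - .const K x), ?_, ?_⟩
  · simpa using (hq.comp_sub (.const K x)).analyticAt
  · filter_upwards [eball_mem_nhds _ hp.r_pos] with y hy k
    have hy0 : y - .const K x ∈ eball 0 r := by
      rwa [mem_eball, edist_zero_right, ← edist_eq_enorm_sub]
    rw [pointwiseSeries_sum_apply (eball_subset_eball hp.r_le hy0)]
    have hyk : y k ∈ eball x r := by
      rw [mem_eball, edist_eq_enorm_sub]
      rw [mem_eball, edist_zero_right] at hy0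
      refine lt_of_le_of_lt ?_ hy0
      exact enorm_le_iff_norm_le.2 ((y - .const K x).norm_coe_le_norm k)
    simpa using (hp.sum (y := y k - x) (by simpa [edist_eq_enorm_sub] using hyk)).symm

theorem eventually_exists_analyticAt_superposition_div [CompleteSpace 𝕜] {F D : E → 𝕜} {x : E}
    (hF : AnalyticAt 𝕜 F x) (hD : AnalyticAt 𝕜 D x) :
    ∀ᶠ γ in 𝓝 (ContinuousMap.const K x), (∀ k, D (γ k) ≠ 0) →
      ∃ T : C(K, E) → C(K, 𝕜), AnalyticAt 𝕜 T γ ∧ ∀ᶠ y in 𝓝 γ, ∀ k, T y k = F (y k) / D (y k) := by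
  obtain ⟨S, hS, hSF⟩ := exists_analyticAt_superposition (K := K) hF
  obtain ⟨U, hU, hUD⟩ := exists_analyticAt_superposition (K := K) hD
  filter_upwards [hS.eventually_analyticAt, hU.eventually_analyticAt,
    hSF.eventually_nhds, hUD.eventually_nhds] with γ hSγ hUγ hSFγ hUDγ hne
  have hunit : IsUnit (U γ) := by
    rw [ContinuousMap.isUnit_iff_forall_ne_zero]
    intro k
    rw [hUDγ.self_of_nhds k]
    exact hne k
  have hinv : AnalyticAt 𝕜 Ring.inverse (U γ) := analyticAt_inverse hunit.unit
  refine ⟨fun y ↦ S y * Ring.inverse (U y), hSγ.mul (hinv.comp hUγ), ?_⟩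
  filter_upwards [hSFγ, hUDγ, hUγ.continuousAt.eventually (Units.isOpen.mem_nhds hunit)]
    with y hSy hUy hy k
  have hcancel : U y k * Ring.inverse (U y) k = 1 :=
    congrArg (fun f : C(K, 𝕜) ↦ f k) (Ring.mul_inverse_cancel _ hy)
  rw [ContinuousMap.mul_apply, eq_inv_of_mul_eq_one_right hcancel, hSy, hUy, div_eq_mul_inv]

end Superposition

section CircleAverage

theorem analyticAt_integral_continuousMap {𝕜 K E G : Type*} [RCLike 𝕜]
    [TopologicalSpace K] [CompactSpace K] [MeasurableSpace K] [BorelSpace K]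
    [NormedAddCommGroup E] [NormedSpace 𝕜 E]
    [NormedAddCommGroup G] [NormedSpace ℝ G] [NormedSpace 𝕜 G] [CompleteSpace G]
    [SecondCountableTopologyEither K G]
    {μ : Measure K} [IsFiniteMeasure μ] {Q : E → C(K, G)} {x : E} (hQ : AnalyticAt 𝕜 Q x) :
    AnalyticAt 𝕜 (fun y ↦ ∫ k, Q y k ∂μ) x := by
  let I : C(K, G) →L[𝕜] G := (L1.integralCLM' 𝕜).comp (ContinuousMap.toLp 1 μ 𝕜)
  have hI (q : C(K, G)) : I q = ∫ k, q k ∂μ :=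
    (L1.integral_eq' 𝕜 _).symm.trans <|
      (L1.integral_eq_integral _).trans (integral_congr_ae (ContinuousMap.coeFn_toLp μ q))
  simpa only [Function.comp_def, hI] using (I.analyticAt (Q x)).comp hQ

attribute [local instance] Measure.Subtype.measureSpace

variable {E : Type*} [NormedAddCommGroup E] [NormedSpace ℂ E]

/-- The circle of radius `ε` around `x` in the complex line through `x` in direction `v`,
parametrized by the angle. -/
def circlePath (v : E) (ε : ℝ) (x : E) : C(Icc 0 (2 * Real.pi), E) :=
  ⟨fun θ ↦ x + circleMap 0 ε θ • v, by fun_prop⟩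

theorem tendsto_circlePath_radius_zero (v x : E) :
    Tendsto (fun ε ↦ circlePath v ε x) (𝓝 0) (𝓝 (.const _ x)) := by
  have hcont : Continuous fun ε ↦ circlePath v ε x := by
    refine ContinuousMap.continuous_of_continuous_uncurry _ ?_
    simp only [Function.uncurry_def, circlePath, ContinuousMap.coe_mk, circleMap]
    fun_prop
  convert hcont.tendsto 0
  ext θ
  simp [circlePath]

theorem analyticAt_circlePath (v : E) (ε : ℝ) (x : E) : AnalyticAt ℂ (circlePath v ε) x := by
  let const : E →L[ℂ] C(Icc 0 (2 * Real.pi), E) := ContinuousLinearMap.const ℂ _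
  have hsplit : circlePath v ε = fun y ↦ const y + circlePath v ε 0 := by
    ext y θ
    simp [circlePath, const]
  rw [hsplit]
  exact (const.analyticAt x).add analyticAt_const

theorem circleAverage_eq_integral_Icc {G : Type*} [NormedAddCommGroup G] [NormedSpace ℝ G]
    (f : ℂ → G) (c : ℂ) (r : ℝ) :
    Real.circleAverage f c r =
      (2 * Real.pi)⁻¹ • ∫ θ : Icc 0 (2 * Real.pi), f (circleMap c r θ) := by
  rw [Real.circleAverage_def, intervalIntegral.integral_of_le Real.two_pi_pos.le,
    ← integral_Icc_eq_integral_Ioc, integral_subtype measurableSet_Icc fun θ ↦ f (circleMap c r θ)]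

theorem eventually_analyticAt_circleAverage_div {F D : E → ℂ} {x : E}
    (hF : AnalyticAt ℂ F x) (hD : AnalyticAt ℂ D x) (v : E) :
    ∀ᶠ ε in 𝓝[>] (0 : ℝ), (∀ s ∈ sphere (0 : ℂ) ε, D (x + s • v) ≠ 0) →
      AnalyticAt ℂ (fun y ↦ Real.circleAverage (fun s ↦ F (y + s • v) / D (y + s • v)) 0 ε) x := by
  have hdiv := (tendsto_circlePath_radius_zero v x).eventually
    (eventually_exists_analyticAt_superposition_div hF hD)
  filter_upwards [nhdsWithin_le_nhds hdiv, self_mem_nhdsWithin] with ε hε hpos hne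
  obtain ⟨T, hT, hT_eq⟩ := hε fun θ ↦ hne _ (circleMap_mem_sphere 0 (le_of_lt hpos) θ)
  have hpath := analyticAt_circlePath v ε x
  have : IsFiniteMeasure (volume : Measure (Icc 0 (2 * Real.pi))) :=
    ⟨by rw [Measure.Subtype.volume_univ nullMeasurableSet_Icc]; exact measure_Icc_lt_top⟩
  refine ((analyticAt_const (v := (((2 * Real.pi)⁻¹ : ℝ) : ℂ))).mul
    (analyticAt_integral_continuousMap (μ := volume) (hT.comp hpath))).congr ?_
  filter_upwards [hpath.continuousAt.eventually hT_eq] with y hy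
  simp only [circleAverage_eq_integral_Icc, real_smul, Pi.mul_apply, Function.comp_apply, hy]
  rfl

end CircleAverage

section OneVariable

theorem meromorphicOrderAt_nonneg_of_frequently_norm_le {𝕜 E : Type*} [NontriviallyNormedField 𝕜]
    [NormedAddCommGroup E] [NormedSpace 𝕜 E] {q : 𝕜 → E} {z : 𝕜} {C : ℝ}
    (h : ∃ᶠ s in 𝓝[≠] z, ‖q s‖ ≤ C) : 0 ≤ meromorphicOrderAt q z := by
  by_contra! hneg
  have hlarge := (tendsto_norm_atTop_iff_cobounded.2
    (tendsto_cobounded_of_meromorphicOrderAt_neg hneg)).eventually_gt_atTop C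
  obtain ⟨s, hs_le, hs_gt⟩ := (h.and_eventually hlarge).exists
  exact hs_gt.not_ge hs_le

theorem exists_analyticOnNhd_eqOn_mul_of_frequently_norm_le {𝕜 : Type*}
    [NontriviallyNormedField 𝕜] [CompleteSpace 𝕜] {g p : 𝕜 → 𝕜} {U : Set 𝕜} {C : ℝ}
    (hg : AnalyticOnNhd 𝕜 g U) (hp : AnalyticOnNhd 𝕜 p U)
    (hne : ∀ z ∈ U, ∀ᶠ s in 𝓝[≠] z, p s ≠ 0)
    (hbound : ∀ z ∈ U, p z = 0 → ∃ᶠ s in 𝓝[≠] z, ‖g s‖ ≤ C * ‖p s‖) :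
    ∃ q : 𝕜 → 𝕜, AnalyticOnNhd 𝕜 q U ∧ EqOn g (q * p) U := by
  have hmer : MeromorphicOn (g / p) U := hg.meromorphicOn.div hp.meromorphicOn
  have horder (z) (hz : z ∈ U) : 0 ≤ meromorphicOrderAt (g / p) z := by
    by_cases hpz : p z = 0
    · refine meromorphicOrderAt_nonneg_of_frequently_norm_le (C := C)
        (((hbound z hz hpz).and_eventually (hne z hz)).mono fun s ⟨hs, hps⟩ ↦ ?_)
      rwa [Pi.div_apply, norm_div, div_le_iff₀ (norm_pos_iff.2 hps)]
    · exact ((hg z hz).div (hp z hz) hpz).meromorphicOrderAt_nonneg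
  have hq : AnalyticOnNhd 𝕜 (toMeromorphicNFOn (g / p) U) U := fun z hz ↦ by
    rw [← (meromorphicNFOn_toMeromorphicNFOn _ _ hz).meromorphicOrderAt_nonneg_iff_analyticAt,
      meromorphicOrderAt_toMeromorphicNFOn hmer hz]
    exact horder z hz
  refine ⟨_, hq, fun z hz ↦ ?_⟩
  have hpunctured : g =ᶠ[𝓝[≠] z] toMeromorphicNFOn (g / p) U * p := by
    filter_upwards [hne z hz, hmer.toMeromorphicNFOn_eq_self_on_nhdsNE hz] with s hps hqs
    rw [Pi.mul_apply, hqs, Pi.div_apply, div_mul_cancel₀ _ hps]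
  exact (((hg z hz).frequently_eq_iff_eventually_eq ((hq z hz).mul (hp z hz))).1
    hpunctured.frequently).self_of_nhds

theorem eventually_nhdsNE_ne_zero_of_preconnected {𝕜 G : Type*} [NontriviallyNormedField 𝕜]
    [NormedAddCommGroup G] [NormedSpace 𝕜 G] {f : 𝕜 → G} {U : Set 𝕜} {z w : 𝕜}
    (hf : AnalyticOnNhd 𝕜 f U) (hU : IsPreconnected U) (hw : w ∈ U) (hfw : f w ≠ 0) (hz : z ∈ U) :
    ∀ᶠ s in 𝓝[≠] z, f s ≠ 0 := by
  by_contra hzero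
  exact hfw (hf.eqOn_zero_of_preconnected_of_frequently_eq_zero hU hz (by simpa using hzero) hw)

theorem eq_circleAverage_div_mul {g p : ℂ → ℂ} {c : ℂ} {ε C : ℝ} (hε : 0 < ε)
    (hg : AnalyticOnNhd ℂ g (closedBall c ε)) (hp : AnalyticOnNhd ℂ p (closedBall c ε))
    (hsphere : ∀ s ∈ sphere c ε, p s ≠ 0)
    (hbound : ∀ z ∈ closedBall c ε, p z = 0 → (∀ᶠ s in 𝓝[≠] z, p s ≠ 0) →
      ∃ᶠ s in 𝓝[≠] z, ‖g s‖ ≤ C * ‖p s‖) :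
    g c = Real.circleAverage (fun s ↦ g s / p s) c ε * p c := by
  obtain ⟨w, hw⟩ := NormedSpace.sphere_nonempty (x := c) |>.2 hε.le
  have hne (z) (hz : z ∈ closedBall c ε) : ∀ᶠ s in 𝓝[≠] z, p s ≠ 0 :=
    eventually_nhdsNE_ne_zero_of_preconnected hp (convex_closedBall c ε).isPreconnected
      (sphere_subset_closedBall hw) (hsphere w hw) hz
  obtain ⟨q, hq, hgq⟩ := exists_analyticOnNhd_eqOn_mul_of_frequently_norm_le hg hp hne
    fun z hz hpz ↦ hbound z hz hpz (hne z hz)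
  have hquot : EqOn (fun s ↦ g s / p s) q (sphere c |ε|) := fun s hs ↦ by
    rw [abs_of_pos hε] at hs
    exact (div_eq_iff (hsphere s hs)).2 (hgq (sphere_subset_closedBall hs))
  have hmean : Real.circleAverage q c ε = q c := by
    refine DiffContOnCl.circleAverage (DifferentiableOn.diffContOnCl ?_)
    rw [abs_of_pos hε, closure_ball _ hε.ne']
    exact hq.differentiableOn
  rw [Real.circleAverage_congr_sphere hquot, hmean]
  exact hgq (mem_closedBall_self hε.le)

theorem frequently_eq_norm_mul_exp {p : ℂ → ℂ} {z : ℂ} (hp : AnalyticAt ℂ p z) (hpz : p z = 0)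
    (hne : ∀ᶠ s in 𝓝[≠] z, p s ≠ 0) (θ : ℝ) :
    ∃ᶠ s in 𝓝[≠] z, p s = ‖p s‖ * exp (θ * I) := by
  have hopen : 𝓝 0 ≤ map p (𝓝 z) := by
    rw [← hpz]
    refine hp.eventually_constant_or_nhds_le_map_nhds.resolve_left fun hconst ↦ ?_
    obtain ⟨s, hps, hs⟩ := (hne.and (nhdsWithin_le_nhds hconst)).exists
    exact hps (hs.trans hpz)
  have hray : ∃ᶠ w in 𝓝 (0 : ℂ), w ≠ 0 ∧ w = ‖w‖ * exp (θ * I) := by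
    have htendsto : Tendsto (fun t : ℝ ↦ (t : ℂ) * exp (θ * I)) (𝓝[>] 0) (𝓝 0) := by
      have hcont : Continuous fun t : ℝ ↦ (t : ℂ) * exp (θ * I) := by fun_prop
      simpa using (hcont.tendsto 0).mono_left nhdsWithin_le_nhds
    refine htendsto.frequently (Eventually.frequently ?_)
    filter_upwards [self_mem_nhdsWithin] with t ht
    have ht_pos : 0 < t := ht
    simp [ht_pos.ne', norm_exp_ofReal_mul_I, abs_of_pos ht_pos]
  rw [frequently_nhdsWithin_iff]
  refine (frequently_map.1 (hray.filter_mono hopen)).mono fun s ⟨hps, hs⟩ ↦ ⟨hs, ?_⟩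
  rintro rfl
  exact hps hpz

end OneVariable

section Division

variable {E : Type*} [NormedAddCommGroup E] [NormedSpace ℂ E]

theorem eventually_forall_closedBall_add_smul {p : E → Prop} {x : E} (h : ∀ᶠ y in 𝓝 x, p y)
    (v : E) : ∀ᶠ ε in 𝓝[>] (0 : ℝ), ∀ᶠ y in 𝓝 x, ∀ s ∈ closedBall (0 : ℂ) ε, p (y + s • v) := by
  have hcont : Tendsto (fun ys : E × ℂ ↦ ys.1 + ys.2 • v) (𝓝 x ×ˢ 𝓝 0) (𝓝 x) := by
    rw [← nhds_prod_eq]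
    exact Continuous.tendsto' (by fun_prop) _ _ (by simp)
  obtain ⟨near_x, hnear_x, near_zero, hnear_zero, hp⟩ := eventually_prod_iff.1 (hcont.eventually h)
  filter_upwards [nhdsWithin_le_nhds (eventually_closedBall_subset hnear_zero)] with ε hε
  filter_upwards [hnear_x] with y hy s hs using hp hy (hε hs)

theorem eventually_forall_sphere {p : ℂ → Prop} (h : ∀ᶠ s in 𝓝[≠] (0 : ℂ), p s) :
    ∀ᶠ ε in 𝓝[>] (0 : ℝ), ∀ s ∈ sphere (0 : ℂ) ε, p s := by
  obtain ⟨δ, hδ, hball⟩ := Metric.eventually_nhds_iff_ball.1 (eventually_nhdsWithin_iff.1 h)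
  filter_upwards [Ioo_mem_nhdsGT hδ] with ε hε s hs
  refine hball s ?_ (ne_of_mem_sphere hs hε.1.ne')
  rw [mem_ball, mem_sphere.1 hs]
  exact hε.2

theorem exists_analyticAt_eq_mul_of_frequently_norm_le {F D : E → ℂ} {x v : E} {C : ℝ}
    (hF : AnalyticAt ℂ F x) (hD : AnalyticAt ℂ D x) (hv : ∀ᶠ t in 𝓝[≠] (0 : ℂ), D (x + t • v) ≠ 0)
    (hbound : ∀ᶠ y in 𝓝 x, D y = 0 → (∀ᶠ t in 𝓝[≠] (0 : ℂ), D (y + t • v) ≠ 0) →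
      ∃ᶠ t in 𝓝[≠] (0 : ℂ), ‖F (y + t • v)‖ ≤ C * ‖D (y + t • v)‖) :
    ∃ h : E → ℂ, AnalyticAt ℂ h x ∧ ∀ᶠ y in 𝓝 x, F y = h y * D y := by
  have hgood := hF.eventually_analyticAt.and (hD.eventually_analyticAt.and hbound)
  obtain ⟨ε, hε_good, hε_ne, hε_avg, hε⟩ :=
    ((eventually_forall_closedBall_add_smul hgood v).and
      ((eventually_forall_sphere hv).and
        ((eventually_analyticAt_circleAverage_div hF hD v).and self_mem_nhdsWithin))).exists
  refine ⟨_, hε_avg hε_ne, ?_⟩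
  have hsphere : ∀ᶠ y in 𝓝 x, ∀ s ∈ sphere (0 : ℂ) ε, D (y + s • v) ≠ 0 := by
    refine (isCompact_sphere 0 ε).eventually_forall_of_forall_eventually fun s hs ↦ ?_
    have hDs := (hε_good.self_of_nhds s (sphere_subset_closedBall hs)).2.1.continuousAt
    have hcont : ContinuousAt (fun ys : E × ℂ ↦ D (ys.1 + ys.2 • v)) (x, s) :=
      ContinuousAt.comp' (g := D) hDs (by fun_prop)
    exact hcont.eventually_ne (hε_ne s hs)
  filter_upwards [hε_good, hsphere] with y hy hy_sphere
  have hline (z : ℂ) : AnalyticAt ℂ (fun s : ℂ ↦ y + s • v) z := by fun_prop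
  have hshift (z : ℂ) : map (z + ·) (𝓝[≠] 0) = 𝓝[≠] z := by rw [map_add_left_nhdsNE, add_zero]
  have hfactor := eq_circleAverage_div_mul (g := fun s ↦ F (y + s • v))
    (p := fun s ↦ D (y + s • v)) (C := C) hε
    (fun z hz ↦ AnalyticAt.fun_comp (g := F) (hy z hz).1 (hline z))
    (fun z hz ↦ AnalyticAt.fun_comp (g := D) (hy z hz).2.1 (hline z))
    hy_sphere fun z hz hDz hDne ↦ by
      rw [← hshift z, eventually_map] at hDne
      rw [← hshift z, frequently_map]
      simp only [add_smul, ← add_assoc] at hDne ⊢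
      exact (hy z hz).2.2 hDz hDne
  simpa using hfactor

end Division

section Sector

variable {d : ℕ}

theorem polydisk_eq_ball_s7 {r : ℝ} (hr : 0 < r) : polydisk d r = ball 0 r := by
  ext x
  simp [polydisk, pi_norm_lt_iff hr]

theorem polydisk_mem_nhds_zero {r : ℝ} (hr : 0 < r) : polydisk d r ∈ 𝓝 0 := by
  rw [polydisk_eq_ball_s7 hr]
  exact ball_mem_nhds 0 hr

theorem exists_forall_mem_polydisk {p : (Fin d → ℂ) → Prop} (h : ∀ᶠ x in 𝓝 0, p x) {ρ : ℝ}
    (hρ : 0 < ρ) : ∃ r > 0, r ≤ ρ ∧ ∀ x ∈ polydisk d r, p x := by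
  obtain ⟨r, hr, hball⟩ := Metric.eventually_nhds_iff_ball.1 h
  have hmin : 0 < min r ρ := lt_min hr hρ
  refine ⟨min r ρ, hmin, min_le_right r ρ, fun x hx ↦ hball x ?_⟩
  rw [polydisk_eq_ball_s7 hmin] at hx
  exact ball_subset_ball (min_le_left r ρ) hx

theorem eventually_forall_add_smul_ne_zero {𝕜 ι : Type*} [Field 𝕜] [TopologicalSpace 𝕜] [T1Space 𝕜]
    [Finite ι] {v : ι → 𝕜} (hv : ∀ j, v j ≠ 0) (x : ι → 𝕜) (z : 𝕜) :
    ∀ᶠ s in 𝓝[≠] z, ∀ j, (x + s • v) j ≠ 0 := by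
  refine eventually_all.2 fun j ↦ ?_
  have hfinite : {s : 𝕜 | (x + s • v) j = 0}.Finite := by
    refine (Set.finite_singleton (-x j / v j)).subset fun s hs ↦ ?_
    rw [mem_singleton_iff, eq_div_iff (hv j)]
    exact eq_neg_of_add_eq_zero_right hs
  exact nhdsNE_le_cofinite z hfinite.compl_mem_cofinite

theorem tendsto_add_smul_nhdsNE {𝕜 E : Type*} [Semiring 𝕜] [TopologicalSpace 𝕜]
    [AddCommMonoid E] [Module 𝕜 E] [TopologicalSpace E] [ContinuousAdd E] [ContinuousSMul 𝕜 E]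
    (x v : E) : Tendsto (fun t : 𝕜 ↦ x + t • v) (𝓝[≠] 0) (𝓝 x) :=
  (Continuous.tendsto' (by fun_prop) _ _ (by simp)).mono_left nhdsWithin_le_nhds

theorem exists_mem_ne_zero_forall_ne_zero {𝕜 ι G : Type*} [NontriviallyNormedField 𝕜] [Finite ι]
    [TopologicalSpace G] [T1Space G] [Zero G] {P : (ι → 𝕜) → G} {s : Set (ι → 𝕜)} {x : ι → 𝕜}
    (hs : s ∈ 𝓝 x) (hP : ContinuousAt P x) (hPx : P x ≠ 0) :
    ∃ v ∈ s, P v ≠ 0 ∧ ∀ j, v j ≠ 0 := by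
  have hline := tendsto_add_smul_nhdsNE (𝕜 := 𝕜) x 1
  have hcoord := eventually_forall_add_smul_ne_zero (v := (1 : ι → 𝕜)) (by simp) x 0
  obtain ⟨t, ht_mem, ht_ne, ht_coord⟩ := ((hline.eventually hs).and
    ((hline.eventually (hP.eventually_ne hPx)).and hcoord)).exists
  exact ⟨_, ht_mem, ht_ne, ht_coord⟩

theorem eventually_smul_ne_zero_of_convex {E G : Type*} [NormedAddCommGroup E] [NormedSpace ℂ E]
    [NormedAddCommGroup G] [NormedSpace ℂ G] {P : E → G} {s : Set E} {v : E}
    (hP : AnalyticOnNhd ℂ P s) (hs : Convex ℝ s) (h0 : 0 ∈ s) (hv : v ∈ s) (hPv : P v ≠ 0) :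
    ∀ᶠ t in 𝓝[≠] (0 : ℂ), P (t • v) ≠ 0 := by
  have hconvex : Convex ℝ ((fun t : ℂ ↦ t • v) ⁻¹' s) :=
    hs.is_linear_preimage ⟨fun a b ↦ add_smul a b v, fun c a ↦ smul_assoc c a v⟩
  have hanalytic : AnalyticOnNhd ℂ (fun t : ℂ ↦ P (t • v)) ((fun t : ℂ ↦ t • v) ⁻¹' s) :=
    fun t ht ↦ AnalyticAt.fun_comp (g := P) (hP _ ht) (by fun_prop)
  exact eventually_nhdsNE_ne_zero_of_preconnected hanalytic hconvex.isPreconnected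
    (w := 1) (by simpa using hv) (by simpa using hPv) (by simpa using h0)

theorem frequently_mem_PSector {P : (Fin d → ℂ) → ℂ} {a b R : ℝ} (hab : a < b) {x v : Fin d → ℂ}
    (hx : polydisk d R ∈ 𝓝 x) (hP : AnalyticAt ℂ P x) (hPx : P x = 0)
    (hne : ∀ᶠ t in 𝓝[≠] (0 : ℂ), P (x + t • v) ≠ 0) (hv : ∀ j, v j ≠ 0) :
    ∃ᶠ t in 𝓝[≠] (0 : ℂ), x + t • v ∈ PSector d P a b R := by
  have hzero : x + (0 : ℂ) • v = x := by simp
  have hPline : AnalyticAt ℂ (fun t : ℂ ↦ P (x + t • v)) 0 :=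
    AnalyticAt.fun_comp (g := P) (by rwa [hzero]) (by fun_prop)
  have hmem : ∀ᶠ t in 𝓝[≠] (0 : ℂ), x + t • v ∈ polydisk d R :=
    (tendsto_add_smul_nhdsNE x v).eventually hx
  have hray := frequently_eq_norm_mul_exp hPline (by rwa [hzero]) hne ((a + b) / 2)
  refine (hray.and_eventually (hne.and (hmem.and (eventually_forall_add_smul_ne_zero hv x 0)))).mono
    fun t ⟨ht_ray, ht_ne, ht_mem, ht_coord⟩ ↦ ?_
  exact ⟨fun j ↦ ⟨norm_pos_iff.2 (ht_coord j), ht_mem j⟩, ht_ne,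
    (a + b) / 2, ⟨by linarith, by linarith⟩, ht_ray⟩

theorem exists_forall_ne_zero_and_eventually_smul_ne_zero {P : (Fin d → ℂ) → ℂ} {R : ℝ} (hR : 0 < R)
    (hP : AnalyticOnNhd ℂ P (polydisk d R)) (hPne : ∃ x ∈ polydisk d R, P x ≠ 0) :
    ∃ v : Fin d → ℂ, (∀ j, v j ≠ 0) ∧ ∀ᶠ t in 𝓝[≠] (0 : ℂ), P (t • v) ≠ 0 := by
  obtain ⟨x, hx, hPx⟩ := hPne
  rw [polydisk_eq_ball_s7 hR] at hP hx
  obtain ⟨v, hv, hPv, hv_coord⟩ :=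
    exists_mem_ne_zero_forall_ne_zero (isOpen_ball.mem_nhds hx) (hP x hx).continuousAt hPx
  exact ⟨v, hv_coord, eventually_smul_ne_zero_of_convex hP (convex_ball 0 R) (mem_ball_self hR)
    hv hPv⟩

theorem exists_analyticAt_eq_mul_pow_of_norm_le_on_PSector {P F : (Fin d → ℂ) → ℂ}
    {a b R C : ℝ} {n : ℕ} (hR : 0 < R) (hab : a < b) (hP : AnalyticOnNhd ℂ P (polydisk d R))
    (hPne : ∃ x ∈ polydisk d R, P x ≠ 0) (hF : AnalyticAt ℂ F 0)
    (hbound : ∀ᶠ x in 𝓝 0, x ∈ PSector d P a b R → ‖F x‖ ≤ C * ‖P x‖ ^ n) :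
    ∃ h, AnalyticAt ℂ h 0 ∧ ∀ᶠ x in 𝓝 0, F x = h x * P x ^ n := by
  obtain ⟨v, hv, hPv⟩ := exists_forall_ne_zero_and_eventually_smul_ne_zero hR hP hPne
  have hdisk := polydisk_mem_nhds_zero (d := d) hR
  refine exists_analyticAt_eq_mul_of_frequently_norm_le (C := C) (v := v) hF
    ((hP 0 (mem_of_mem_nhds hdisk)).pow n) ?_ ?_
  · filter_upwards [hPv] with t ht
    simpa using pow_ne_zero n ht
  filter_upwards [eventually_mem_nhds_iff.2 hdisk, hbound.eventually_nhds]
    with x hx hx_bound hPx hne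
  have hn : n ≠ 0 := by
    rintro rfl
    simp at hPx
  have hsector := frequently_mem_PSector hab hx (hP x (mem_of_mem_nhds hx))
    ((pow_eq_zero_iff hn).1 hPx) (hne.mono fun t ht ↦ (pow_ne_zero_iff hn).1 ht) hv
  refine (hsector.and_eventually
    ((tendsto_add_smul_nhdsNE x v).eventually hx_bound)).mono fun t ⟨ht_mem, ht_bound⟩ ↦ ?_
  rw [norm_pow]
  exact ht_bound ht_mem

end Sector

theorem uniqueness_of_P_asymptotic_expansions_general {d n : ℕ} {P f u w : (Fin d → ℂ) → ℂ}
    {a b R ρ C C' : ℝ} (hR : 0 < R) (hρ : 0 < ρ) (hab : a < b)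
    (hP : AnalyticOnNhd ℂ P (polydisk d R)) (hPne : ∃ x ∈ polydisk d R, P x ≠ 0)
    (hu : AnalyticOnNhd ℂ u (polydisk d ρ)) (hw : AnalyticOnNhd ℂ w (polydisk d ρ))
    (hfu : ∀ x ∈ PSector d P a b R ∩ polydisk d ρ, ‖f x - u x‖ ≤ C * ‖P x‖ ^ n)
    (hfw : ∀ x ∈ PSector d P a b R ∩ polydisk d ρ, ‖f x - w x‖ ≤ C' * ‖P x‖ ^ n) :
    ∃ r > 0, r ≤ ρ ∧ ∃ h : (Fin d → ℂ) → ℂ, AnalyticOnNhd ℂ h (polydisk d r) ∧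
      ∀ x ∈ polydisk d r, u x - w x = h x * P x ^ n := by
  have hdisk := polydisk_mem_nhds_zero (d := d) hρ
  have hzero := mem_of_mem_nhds hdisk
  have hbound : ∀ᶠ x in 𝓝 0, x ∈ PSector d P a b R →
      ‖(u - w) x‖ ≤ (C + C') * ‖P x‖ ^ n := by
    filter_upwards [hdisk] with x hx hx_sector
    calc ‖(u - w) x‖ = ‖(f x - w x) - (f x - u x)‖ := by rw [sub_sub_sub_cancel_left, Pi.sub_apply]
      _ ≤ ‖f x - w x‖ + ‖f x - u x‖ := norm_sub_le _ _
      _ ≤ C' * ‖P x‖ ^ n + C * ‖P x‖ ^ n :=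
        add_le_add (hfw x ⟨hx_sector, hx⟩) (hfu x ⟨hx_sector, hx⟩)
      _ = (C + C') * ‖P x‖ ^ n := by ring
  obtain ⟨h, hh, hmul⟩ := exists_analyticAt_eq_mul_pow_of_norm_le_on_PSector hR hab hP hPne
    ((hu 0 hzero).sub (hw 0 hzero)) hbound
  obtain ⟨r, hr, hrρ, hdisk_r⟩ :=
    exists_forall_mem_polydisk (hh.eventually_analyticAt.and hmul) hρ
  exact ⟨r, hr, hrρ, h, fun x hx ↦ (hdisk_r x hx).1, fun x hx ↦ (hdisk_r x hx).2⟩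

/-- **Uniqueness of `P`-asymptotic expansions** (Lemma 4.4).
If two sequences `(f_n)`, `(g_n)` of holomorphic functions on `D(0;ρ)` both approximate a
holomorphic `f` on a `P`-sector to order `|P|^n`, then for every `n` the difference
`f_n − g_n` is divisible by `P^n` as a germ at the origin. -/
theorem uniqueness_of_P_asymptotic_expansions
    (d : ℕ) (hd : 1 ≤ d) (R : ℝ) (hR : 0 < R)
    (P : (Fin d → ℂ) → ℂ) (hP : AnalyticOnNhd ℂ P (polydisk d R))
    (hP0 : P 0 = 0) (hPne : ∃ x ∈ polydisk d R, P x ≠ 0)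
    (a b : ℝ) (hab : a < b) (hab2 : b ≤ a + 2 * Real.pi)
    (f : (Fin d → ℂ) → ℂ) (hf : AnalyticOnNhd ℂ f (PSector d P a b R))
    (ρ : ℝ) (hρ : 0 < ρ) (hρR : ρ ≤ R)
    (fseq gseq : ℕ → (Fin d → ℂ) → ℂ) (C : ℕ → ℝ)
    (hfa : ∀ n, AnalyticOnNhd ℂ (fseq n) (polydisk d ρ))
    (hga : ∀ n, AnalyticOnNhd ℂ (gseq n) (polydisk d ρ))
    (hfb : ∀ n, ∀ x ∈ PSector d P a b R ∩ polydisk d ρ,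
      ‖f x - fseq n x‖ ≤ C n * ‖P x‖ ^ n)
    (hgb : ∀ n, ∀ x ∈ PSector d P a b R ∩ polydisk d ρ,
      ‖f x - gseq n x‖ ≤ C n * ‖P x‖ ^ n) :
    ∀ n : ℕ, ∃ ρn > 0, ρn ≤ ρ ∧ ∃ h : (Fin d → ℂ) → ℂ,
      AnalyticOnNhd ℂ h (polydisk d ρn) ∧
      ∀ x ∈ polydisk d ρn, fseq n x - gseq n x = h x * P x ^ n := by
  exact fun n ↦ uniqueness_of_P_asymptotic_expansions_general hR hρ hab hP hPne
    (hfa n) (hga n) (hfb n) (hgb n)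
end
end

section
/- Standard form of P-asymptotic expansions (Theorem 4.7, part (1)): Let d ≥ 1, ℓ an injective linear form, P holomorphic on D(0;R) with P(0) = 0 and P not identically zero, and a ∈ ℕ^d the ℓ-minimal exponent of the Taylor series of P at 0. Let Π = Π_P(θ_1,θ_2;R) be a P-sector and f : Π → ℂ holomorphic. If f admits a P-asymptotic expansion in the estimate sense, then there exist ρ > 0, a sequence (g_n) of bounded holomorphic functions on D(0;ρ) with ∂^β g_n(0) = 0 for every n and every β ∈ a + ℕ^d, and constants L_N > 0 such that |f(x) − Σ_{n<N} g_n(x)·P(x)^n| ≤ L_N·|P(x)|^N for every N ∈ ℕ and every x ∈ Π ∩ D(0;ρ). -/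
open Set Complex

noncomputable section

/-!
Write `F n` for the given approximants of `f`. On the sector, `F (n + 1) - F n` is bounded by a
constant times `|P|^n`. Restrict to a complex line on which `P` does not vanish identically. The
values of `P` near each of its zeros on that line enter the sector, so `(F (n + 1) - F n) / P ^ n`
stays bounded along a sequence tending to the zero and has no pole there. Fix a direction `v` and
`ε > 0` such that `P (x + t v) ≠ 0` for `|t| = ε` and all small `x`. The mean of the quotient over
these circles is holomorphic in `x`, and hence `F (n + 1) - F n = u n * P ^ n` on a polydisk which
does not depend on `n`.

For `s_j = σ ^ ℓ_j` with `σ` small, the term of exponent `a` dominates the Taylor series of `P` on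
the closed polydisk of polyradius `s`. By a Neumann series in `ℓ¹`, every normally convergent series
`h` on this polydisk is `q * P + r` with no exponent of `r` in `a + ℕ^d`. Starting from `Q 0 = F 0`
and dividing `Q n + u n = Q (n + 1) * P + g n` gives `F N = ∑ n < N, g n * P ^ n + Q N * P ^ N`.
-/

namespace PAsymptotic

section Division

variable {M 𝕜 : Type*}

/-- The Banach space `ℓ¹(M, 𝕜)`. Its elements are the coefficient families of generalized power
series with exponents in `M`. -/
abbrev L1 (M 𝕜 : Type*) [NormedAddCommGroup 𝕜] := lp (fun _ : M => 𝕜) 1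

section Norm

variable [NormedAddCommGroup 𝕜]

lemma L1.summable_norm (c : L1 M 𝕜) : Summable fun β => ‖c β‖ := by
  simpa using c.2.summable (by simp)

lemma L1.norm_eq_tsum (c : L1 M 𝕜) : ‖c‖ = ∑' β, ‖c β‖ := by
  simp [lp.norm_eq_tsum_rpow (p := 1) (by simp) c]

/-- The element of `ℓ¹(M, 𝕜)` given by an absolutely summable family. -/
def L1.mk (c : M → 𝕜) (hc : Summable fun β => ‖c β‖) : L1 M 𝕜 :=
  ⟨c, memℓp_gen (by simpa using hc)⟩

@[simp]
lemma L1.mk_apply (c : M → 𝕜) (hc : Summable fun β => ‖c β‖) (β : M) : L1.mk c hc β = c β := rfl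

lemma L1.norm_sub_single [DecidableEq M] (p : L1 M 𝕜) (a : M) :
    ‖p - lp.single 1 a (p a)‖ = ‖p‖ - ‖p a‖ := by
  have h := lp.norm_sub_norm_compl_sub_single (p := 1) (by simp) p {a}
  simp only [ENNReal.toReal_one, Real.rpow_one, Finset.sum_singleton] at h
  linarith

end Norm

variable [NontriviallyNormedField 𝕜] [AddCommMonoid M]

section Eval

variable (χ : AddChar M 𝕜)

lemma norm_coeff_mul_char_le (hχ : ∀ β, ‖χ β‖ ≤ 1) (c : L1 M 𝕜) (β : M) : ‖c β * χ β‖ ≤ ‖c β‖ := by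
  rw [norm_mul]
  exact mul_le_of_le_one_right (norm_nonneg _) (hχ β)

variable [CompleteSpace 𝕜]

lemma summable_coeff_mul_char (hχ : ∀ β, ‖χ β‖ ≤ 1) (c : L1 M 𝕜) : Summable fun β => c β * χ β :=
  .of_norm_bounded (L1.summable_norm c) (norm_coeff_mul_char_le χ hχ c)

/-- Evaluation `c ↦ ∑ c_β χ(β)` of a coefficient family at a bounded character. -/
def L1.eval (hχ : ∀ β, ‖χ β‖ ≤ 1) : L1 M 𝕜 →L[𝕜] 𝕜 :=
  LinearMap.mkContinuous
    { toFun c := ∑' β, c β * χ β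
      map_add' c c' := by
        simp only [lp.coeFn_add, Pi.add_apply, add_mul]
        exact (summable_coeff_mul_char χ hχ c).tsum_add (summable_coeff_mul_char χ hχ c')
      map_smul' k c := by
        simp only [lp.coeFn_smul, Pi.smul_apply, smul_eq_mul, RingHom.id_apply, mul_assoc,
          tsum_mul_left] } 1 fun c => by
    rw [one_mul, L1.norm_eq_tsum]
    exact tsum_of_norm_bounded (L1.summable_norm c).hasSum (norm_coeff_mul_char_le χ hχ c)

lemma L1.hasSum_eval (hχ : ∀ β, ‖χ β‖ ≤ 1) (c : L1 M 𝕜) :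
    HasSum (fun β => c β * χ β) (L1.eval χ hχ c) :=
  (summable_coeff_mul_char χ hχ c).hasSum

end Eval

variable [IsCancelAdd M]

lemma L1.hasSum_norm_extend_add (α : M) (c : L1 M 𝕜) :
    HasSum (fun γ => ‖Function.extend (· + α) c 0 γ‖) ‖c‖ := by
  have hnorm : (fun γ => ‖Function.extend (· + α) c 0 γ‖) =
      Function.extend (· + α) (fun γ => ‖c γ‖) 0 := by
    funext γ
    rw [Function.apply_extend norm]
    congr
    funext
    simp
  rw [hnorm, hasSum_extend_zero (add_left_injective α), L1.norm_eq_tsum c]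
  exact (L1.summable_norm c).hasSum

/-- The translation `(T_α c)_{γ + α} = c_γ` on `ℓ¹(M, 𝕜)`: multiplication by the monomial `α`. -/
def L1.shift (α : M) : L1 M 𝕜 →L[𝕜] L1 M 𝕜 :=
  LinearMap.mkContinuous
    { toFun c := L1.mk (Function.extend (· + α) c 0) (L1.hasSum_norm_extend_add α c).summable
      map_add' c c' := by
        ext γ
        have h := congrFun (Function.extend_add (· + α) (c : M → 𝕜) c' 0 0) γ
        rwa [add_zero] at h
      map_smul' k c := by
        ext γ
        have h := congrFun (Function.extend_smul k (· + α) (c : M → 𝕜) 0) γ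
        rwa [smul_zero] at h } 1 fun c => by
    rw [one_mul, L1.norm_eq_tsum]
    exact (L1.hasSum_norm_extend_add α c).tsum_eq.le

@[simp]
lemma L1.shift_apply_add (α γ : M) (c : L1 M 𝕜) : L1.shift α c (γ + α) = c γ :=
  (add_left_injective α).extend_apply c 0 γ

lemma L1.shift_apply_of_notMem_range {α γ : M} (hγ : γ ∉ range (· + α)) (c : L1 M 𝕜) :
    L1.shift α c γ = 0 :=
  Function.extend_apply' (f := (· + α)) c 0 γ hγ

lemma L1.norm_shift_le (α : M) : ‖L1.shift (𝕜 := 𝕜) α‖ ≤ 1 :=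
  LinearMap.mkContinuous_norm_le _ zero_le_one _

/-- The left inverse `(S_α c)_γ = c_{γ + α}` of `L1.shift α`: division by the monomial `α`, dropping
the exponents outside `α + M`. -/
def L1.unshift (α : M) : L1 M 𝕜 →L[𝕜] L1 M 𝕜 :=
  LinearMap.mkContinuous
    { toFun c := L1.mk (fun γ => c (γ + α))
        ((L1.summable_norm c).comp_injective (add_left_injective α))
      map_add' _ _ := rfl
      map_smul' _ _ := rfl } 1 fun c => by
    rw [one_mul, L1.norm_eq_tsum, L1.norm_eq_tsum]
    exact tsum_comp_le_tsum_of_inj (L1.summable_norm c) (fun _ => norm_nonneg _)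
      (add_left_injective α)

@[simp]
lemma L1.unshift_apply (α γ : M) (c : L1 M 𝕜) : L1.unshift α c γ = c (γ + α) := rfl

lemma L1.norm_unshift_le (α : M) : ‖L1.unshift (𝕜 := 𝕜) α‖ ≤ 1 :=
  LinearMap.mkContinuous_norm_le _ zero_le_one _

lemma L1.unshift_comp_shift (α : M) : (L1.unshift α).comp (L1.shift α) = (1 : L1 M 𝕜 →L[𝕜] _) := by
  ext c γ
  simp

lemma norm_coeff_smul_shift_le (p : L1 M 𝕜) (α : M) : ‖p α • L1.shift (𝕜 := 𝕜) α‖ ≤ ‖p α‖ := by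
  rw [norm_smul]
  exact mul_le_of_le_one_right (norm_nonneg _) (L1.norm_shift_le α)

/-- Multiplication by the power series with coefficients `p`. -/
def L1.mulLeft (p : L1 M 𝕜) : L1 M 𝕜 →L[𝕜] L1 M 𝕜 := ∑' α, p α • L1.shift α

lemma L1.norm_mulLeft_le (p : L1 M 𝕜) : ‖L1.mulLeft p‖ ≤ ‖p‖ := by
  rw [L1.norm_eq_tsum]
  exact tsum_of_norm_bounded (L1.summable_norm p).hasSum (norm_coeff_smul_shift_le p)

variable [CompleteSpace 𝕜]

lemma L1.hasSum_mulLeft (p : L1 M 𝕜) : HasSum (fun α => p α • L1.shift α) (L1.mulLeft p) :=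
  (Summable.of_norm_bounded (L1.summable_norm p) (norm_coeff_smul_shift_le p)).hasSum

lemma L1.eval_shift (χ : AddChar M 𝕜) (hχ : ∀ β, ‖χ β‖ ≤ 1) (α : M) (c : L1 M 𝕜) :
    L1.eval χ hχ (L1.shift α c) = χ α * L1.eval χ hχ c := by
  refine (L1.hasSum_eval χ hχ _).unique (((add_left_injective α).hasSum_iff fun γ hγ => ?_).mp ?_)
  · rw [L1.shift_apply_of_notMem_range hγ, zero_mul]
  · refine ((L1.hasSum_eval χ hχ c).mul_left (χ α)).congr_fun fun γ => ?_
    rw [Function.comp_apply, L1.shift_apply_add, AddChar.map_add_eq_mul]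
    ring

lemma L1.eval_mulLeft (χ : AddChar M 𝕜) (hχ : ∀ β, ‖χ β‖ ≤ 1) (p c : L1 M 𝕜) :
    L1.eval χ hχ (L1.mulLeft p c) = L1.eval χ hχ p * L1.eval χ hχ c := by
  have hsum : HasSum (fun α => L1.eval χ hχ ((p α • L1.shift α) c)) _ :=
    ((L1.hasSum_mulLeft p).mapL (ContinuousLinearMap.apply 𝕜 (L1 M 𝕜) c)).mapL (L1.eval χ hχ)
  have hterm (α : M) : L1.eval χ hχ ((p α • L1.shift α) c) = p α * χ α * L1.eval χ hχ c := by
    rw [smul_apply, map_smul, L1.eval_shift, smul_eq_mul, mul_assoc]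
  simp only [hterm] at hsum
  exact hsum.unique ((L1.hasSum_eval χ hχ p).mul_right _)

lemma L1.mulLeft_eq_smul_shift_add [DecidableEq M] (p : L1 M 𝕜) (a : M) :
    L1.mulLeft p = p a • L1.shift a + L1.mulLeft (p - lp.single 1 a (p a)) := by
  refine (L1.hasSum_mulLeft p).unique ?_
  refine ((hasSum_ite_eq a (p a • L1.shift a)).add (L1.hasSum_mulLeft _)).congr_fun fun α => ?_
  obtain rfl | hα := eq_or_ne α a
  · simp
  · simp [hα]

lemma L1.isUnit_unshift_comp_mulLeft {p : L1 M 𝕜} {a : M} (hp : ‖p‖ < 2 * ‖p a‖) :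
    IsUnit ((L1.unshift a).comp (L1.mulLeft p)) := by
  classical
  have ha : p a ≠ 0 := fun h0 => by
    rw [h0, norm_zero, mul_zero] at hp
    exact hp.not_ge (norm_nonneg p)
  set B := (L1.unshift a).comp (L1.mulLeft (p - lp.single 1 a (p a)))
  have hB : ‖B‖ < ‖p a‖ := calc
    ‖B‖ ≤ ‖L1.unshift (𝕜 := 𝕜) a‖ * ‖L1.mulLeft (p - lp.single 1 a (p a))‖ :=
      ContinuousLinearMap.opNorm_comp_le _ _
    _ ≤ 1 * ‖p - lp.single 1 a (p a)‖ := by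
      gcongr
      exacts [L1.norm_unshift_le a, L1.norm_mulLeft_le _]
    _ < ‖p a‖ := by
      rw [one_mul, L1.norm_sub_single]
      linarith
  have hsplit : (L1.unshift a).comp (L1.mulLeft p) = p a • (1 - -((p a)⁻¹ • B)) := by
    rw [L1.mulLeft_eq_smul_shift_add p a, ContinuousLinearMap.comp_add,
      ContinuousLinearMap.comp_smul, L1.unshift_comp_shift, sub_neg_eq_add, smul_add,
      smul_inv_smul₀ ha]
  rw [hsplit]
  refine IsUnit.smul (Units.mk0 (p a) ha) (isUnit_one_sub_of_norm_lt_one ?_)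
  rwa [norm_neg, norm_smul, norm_inv, inv_mul_lt_iff₀ (norm_pos_iff.mpr ha), mul_one]

theorem L1.exists_division {p : L1 M 𝕜} {a : M} (hp : ‖p‖ < 2 * ‖p a‖) (h : L1 M 𝕜) :
    ∃ q r : L1 M 𝕜, (∀ γ, r (γ + a) = 0) ∧ h = L1.mulLeft p q + r := by
  obtain ⟨q, hq⟩ :=
    ((ContinuousLinearMap.isUnit_iff_bijective.mp (L1.isUnit_unshift_comp_mulLeft hp)).2)
      (L1.unshift a h)
  refine ⟨q, h - L1.mulLeft p q, fun γ => ?_, (add_sub_cancel _ _).symm⟩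
  have hγ : L1.mulLeft p q (γ + a) = h (γ + a) := congrArg (fun c : L1 M 𝕜 => c γ) hq
  rw [lp.coeFn_sub, Pi.sub_apply, hγ, sub_self]

end Division

section Monomial

variable {ι : Type*} [Fintype ι]

/-- The monomial `β ↦ x^β = ∏ x_j^{β_j}`, as a character of the additive monoid of exponents. -/
def monomialChar {R : Type*} [CommMonoid R] (x : ι → R) : AddChar (ι → ℕ) R where
  toFun β := ∏ j, x j ^ β j
  map_zero_eq_one' := by simp
  map_add_eq_mul' β γ := by simp only [Pi.add_apply, pow_add, Finset.prod_mul_distrib]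

lemma monomialChar_apply {R : Type*} [CommMonoid R] (x : ι → R) (β : ι → ℕ) :
    monomialChar x β = ∏ j, x j ^ β j := rfl

lemma norm_monomialChar (x : ι → ℂ) (β : ι → ℕ) :
    ‖monomialChar x β‖ = monomialChar (fun j => ‖x j‖) β := by
  simp only [monomialChar_apply, norm_prod, norm_pow]

lemma monomialChar_div (x y : ι → ℂ) (β : ι → ℕ) :
    monomialChar (fun j => x j / y j) β = monomialChar x β / monomialChar y β := by
  simp only [monomialChar_apply, div_pow, Finset.prod_div_distrib]

lemma monomialChar_ofReal (s : ι → ℝ) (β : ι → ℕ) :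
    monomialChar (fun j => (s j : ℂ)) β = (monomialChar s β : ℝ) := by
  simp [monomialChar_apply]

lemma monomialChar_pos {s : ι → ℝ} (hs : ∀ j, 0 < s j) (β : ι → ℕ) : 0 < monomialChar s β :=
  Finset.prod_pos fun j _ => pow_pos (hs j) _

lemma monomialChar_le_monomialChar {s t : ι → ℝ} (hs : ∀ j, 0 ≤ s j) (hst : ∀ j, s j ≤ t j)
    (β : ι → ℕ) : monomialChar s β ≤ monomialChar t β :=
  Finset.prod_le_prod (fun j _ => pow_nonneg (hs j) _)
    fun j _ => pow_le_pow_left₀ (hs j) (hst j) _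

lemma norm_mul_monomialChar_le (k : ℂ) {s : ι → ℝ} {x : ι → ℂ} (hx : ∀ j, ‖x j‖ ≤ s j)
    (β : ι → ℕ) : ‖k * monomialChar x β‖ ≤ ‖k‖ * monomialChar s β := by
  rw [norm_mul, norm_monomialChar]
  exact mul_le_mul_of_nonneg_left
    (monomialChar_le_monomialChar (fun j => norm_nonneg _) hx β) (norm_nonneg _)

/-- `f` is the sum of the power series with coefficients `c` on the closed polydisk with polyradius
`s`, and this series converges normally there. -/
structure HasMonomialSeries (s : ι → ℝ) (f : (ι → ℂ) → ℂ) (c : (ι → ℕ) → ℂ) : Prop where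
  summable : Summable fun β => ‖c β‖ * monomialChar s β
  hasSum {x : ι → ℂ} (hx : ∀ j, ‖x j‖ ≤ s j) : HasSum (fun β => c β * monomialChar x β) (f x)

namespace HasMonomialSeries

variable {s t : ι → ℝ} {f g : (ι → ℂ) → ℂ} {b c : (ι → ℕ) → ℂ}

lemma of_hasSum (hs : ∀ j, 0 ≤ s j)
    (hf : ∀ x, (∀ j, ‖x j‖ ≤ s j) → HasSum (fun β => c β * monomialChar x β) (f x)) :
    HasMonomialSeries s f c where
  summable := by
    have hnorm (j : ι) : ‖(s j : ℂ)‖ = s j := by rw [norm_real, Real.norm_of_nonneg (hs j)]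
    refine (hf (fun j => (s j : ℂ)) fun j => (hnorm j).le).summable.norm.congr fun β => ?_
    rw [norm_mul, norm_monomialChar, funext hnorm]
  hasSum := hf _

lemma mono (hf : HasMonomialSeries s f c) (ht : ∀ j, 0 ≤ t j) (hts : ∀ j, t j ≤ s j) :
    HasMonomialSeries t f c :=
  of_hasSum ht fun _ hx => hf.hasSum fun j => (hx j).trans (hts j)

lemma add (hf : HasMonomialSeries s f b) (hg : HasMonomialSeries s g c) (hs : ∀ j, 0 ≤ s j) :
    HasMonomialSeries s (f + g) (b + c) :=
  of_hasSum hs fun _ hx =>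
    ((hf.hasSum hx).add (hg.hasSum hx)).congr_fun fun _ => add_mul _ _ _

lemma norm_le (hf : HasMonomialSeries s f c) {x : ι → ℂ} (hx : ∀ j, ‖x j‖ ≤ s j) :
    ‖f x‖ ≤ ∑' β, ‖c β‖ * monomialChar s β := by
  rw [← (hf.hasSum hx).tsum_eq]
  exact tsum_of_norm_bounded hf.summable.hasSum fun β => norm_mul_monomialChar_le _ hx β

end HasMonomialSeries

lemma norm_monomialChar_div_le_one {s : ι → ℝ} {x : ι → ℂ} (hx : ∀ j, ‖x j‖ ≤ s j) (β : ι → ℕ) :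
    ‖monomialChar (fun j => x j / s j) β‖ ≤ 1 := by
  rw [norm_monomialChar]
  refine Finset.prod_le_one (fun j _ => by positivity) fun j _ => pow_le_one₀ (norm_nonneg _) ?_
  beta_reduce
  rw [norm_div, norm_real, Real.norm_of_nonneg ((norm_nonneg _).trans (hx j))]
  exact div_le_one_of_le₀ (hx j) ((norm_nonneg _).trans (hx j))

/-- The function on `ℂ^ι` with coefficients `C` with respect to the rescaled monomials
`(x / s)^β`. -/
def rescaledSum (s : ι → ℝ) (C : L1 (ι → ℕ) ℂ) (x : ι → ℂ) : ℂ :=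
  ∑' β, C β * monomialChar (fun j => x j / s j) β

lemma rescaledSum_eq_eval {s : ι → ℝ} (C : L1 (ι → ℕ) ℂ) {x : ι → ℂ} (hx : ∀ j, ‖x j‖ ≤ s j) :
    rescaledSum s C x = L1.eval _ (norm_monomialChar_div_le_one hx) C := rfl

lemma hasMonomialSeries_rescaledSum {s : ι → ℝ} (hs : ∀ j, 0 < s j) (C : L1 (ι → ℕ) ℂ) :
    HasMonomialSeries s (rescaledSum s C) fun β => C β / monomialChar s β where
  summable := by
    refine (L1.summable_norm C).congr fun β => ?_
    have hpos := monomialChar_pos hs β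
    rw [norm_div, norm_real, Real.norm_of_nonneg hpos.le, div_mul_cancel₀ _ hpos.ne']
  hasSum hx := by
    rw [rescaledSum_eq_eval C hx]
    refine (L1.hasSum_eval _ _ C).congr_fun fun β => ?_
    rw [monomialChar_div, monomialChar_ofReal, mul_div_assoc', div_mul_eq_mul_div]

lemma HasMonomialSeries.exists_rescaledSum_eq {s : ι → ℝ} (hs : ∀ j, 0 < s j) {f : (ι → ℂ) → ℂ}
    {c : (ι → ℕ) → ℂ} (hf : HasMonomialSeries s f c) :
    ∃ C : L1 (ι → ℕ) ℂ, (∀ β, C β = c β * monomialChar s β) ∧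
      ∀ x, (∀ j, ‖x j‖ ≤ s j) → rescaledSum s C x = f x := by
  refine ⟨L1.mk (fun β => c β * monomialChar s β) (hf.summable.congr fun β => ?_), fun β => rfl,
    fun x hx => ?_⟩
  · rw [norm_mul, norm_real, Real.norm_of_nonneg (monomialChar_pos hs β).le]
  · rw [rescaledSum_eq_eval _ hx]
    refine (L1.hasSum_eval _ _ _).unique ((hf.hasSum hx).congr_fun fun β => ?_)
    have hβ : (monomialChar s β : ℂ) ≠ 0 := ofReal_ne_zero.mpr (monomialChar_pos hs β).ne'
    rw [L1.mk_apply, monomialChar_div, monomialChar_ofReal]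
    field_simp

/-- The term `c_a x^a` dominates the power series with coefficients `c` at polyradius `s`: its
majorant at `s` exceeds the sum of the majorants of all the other terms. -/
def IsDominantExponent (s : ι → ℝ) (c : (ι → ℕ) → ℂ) (a : ι → ℕ) : Prop :=
  ∑' β, ‖c β‖ * monomialChar s β < 2 * (‖c a‖ * monomialChar s a)

theorem HasMonomialSeries.exists_division {s : ι → ℝ} (hs : ∀ j, 0 < s j) {P h : (ι → ℂ) → ℂ}
    {p c : (ι → ℕ) → ℂ} {a : ι → ℕ} (hP : HasMonomialSeries s P p)
    (ha : IsDominantExponent s p a) (hh : HasMonomialSeries s h c) :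
    ∃ (q r : (ι → ℂ) → ℂ) (cq cr : (ι → ℕ) → ℂ), HasMonomialSeries s q cq ∧
      HasMonomialSeries s r cr ∧ (∀ γ, cr (γ + a) = 0) ∧
      ∀ x, (∀ j, ‖x j‖ ≤ s j) → h x = q x * P x + r x := by
  obtain ⟨A, hA, hAP⟩ := hP.exists_rescaledSum_eq hs
  obtain ⟨H, -, hHh⟩ := hh.exists_rescaledSum_eq hs
  have hnorm (β : ι → ℕ) : ‖A β‖ = ‖p β‖ * monomialChar s β := by
    rw [hA, norm_mul, norm_real, Real.norm_of_nonneg (monomialChar_pos hs β).le]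
  have hdom : ‖A‖ < 2 * ‖A a‖ := by
    simpa only [L1.norm_eq_tsum, hnorm, IsDominantExponent] using ha
  obtain ⟨Q, S, hS, rfl⟩ := L1.exists_division hdom H
  refine ⟨_, _, _, _, hasMonomialSeries_rescaledSum hs Q, hasMonomialSeries_rescaledSum hs S,
    fun γ => by rw [hS, zero_div], fun x hx => ?_⟩
  rw [← hHh x hx, ← hAP x hx]
  simp only [rescaledSum_eq_eval _ hx, map_add, L1.eval_mulLeft]
  ring

end Monomial

section Analytic

variable {ι : Type*} [Fintype ι]

lemma monomialChar_const {R : Type*} [CommMonoid R] (r : R) (β : ι → ℕ) :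
    monomialChar (fun _ => r) β = r ^ ∑ j, β j :=
  Finset.prod_pow_eq_pow_sum _ _ _

/-- The monomial `x^β` of total degree `n` as an `n`-linear map, multiplying `β_j` many `j`-th
coordinates. -/
def monomialMultilinear {n : ℕ} (β : {β : ι → ℕ // ∑ j, β j = n}) :
    ContinuousMultilinearMap ℂ (fun _ : Fin n => ι → ℂ) ℂ :=
  ((ContinuousMultilinearMap.mkPiAlgebra ℂ (Σ j, Fin (β.1 j)) ℂ).compContinuousLinearMap
    fun i => ContinuousLinearMap.proj i.1).domDomCongr
      (Fintype.equivFinOfCardEq (by simp [β.2]))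

lemma monomialMultilinear_apply_const {n : ℕ} (β : {β : ι → ℕ // ∑ j, β j = n}) (x : ι → ℂ) :
    monomialMultilinear β (fun _ => x) = monomialChar x β.1 := by
  simp [monomialMultilinear, Fintype.prod_sigma, monomialChar_apply]

lemma norm_monomialMultilinear_le {n : ℕ} (β : {β : ι → ℕ // ∑ j, β j = n}) :
    ‖monomialMultilinear β‖ ≤ 1 := by
  refine ContinuousMultilinearMap.opNorm_le_bound zero_le_one fun m => ?_
  rw [one_mul, ← (Fintype.equivFinOfCardEq (α := Σ j, Fin (β.1 j)) (by simp [β.2])).prod_comp]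
  simp only [monomialMultilinear, ContinuousMultilinearMap.domDomCongr_apply,
    ContinuousMultilinearMap.compContinuousLinearMap_apply,
    ContinuousMultilinearMap.mkPiAlgebra_apply, ContinuousLinearMap.proj_apply, norm_prod]
  exact Finset.prod_le_prod (fun i _ => norm_nonneg _) fun i _ => norm_le_pi_norm _ _

/-- The power series `∑ c_β x^β`, grouped by total degree into a formal multilinear series. -/
def monomialFormalSeries (c : (ι → ℕ) → ℂ) : FormalMultilinearSeries ℂ (ι → ℂ) ℂ :=
  fun n => ∑' β : {β : ι → ℕ // ∑ j, β j = n}, c β.1 • monomialMultilinear β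

lemma norm_coeff_smul_monomialMultilinear_le (c : (ι → ℕ) → ℂ) {n : ℕ}
    (β : {β : ι → ℕ // ∑ j, β j = n}) : ‖c β.1 • monomialMultilinear β‖ ≤ ‖c β.1‖ := by
  rw [norm_smul]
  exact mul_le_of_le_one_right (norm_nonneg _) (norm_monomialMultilinear_le β)

namespace HasMonomialSeries

variable {r : ℝ} {f : (ι → ℂ) → ℂ} {c : (ι → ℕ) → ℂ}

lemma summable_norm_coeff_fiber (hf : HasMonomialSeries (fun _ => r) f c) (hr : 0 < r) (n : ℕ) :
    Summable fun β : {β : ι → ℕ // ∑ j, β j = n} => ‖c β.1‖ := by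
  refine (summable_mul_right_iff (pow_pos hr n).ne').mp
    ((hf.summable.comp_injective Subtype.val_injective).congr fun β => ?_)
  rw [Function.comp_apply, monomialChar_const, β.2]

lemma hasSum_monomialFormalSeries (hf : HasMonomialSeries (fun _ => r) f c) (hr : 0 < r) (n : ℕ) :
    HasSum (fun β : {β : ι → ℕ // ∑ j, β j = n} => c β.1 • monomialMultilinear β)
      (monomialFormalSeries c n) :=
  (Summable.of_norm_bounded (hf.summable_norm_coeff_fiber hr n)
    (norm_coeff_smul_monomialMultilinear_le c)).hasSum

lemma le_radius_monomialFormalSeries (hf : HasMonomialSeries (fun _ => r) f c) (hr : 0 < r) :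
    ENNReal.ofReal r ≤ (monomialFormalSeries c).radius := by
  have hfiber := ((Equiv.sigmaFiberEquiv fun β : ι → ℕ => ∑ j, β j).summable_iff.mpr
    hf.summable).sigma
  refine FormalMultilinearSeries.le_radius_of_summable_norm _
    (hfiber.of_nonneg_of_le (fun n => by positivity) fun n => ?_)
  rw [Real.coe_toNNReal r hr.le]
  calc ‖monomialFormalSeries c n‖ * r ^ n
      ≤ (∑' β : {β : ι → ℕ // ∑ j, β j = n}, ‖c β.1‖) * r ^ n := by
        gcongr
        exact tsum_of_norm_bounded (hf.summable_norm_coeff_fiber hr n).hasSum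
          (norm_coeff_smul_monomialMultilinear_le c)
    _ = ∑' β : {β : ι → ℕ // ∑ j, β j = n}, ‖c β.1‖ * monomialChar (fun _ => r) β.1 := by
        rw [← tsum_mul_right]
        exact tsum_congr fun β => by rw [monomialChar_const, β.2]

theorem hasFPowerSeriesOnBall (hf : HasMonomialSeries (fun _ => r) f c) (hr : 0 < r) :
    HasFPowerSeriesOnBall f (monomialFormalSeries c) 0 (ENNReal.ofReal r) where
  r_le := hf.le_radius_monomialFormalSeries hr
  r_pos := ENNReal.ofReal_pos.mpr hr
  hasSum {x} hx := by
    rw [Metric.mem_eball, edist_lt_ofReal, dist_zero_right] at hx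
    have hsum := (Equiv.sigmaFiberEquiv fun β : ι → ℕ => ∑ j, β j).hasSum_iff.mpr
      (hf.hasSum fun j => (norm_le_pi_norm x j).trans hx.le)
    rw [zero_add]
    refine hsum.sigma fun n => ?_
    refine ((hf.hasSum_monomialFormalSeries hr n).mapL
      (ContinuousMultilinearMap.apply ℂ (fun _ : Fin n => ι → ℂ) ℂ fun _ => x)).congr_fun
      fun β => ?_
    exact congrArg (c β.1 * ·) (monomialMultilinear_apply_const β x).symm

theorem analyticOnNhd (hf : HasMonomialSeries (fun _ => r) f c) (hr : 0 < r) :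
    AnalyticOnNhd ℂ f (Metric.ball 0 r) := by
  rw [← Metric.eball_ofReal]
  exact (hf.hasFPowerSeriesOnBall hr).analyticOnNhd

end HasMonomialSeries

end Analytic

section Derivatives

lemma hasDerivAt_monomialChar_update {ι : Type*} [Fintype ι] [DecidableEq ι] (x : ι → ℂ) (j : ι)
    (w : ℂ) (β : ι → ℕ) :
    HasDerivAt (fun w => monomialChar (Function.update x j w) β)
      (β j * monomialChar (Function.update x j w) (β - Pi.single j 1)) w := by
  have hsplit (γ : ι → ℕ) (v : ℂ) : monomialChar (Function.update x j v) γ =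
      v ^ γ j * ∏ i ∈ Finset.univ.erase j, x i ^ γ i := by
    rw [monomialChar_apply, ← Finset.mul_prod_erase _ _ (Finset.mem_univ j),
      Function.update_self]
    refine congrArg _ (Finset.prod_congr rfl fun i hi => ?_)
    rw [Function.update_of_ne (Finset.ne_of_mem_erase hi)]
  have herase : ∏ i ∈ Finset.univ.erase j, x i ^ (β i - (Pi.single j 1 : ι → ℕ) i) =
      ∏ i ∈ Finset.univ.erase j, x i ^ β i :=
    Finset.prod_congr rfl fun i hi => by simp [Finset.ne_of_mem_erase hi]
  simp only [hsplit, Pi.sub_apply, herase, Pi.single_eq_same, ← mul_assoc]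
  exact (hasDerivAt_pow (β j) w).mul_const _

variable {d : ℕ} {f : (Fin d → ℂ) → ℂ} {c : (Fin d → ℕ) → ℂ}

lemma pderivCoord_eq_deriv_update {x : Fin d → ℂ} (hf : DifferentiableAt ℂ f x) (j : Fin d) :
    pderivCoord j f x = deriv (fun w => f (Function.update x j w)) (x j) := by
  have hfx : HasFDerivAt f (fderiv ℂ f x) (Function.update x j (x j)) := by
    rw [Function.update_eq_self]
    exact hf.hasFDerivAt
  exact (hfx.comp_hasDerivAt (x j) (hasDerivAt_update x j (x j))).deriv.symm

lemma apply_eq_zero_of_notMem_range_add_single {ι : Type*} [DecidableEq ι] {β : ι → ℕ} {j : ι}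
    (hβ : β ∉ range fun γ : ι → ℕ => γ + Pi.single j 1) : β j = 0 := by
  by_contra hne
  refine hβ ⟨β - Pi.single j 1, tsub_add_cancel_of_le fun i => ?_⟩
  obtain rfl | hij := eq_or_ne i j
  · simpa using Nat.one_le_iff_ne_zero.mpr hne
  · simp [hij]

namespace HasMonomialSeries

variable {r : ℝ}

lemma hasSum_pderivCoord (hf : HasMonomialSeries (fun _ => r) f c) (j : Fin d) {x : Fin d → ℂ}
    (hr : 0 < r) (hx : ‖x‖ < r) :
    HasSum (fun γ => (γ j + 1) * c (γ + Pi.single j 1) * monomialChar x γ)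
      (pderivCoord j f x) := by
  have hupdate {w : ℂ} (hw : w ∈ Metric.ball 0 r) (i : Fin d) :
      ‖Function.update x j w i‖ ≤ r := by
    obtain rfl | hij := eq_or_ne i j
    · simpa using (mem_ball_zero_iff.mp hw).le
    · simpa [hij] using (norm_le_pi_norm x i).trans hx.le
  have hderiv (β : Fin d → ℕ) (w : ℂ) :=
    (hasDerivAt_monomialChar_update x j w β).const_mul (c β)
  have hxj : x j ∈ Metric.ball 0 r := mem_ball_zero_iff.mpr ((norm_le_pi_norm x j).trans_lt hx)
  have hsum := hasSum_deriv_of_summable_norm hf.summable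
    (fun β w _ => (hderiv β w).differentiableAt.differentiableWithinAt) Metric.isOpen_ball
    (fun β w hw => norm_mul_monomialChar_le (c β) (hupdate hw) β) hxj
  have hsum_eq : (fun w => ∑' β, c β * monomialChar (Function.update x j w) β) =ᶠ[nhds (x j)]
      fun w => f (Function.update x j w) := by
    filter_upwards [Metric.isOpen_ball.mem_nhds hxj] with w hw
    exact (hf.hasSum (hupdate hw)).tsum_eq
  rw [hsum_eq.deriv_eq, ← pderivCoord_eq_deriv_update
    (hf.analyticOnNhd hr x (mem_ball_zero_iff.mpr hx)).differentiableAt] at hsum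
  simp only [(hderiv _ _).deriv, Function.update_eq_self] at hsum
  refine ((add_left_injective (Pi.single j 1)).hasSum_iff fun β hβ => ?_).mpr hsum |>.congr_fun
    fun γ => ?_
  · simp [apply_eq_zero_of_notMem_range_add_single hβ]
  · simp only [Function.comp_apply, Pi.add_apply, Pi.single_eq_same, add_tsub_cancel_right]
    push_cast
    ring

lemma pderivCoord (hf : HasMonomialSeries (fun _ => r) f c) (j : Fin d) {t : ℝ} (ht : 0 ≤ t)
    (htr : t < r) :
    HasMonomialSeries (fun _ => t) (pderivCoord j f)
      fun γ => (γ j + 1) * c (γ + Pi.single j 1) :=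
  of_hasSum (fun _ => ht) fun _ hx => hf.hasSum_pderivCoord j (ht.trans_lt htr)
    (((pi_norm_le_iff_of_nonneg ht).mpr hx).trans_lt htr)

lemma apply_zero (hf : HasMonomialSeries (fun _ => r) f c) (hr : 0 ≤ r) : f 0 = c 0 := by
  refine (hf.hasSum (x := 0) (by simpa using fun _ => hr)).unique ?_
  have hvanish (β : Fin d → ℕ) (hβ : β ≠ 0) : c β * monomialChar 0 β = 0 := by
    obtain ⟨i, hi⟩ := Function.ne_iff.mp hβ
    rw [monomialChar_apply, Finset.prod_eq_zero (Finset.mem_univ i) (zero_pow hi), mul_zero]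
  simpa using hasSum_single 0 hvanish

end HasMonomialSeries

lemma prod_factorial_add_single (γ : Fin d → ℕ) (j : Fin d) :
    ∏ i, (((γ + Pi.single j 1 : Fin d → ℕ) i).factorial : ℂ) =
      (γ j + 1) * ∏ i, ((γ i).factorial : ℂ) := by
  rw [← Finset.mul_prod_erase _ _ (Finset.mem_univ j),
    ← Finset.mul_prod_erase _ _ (Finset.mem_univ j), ← mul_assoc]
  congr 1
  · simp [Nat.factorial_succ]
  · exact Finset.prod_congr rfl fun i hi => by simp [Finset.ne_of_mem_erase hi]

/-- `f` is the sum of a power series near `0` with coefficients `b_γ / γ!`. This normalization makes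
differentiation a mere translation of `b`. -/
def HasTaylorFamily (f : (Fin d → ℂ) → ℂ) (b : (Fin d → ℕ) → ℂ) : Prop :=
  ∃ r > 0, HasMonomialSeries (fun _ => r) f fun γ => b γ / ∏ i, ((γ i).factorial : ℂ)

namespace HasTaylorFamily

variable {b : (Fin d → ℕ) → ℂ}

lemma pderivCoord (hf : HasTaylorFamily f b) (j : Fin d) :
    HasTaylorFamily (pderivCoord j f) fun γ => b (γ + Pi.single j 1) := by
  obtain ⟨r, hr, hf⟩ := hf
  refine ⟨r / 2, half_pos hr, ?_⟩
  convert hf.pderivCoord j (half_pos hr).le (half_lt_self hr) using 2 with γ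
  have hj : (γ j + 1 : ℂ) ≠ 0 := Nat.cast_add_one_ne_zero (γ j)
  rw [prod_factorial_add_single, mul_div_assoc', mul_div_mul_left _ _ hj]

lemma iterate_pderivCoord (hf : HasTaylorFamily f b) (j : Fin d) (k : ℕ) :
    HasTaylorFamily ((_root_.pderivCoord j)^[k] f) fun γ => b (γ + Pi.single j k) := by
  induction k with
  | zero => simpa using hf
  | succ k ih =>
    rw [Function.iterate_succ_apply']
    simpa only [add_assoc, ← Pi.single_add, add_comm 1 k] using ih.pderivCoord j

lemma foldr_pderivCoord (hf : HasTaylorFamily f b) (β : Fin d → ℕ) (l : List (Fin d)) :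
    HasTaylorFamily (l.foldr (fun j g => (_root_.pderivCoord j)^[β j] g) f)
      fun γ => b (γ + (l.map fun j => Pi.single j (β j)).sum) := by
  induction l with
  | nil => simpa using hf
  | cons j l ih =>
    simpa only [List.foldr_cons, List.map_cons, List.sum_cons, add_assoc] using
      ih.iterate_pderivCoord j (β j)

lemma mixedPartial_zero (hf : HasTaylorFamily f b) (β : Fin d → ℕ) :
    mixedPartial β f 0 = b β := by
  obtain ⟨r, hr, hβ⟩ := hf.foldr_pderivCoord β (List.finRange d)
  have hsum : ((List.finRange d).map fun j => Pi.single j (β j)).sum = β := by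
    rw [← List.sum_toFinset _ (List.nodup_finRange d), List.toFinset_finRange]
    exact Finset.univ_sum_single β
  simpa [hsum, mixedPartial] using hβ.apply_zero hr.le

end HasTaylorFamily

theorem HasMonomialSeries.mixedPartial_zero {r : ℝ} (hf : HasMonomialSeries (fun _ => r) f c)
    (hr : 0 < r) (β : Fin d → ℕ) :
    mixedPartial β f 0 = (∏ i, ((β i).factorial : ℂ)) * c β := by
  refine HasTaylorFamily.mixedPartial_zero (b := fun γ => (∏ i, ((γ i).factorial : ℂ)) * c γ)
    ⟨r, hr, ?_⟩ β
  convert hf using 2 with γ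
  exact mul_div_cancel_left₀ _
    (Finset.prod_ne_zero_iff.mpr fun i _ => Nat.cast_ne_zero.mpr (γ i).factorial_ne_zero)

lemma HasMonomialSeries.mixedPartial_zero_eq_zero_iff {r : ℝ}
    (hf : HasMonomialSeries (fun _ => r) f c) (hr : 0 < r) (β : Fin d → ℕ) :
    mixedPartial β f 0 = 0 ↔ c β = 0 := by
  simp [hf.mixedPartial_zero hr, Finset.prod_eq_zero_iff, Nat.factorial_ne_zero]

end Derivatives

section GeometricSeries

variable {κ R : Type*} [NormedCommRing R]

lemma summable_norm_prod_apply {d : ℕ} {f : Fin d → κ → R} (hf : ∀ j, Summable fun k => ‖f j k‖) :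
    Summable fun β : Fin d → κ => ‖∏ j, f j (β j)‖ := by
  induction d with
  | zero => exact .of_finite
  | succ d ih =>
    rw [← (Fin.consEquiv fun _ => κ).summable_iff]
    refine ((hf 0).mul_norm (ih fun j => hf j.succ)).congr fun q => ?_
    simp [Fin.prod_univ_succ, Fin.consEquiv]

lemma hasSum_prod_apply [CompleteSpace R] {d : ℕ} {f : Fin d → κ → R} {s : Fin d → R}
    (hf : ∀ j, Summable fun k => ‖f j k‖) (hs : ∀ j, HasSum (f j) (s j)) :
    HasSum (fun β : Fin d → κ => ∏ j, f j (β j)) (∏ j, s j) := by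
  induction d with
  | zero => simp
  | succ d ih =>
    rw [← (Fin.consEquiv fun _ => κ).hasSum_iff, Fin.prod_univ_succ]
    have hprod := (hs 0).mul (ih (fun j => hf j.succ) fun j => hs j.succ)
      ((hf 0).mul_norm (summable_norm_prod_apply fun j => hf j.succ)).of_norm
    refine hprod.congr_fun fun q => ?_
    simp [Fin.prod_univ_succ, Fin.consEquiv]

lemma summable_norm_monomialChar {d : ℕ} {x : Fin d → ℂ} (hx : ∀ j, ‖x j‖ < 1) :
    Summable fun β => ‖monomialChar x β‖ :=
  summable_norm_prod_apply fun j => summable_norm_geometric_of_norm_lt_one (hx j)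

lemma hasSum_monomialChar {d : ℕ} {x : Fin d → ℂ} (hx : ∀ j, ‖x j‖ < 1) :
    HasSum (monomialChar x) (∏ j, (1 - x j)⁻¹) :=
  hasSum_prod_apply (fun j => summable_norm_geometric_of_norm_lt_one (hx j))
    fun j => hasSum_geometric_of_norm_lt_one (hx j)

lemma hasSum_cauchyKernel {d : ℕ} {x ζ : Fin d → ℂ} (hx : ∀ j, ‖x j‖ < ‖ζ j‖) :
    HasSum (fun β => (∏ j, (ζ j)⁻¹) * monomialChar (fun j => x j / ζ j) β)
      (∏ j, (ζ j - x j)⁻¹) := by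
  have hζ (j : Fin d) : ζ j ≠ 0 := norm_pos_iff.mp ((norm_nonneg _).trans_lt (hx j))
  have hlt (j : Fin d) : ‖x j / ζ j‖ < 1 := by
    rw [norm_div]
    exact (div_lt_one (norm_pos_iff.mpr (hζ j))).mpr (hx j)
  have hprod : ∏ j, (ζ j - x j)⁻¹ = (∏ j, (ζ j)⁻¹) * ∏ j, (1 - x j / ζ j)⁻¹ := by
    rw [← Finset.prod_mul_distrib]
    refine Finset.prod_congr rfl fun j _ => ?_
    rw [← mul_inv, mul_one_sub, mul_div_cancel₀ _ (hζ j)]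
  rw [hprod]
  exact (hasSum_monomialChar hlt).mul_left _

end GeometricSeries

section Torus

open MeasureTheory Metric

variable {d : ℕ} {ρ : ℝ}

/-- The distinguished boundary `{|ζ_j| = ρ for all j}` of the polydisk of radius `ρ`. -/
def distinguishedBoundary (d : ℕ) (ρ : ℝ) : Set (Fin d → ℂ) := {ζ | ∀ j, ‖ζ j‖ = ρ}

lemma torusMap_mem_distinguishedBoundary (hρ : 0 ≤ ρ) (θ : Fin d → ℝ) :
    torusMap 0 (fun _ => ρ) θ ∈ distinguishedBoundary d ρ := fun j => by
  simp [torusMap, norm_exp_ofReal_mul_I, abs_of_nonneg hρ]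

lemma distinguishedBoundary_subset_closedBall (hρ : 0 ≤ ρ) :
    distinguishedBoundary d ρ ⊆ closedBall 0 ρ := fun _ hζ =>
  mem_closedBall_zero_iff.mpr ((pi_norm_le_iff_of_nonneg hρ).mpr fun j => (hζ j).le)

lemma torusIntegrable_of_continuousOn (hρ : 0 ≤ ρ) {F : (Fin d → ℂ) → ℂ}
    (hF : ContinuousOn F (distinguishedBoundary d ρ)) : TorusIntegrable F 0 fun _ => ρ := by
  have hmap : Continuous (torusMap (0 : Fin d → ℂ) fun _ => ρ) := by
    unfold torusMap
    fun_prop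
  exact (hF.comp_continuous hmap
    (torusMap_mem_distinguishedBoundary hρ)).continuousOn.integrableOn_compact isCompact_Icc

lemma hasSum_torusIntegral {κ : Type*} [Countable κ] (hρ : 0 ≤ ρ) {F : κ → (Fin d → ℂ) → ℂ}
    {G : (Fin d → ℂ) → ℂ} {u : κ → ℝ} (hu : Summable u)
    (hF : ∀ k, ContinuousOn (F k) (distinguishedBoundary d ρ))
    (hFu : ∀ k, ∀ ζ ∈ distinguishedBoundary d ρ, ‖F k ζ‖ ≤ u k)
    (hG : ∀ ζ ∈ distinguishedBoundary d ρ, HasSum (fun k => F k ζ) (G ζ)) :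
    HasSum (fun k => torusIntegral (F k) 0 fun _ => ρ) (torusIntegral G 0 fun _ => ρ) := by
  have hmem := torusMap_mem_distinguishedBoundary (d := d) hρ
  refine hasSum_integral_of_dominated_convergence (fun k _ => ρ ^ d * u k)
    (fun k => (torusIntegrable_of_continuousOn hρ (hF k)).function_integrable.1)
    (fun k => .of_forall fun θ => ?_) (.of_forall fun _ => hu.mul_left _) ?_
    (.of_forall fun θ => (hG _ (hmem θ)).const_smul _)
  · have hjac : ‖∏ i, (ρ : ℂ) * exp (θ i * I) * I‖ = ρ ^ d := by
      simp [norm_prod, norm_exp_ofReal_mul_I, abs_of_nonneg hρ]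
    rw [norm_smul, hjac]
    exact mul_le_mul_of_nonneg_left (hFu k _ (hmem θ)) (pow_nonneg hρ d)
  · exact continuous_const.integrableOn_Icc

lemma continuousOn_prod_sub_inv {x : Fin d → ℂ} (hx : ∀ j, ‖x j‖ < ρ) :
    ContinuousOn (fun ζ => ∏ j, (ζ j - x j)⁻¹) (distinguishedBoundary d ρ) := by
  refine continuousOn_finsetProd _ fun j _ => ContinuousOn.inv₀ (by fun_prop) fun ζ hζ h0 => ?_
  exact (hx j).ne (by rw [← sub_eq_zero.mp h0]; exact hζ j)

lemma cons_mem_closedBall (hρ : 0 ≤ ρ) {z : ℂ} {y : Fin d → ℂ} (hz : ‖z‖ ≤ ρ)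
    (hy : ∀ j, ‖y j‖ ≤ ρ) : (Fin.cons z y : Fin (d + 1) → ℂ) ∈ closedBall 0 ρ :=
  mem_closedBall_zero_iff.mpr ((pi_norm_le_iff_of_nonneg hρ).mpr (Fin.cases hz hy))

theorem torusIntegral_cauchyKernel_mul (hρ : 0 < ρ) {g : (Fin d → ℂ) → ℂ}
    (hg : DifferentiableOn ℂ g (closedBall 0 ρ)) {x : Fin d → ℂ} (hx : ∀ j, ‖x j‖ < ρ) :
    torusIntegral (fun ζ => (∏ j, (ζ j - x j)⁻¹) * g ζ) 0 (fun _ => ρ) =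
      (2 * Real.pi * I) ^ d * g x := by
  induction d with
  | zero => simp [Subsingleton.elim x 0]
  | succ d ih =>
    have hint : TorusIntegrable (fun ζ => (∏ j, (ζ j - x j)⁻¹) * g ζ) 0 fun _ => ρ :=
      torusIntegrable_of_continuousOn hρ.le ((continuousOn_prod_sub_inv hx).mul
        (hg.continuousOn.mono (distinguishedBoundary_subset_closedBall hρ.le)))
    have hinner (z : ℂ) (hz : z ∈ sphere (0 : ℂ) ρ) :
        torusIntegral (fun y : Fin d → ℂ => (∏ j, ((Fin.cons z y : Fin (d + 1) → ℂ) j - x j)⁻¹) *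
          g (Fin.cons z y)) 0 (fun _ => ρ) =
        (z - x 0)⁻¹ • ((2 * Real.pi * I) ^ d * g (Fin.cons z (Fin.tail x))) := by
      have hslice : DifferentiableOn ℂ (fun y => g (Fin.cons z y)) (closedBall (0 : Fin d → ℂ) ρ) :=
        hg.comp ((differentiableOn_const z).finCons differentiableOn_id) fun y hy =>
          cons_mem_closedBall hρ.le (mem_sphere_zero_iff_norm.mp hz).le fun j =>
            (norm_le_pi_norm y j).trans (mem_closedBall_zero_iff.mp hy)
      rw [← ih hslice (x := Fin.tail x) fun j => hx j.succ, smul_eq_mul, ← torusIntegral_const_mul]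
      simp only [Fin.prod_univ_succ, Fin.cons_zero, Fin.cons_succ, Fin.tail, mul_assoc]
    have houter : DifferentiableOn ℂ
        (fun z => (2 * Real.pi * I) ^ d * g (Fin.cons z (Fin.tail x))) (closedBall (0 : ℂ) ρ) :=
      (hg.comp (differentiableOn_id.finCons (differentiableOn_const _)) fun z hz =>
        cons_mem_closedBall hρ.le (mem_closedBall_zero_iff.mp hz) fun j =>
          (hx j.succ).le).const_mul _
    rw [← closure_ball 0 hρ.ne'] at houter
    rw [torusIntegral_succ hint]
    refine (circleIntegral.integral_congr hρ.le hinner).trans ?_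
    rw [houter.diffContOnCl.circleIntegral_sub_inv_smul (by simpa using hx 0), smul_eq_mul,
      ← mul_assoc, Fin.cons_self_tail x, pow_succ']

/-- The coefficient of `x^β` in the power series of `g`, given by Cauchy's integral over the
distinguished boundary of the polydisk of radius `ρ`. -/
def cauchyCoeff (g : (Fin d → ℂ) → ℂ) (ρ : ℝ) (β : Fin d → ℕ) : ℂ :=
  ((2 * Real.pi * I) ^ d)⁻¹ *
    torusIntegral (fun ζ => (∏ j, (ζ j)⁻¹) * (monomialChar ζ β)⁻¹ * g ζ) 0 fun _ => ρ

lemma cauchyCoeff_mul_monomialChar (g : (Fin d → ℂ) → ℂ) (ρ : ℝ) (x : Fin d → ℂ) (β : Fin d → ℕ) :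
    cauchyCoeff g ρ β * monomialChar x β = ((2 * Real.pi * I) ^ d)⁻¹ *
      torusIntegral (fun ζ => (∏ j, (ζ j)⁻¹) * monomialChar (fun j => x j / ζ j) β * g ζ) 0
        fun _ => ρ := by
  rw [cauchyCoeff, mul_assoc, mul_comm (torusIntegral _ _ _), ← torusIntegral_const_mul]
  congr! 3 with ζ
  rw [monomialChar_div, div_eq_mul_inv]
  ring

lemma hasSum_cauchyCoeff_mul_monomialChar (hρ : 0 < ρ) {g : (Fin d → ℂ) → ℂ}
    (hg : DifferentiableOn ℂ g (closedBall 0 ρ)) {x : Fin d → ℂ} (hx : ∀ j, ‖x j‖ < ρ) :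
    HasSum (fun β => cauchyCoeff g ρ β * monomialChar x β) (g x) := by
  have hgT : ContinuousOn g (distinguishedBoundary d ρ) :=
    hg.continuousOn.mono (distinguishedBoundary_subset_closedBall hρ.le)
  have hinv (j : Fin d) : ContinuousOn (fun ζ => (ζ j)⁻¹) (distinguishedBoundary d ρ) :=
    ContinuousOn.inv₀ (by fun_prop) fun ζ hζ => norm_pos_iff.mp ((hζ j).symm ▸ hρ)
  have hlt (j : Fin d) : ‖x j / ρ‖ < 1 := by
    rw [norm_div, norm_real, Real.norm_of_nonneg hρ.le]
    exact (div_lt_one hρ).mpr (hx j)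
  obtain ⟨M, hM⟩ := (isCompact_closedBall (0 : Fin d → ℂ) ρ).exists_bound_of_continuousOn
    hg.continuousOn
  have hkernel := hasSum_torusIntegral hρ.le (G := fun ζ => (∏ j, (ζ j - x j)⁻¹) * g ζ)
    (F := fun β ζ => (∏ j, (ζ j)⁻¹) * monomialChar (fun j => x j / ζ j) β * g ζ)
    (u := fun β => (∏ _j : Fin d, ρ⁻¹) * ‖monomialChar (fun j => x j / ρ) β‖ * M)
    (((summable_norm_monomialChar hlt).mul_left _).mul_right _)
    (fun β => ((continuousOn_finsetProd _ fun j _ => hinv j).mul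
      (continuousOn_finsetProd _ fun j _ => (continuousOn_const.mul (hinv j)).pow _)).mul hgT)
    (fun β ζ hζ => ?_) fun ζ hζ =>
      (hasSum_cauchyKernel fun j => by rw [hζ j]; exact hx j).mul_right _
  · rw [torusIntegral_cauchyKernel_mul hρ hg hx] at hkernel
    have hsum := hkernel.mul_left ((2 * Real.pi * I : ℂ) ^ d)⁻¹
    rw [inv_mul_cancel_left₀ (pow_ne_zero _ two_pi_I_ne_zero)] at hsum
    exact hsum.congr_fun fun β => cauchyCoeff_mul_monomialChar g ρ x β
  · have hnorm : ‖(∏ j, (ζ j)⁻¹) * monomialChar (fun j => x j / ζ j) β‖ =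
        (∏ _j : Fin d, ρ⁻¹) * ‖monomialChar (fun j => x j / ρ) β‖ := by
      simp only [norm_mul, norm_prod, norm_inv, norm_monomialChar, norm_div, hζ _, norm_real,
        Real.norm_of_nonneg hρ.le]
    rw [norm_mul, hnorm]
    exact mul_le_mul_of_nonneg_left (hM ζ (distinguishedBoundary_subset_closedBall hρ.le hζ))
      (by positivity)

theorem exists_hasMonomialSeries_of_differentiableOn {r t : ℝ} {g : (Fin d → ℂ) → ℂ}
    (hg : DifferentiableOn ℂ g (ball 0 r)) (ht : 0 ≤ t) (htr : t < r) :
    ∃ c, HasMonomialSeries (fun _ => t) g c := by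
  obtain ⟨ρ, htρ, hρr⟩ := exists_between htr
  exact ⟨cauchyCoeff g ρ, .of_hasSum (fun _ => ht) fun x hx =>
    hasSum_cauchyCoeff_mul_monomialChar (ht.trans_lt htρ) (hg.mono (closedBall_subset_ball hρr))
      fun j => (hx j).trans_lt htρ⟩

end Torus

section OneVariableQuotient

open Filter Topology Metric

variable {S : Set ℂ} {φ ψ : ℂ → ℂ}

lemma frequently_nhdsNE_apply_mem (hS : ∃ᶠ w in 𝓝[≠] 0, w ∈ S) {t₀ : ℂ} (hψ : AnalyticAt ℂ ψ t₀)
    (h0 : ψ t₀ = 0) (hne : ¬∀ᶠ t in 𝓝 t₀, ψ t = 0) : ∃ᶠ t in 𝓝[≠] t₀, ψ t ≠ 0 ∧ ψ t ∈ S := by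
  have hmap := hψ.eventually_constant_or_nhds_le_map_nhds.resolve_left (by rwa [h0])
  rw [h0] at hmap
  refine frequently_nhdsWithin_iff.mpr ?_
  refine (frequently_map.mp ((frequently_nhdsWithin_iff.mp hS).filter_mono hmap)).mono ?_
  rintro t ⟨hmem, hψt⟩
  exact ⟨⟨hψt, hmem⟩, fun ht => hψt (ht ▸ h0)⟩

lemma meromorphicOrderAt_nonneg_of_frequently_norm_le {F : ℂ → ℂ} {t₀ : ℂ} {C : ℝ}
    (hF : ∃ᶠ t in 𝓝[≠] t₀, ‖F t‖ ≤ C) : 0 ≤ meromorphicOrderAt F t₀ := by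
  by_contra! hneg
  have htop := tendsto_norm_atTop_iff_cobounded.mpr
    (tendsto_cobounded_of_meromorphicOrderAt_neg hneg)
  exact hF ((htop.eventually_gt_atTop C).mono fun _ => not_le.mpr)

lemma meromorphicOrderAt_div_pow_nonneg (hS : ∃ᶠ w in 𝓝[≠] 0, w ∈ S) {t₀ : ℂ}
    (hφ : AnalyticAt ℂ φ t₀) (hψ : AnalyticAt ℂ ψ t₀) (hne : ¬∀ᶠ t in 𝓝 t₀, ψ t = 0) {n : ℕ} {C : ℝ}
    (hb : ∀ᶠ t in 𝓝[≠] t₀, ψ t ∈ S → ‖φ t‖ ≤ C * ‖ψ t‖ ^ n) :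
    0 ≤ meromorphicOrderAt (fun t => φ t / ψ t ^ n) t₀ := by
  by_cases h0 : ψ t₀ = 0
  · refine meromorphicOrderAt_nonneg_of_frequently_norm_le (C := C) ?_
    refine ((frequently_nhdsNE_apply_mem hS hψ h0 hne).and_eventually hb).mono ?_
    rintro t ⟨⟨hψt, hmem⟩, hle⟩
    rw [norm_div, norm_pow]
    exact (div_le_iff₀ (pow_pos (norm_pos_iff.mpr hψt) n)).mpr (hle hmem)
  · exact (hφ.fun_div (hψ.fun_pow n) (pow_ne_zero n h0)).meromorphicOrderAt_nonneg

theorem exists_analyticOnNhd_mul_pow_eq (hS : ∃ᶠ w in 𝓝[≠] 0, w ∈ S) {U : Set ℂ}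
    (hφ : AnalyticOnNhd ℂ φ U) (hψ : AnalyticOnNhd ℂ ψ U)
    (hne : ∀ t₀ ∈ U, ¬∀ᶠ t in 𝓝 t₀, ψ t = 0) {n : ℕ} {C : ℝ}
    (hb : ∀ t₀ ∈ U, ∀ᶠ t in 𝓝[≠] t₀, ψ t ∈ S → ‖φ t‖ ≤ C * ‖ψ t‖ ^ n) :
    ∃ q, AnalyticOnNhd ℂ q U ∧ ∀ t ∈ U, q t * ψ t ^ n = φ t := by
  have hmero : MeromorphicOn (fun t => φ t / ψ t ^ n) U := fun t ht =>
    (hφ t ht).meromorphicAt.fun_div ((hψ t ht).meromorphicAt.fun_pow n)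
  set q := toMeromorphicNFOn (fun t => φ t / ψ t ^ n) U with hq
  have hqan : AnalyticOnNhd ℂ q U := fun t ht => by
    rw [← (meromorphicNFOn_toMeromorphicNFOn _ U ht).meromorphicOrderAt_nonneg_iff_analyticAt,
      meromorphicOrderAt_toMeromorphicNFOn hmero ht]
    exact meromorphicOrderAt_div_pow_nonneg hS (hφ t ht) (hψ t ht) (hne t ht) (hb t ht)
  refine ⟨q, hqan, fun t₀ ht₀ => ?_⟩
  have hψne := (hψ t₀ ht₀).eventually_eq_zero_or_eventually_ne_zero.resolve_left (hne t₀ ht₀)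
  have heq : ∀ᶠ t in 𝓝[≠] t₀, q t * ψ t ^ n = φ t := by
    filter_upwards [hmero.toMeromorphicNFOn_eq_self_on_nhdsNE ht₀, hψne] with t hqt hψt
    rw [hq, hqt, div_mul_cancel₀ _ (pow_ne_zero n hψt)]
  have hcont : ContinuousAt (fun t => q t * ψ t ^ n) t₀ :=
    ((hqan t₀ ht₀).fun_mul ((hψ t₀ ht₀).fun_pow n)).continuousAt
  exact tendsto_nhds_unique_of_eventuallyEq (hcont.tendsto.mono_left nhdsWithin_le_nhds)
    ((hφ t₀ ht₀).continuousAt.tendsto.mono_left nhdsWithin_le_nhds) heq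

theorem circleAverage_div_pow_mul_pow (hS : ∃ᶠ w in 𝓝[≠] 0, w ∈ S) {ε : ℝ} (hε : 0 ≤ ε)
    (hφ : AnalyticOnNhd ℂ φ (closedBall 0 ε)) (hψ : AnalyticOnNhd ℂ ψ (closedBall 0 ε))
    (hne : ∀ t ∈ sphere 0 ε, ψ t ≠ 0) {n : ℕ} {C : ℝ}
    (hb : ∀ t₀ ∈ closedBall 0 ε, ∀ᶠ t in 𝓝[≠] t₀, ψ t ∈ S → ‖φ t‖ ≤ C * ‖ψ t‖ ^ n) :
    Real.circleAverage (fun t => φ t / ψ t ^ n) 0 ε * ψ 0 ^ n = φ 0 := by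
  have hψne (t₀ : ℂ) (ht₀ : t₀ ∈ closedBall 0 ε) : ¬∀ᶠ t in 𝓝 t₀, ψ t = 0 := fun hev => by
    obtain ⟨t, ht⟩ := NormedSpace.sphere_nonempty (E := ℂ) (x := 0) |>.mpr hε
    exact hne t ht (hψ.eqOn_zero_of_preconnected_of_eventuallyEq_zero
      (convex_closedBall 0 ε).isPreconnected ht₀ hev (sphere_subset_closedBall ht))
  obtain ⟨q, hqan, hq⟩ := exists_analyticOnNhd_mul_pow_eq hS hφ hψ hψne hb
  have hqdiff : DiffContOnCl ℂ q (ball 0 |ε|) := by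
    refine (hqan.differentiableOn.mono ?_).diffContOnCl
    rw [abs_of_nonneg hε]
    exact closure_ball_subset_closedBall
  have havg : Real.circleAverage (fun t => φ t / ψ t ^ n) 0 ε = Real.circleAverage q 0 ε := by
    refine Real.circleAverage_congr_sphere fun t ht => ?_
    rw [abs_of_nonneg hε] at ht
    simp only [← hq t (sphere_subset_closedBall ht),
      mul_div_cancel_right₀ _ (pow_ne_zero n (hne t ht))]
  rw [havg, hqdiff.circleAverage, hq 0 (mem_closedBall_self hε)]

end OneVariableQuotient

section DivisibilityByPowers

open Filter Topology Metric

variable {E : Type*} [NormedAddCommGroup E] [NormedSpace ℂ E]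

lemma differentiableAt_circleAverage_add_smul {F : Type*} [NormedAddCommGroup F] [NormedSpace ℂ F]
    [CompleteSpace F] {K : E → F} {x₀ v : E} {ε : ℝ}
    (hK : ∀ t ∈ sphere (0 : ℂ) |ε|, AnalyticAt ℂ K (x₀ + t • v)) :
    DifferentiableAt ℂ (fun x => Real.circleAverage (fun t => K (x + t • v)) 0 ε) x₀ := by
  have hadd : Continuous fun z : E × ℂ => z.1 + z.2 • v := by fun_prop
  have hderiv : ContinuousOn (fun t : ℂ => fderiv ℂ K (x₀ + t • v)) (sphere 0 |ε|) := fun t ht =>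
    (ContinuousAt.comp' (f := fun t : ℂ => x₀ + t • v) (hK t ht).fderiv.continuousAt
      (by fun_prop)).continuousWithinAt
  obtain ⟨M, hM⟩ := (isCompact_sphere (0 : ℂ) |ε|).exists_bound_of_continuousOn hderiv
  have hnear : ∀ᶠ x in 𝓝 x₀, ∀ t ∈ sphere (0 : ℂ) |ε|,
      AnalyticAt ℂ K (x + t • v) ∧ ‖fderiv ℂ K (x + t • v)‖ < M + 1 := by
    refine (isCompact_sphere (0 : ℂ) |ε|).eventually_forall_of_forall_eventually fun t ht => ?_
    have hlt := (hK t ht).fderiv.continuousAt.norm.eventually_lt_const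
      ((hM t ht).trans_lt (lt_add_one M))
    exact (hadd.tendsto (x₀, t)).eventually ((hK t ht).eventually_analyticAt.and hlt)
  have hcirc (θ : ℝ) : circleMap 0 ε θ ∈ sphere (0 : ℂ) |ε| := circleMap_mem_sphere' 0 ε θ
  have hcont (x : E) (hx : ∀ t ∈ sphere (0 : ℂ) |ε|, AnalyticAt ℂ K (x + t • v)) :
      Continuous fun θ => K (x + circleMap 0 ε θ • v) := continuous_iff_continuousAt.mpr fun θ =>
    ContinuousAt.comp' (f := fun θ => x + circleMap 0 ε θ • v) (hx _ (hcirc θ)).continuousAt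
      (by fun_prop)
  have hcontDeriv : Continuous fun θ => fderiv ℂ K (x₀ + circleMap 0 ε θ • v) :=
    hderiv.comp_continuous (continuous_circleMap 0 ε) hcirc
  refine (intervalIntegral.hasFDerivAt_integral_of_dominated_of_fderiv_le (𝕜 := ℂ) hnear
    (F := fun x θ => K (x + circleMap 0 ε θ • v))
    (F' := fun x θ => fderiv ℂ K (x + circleMap 0 ε θ • v))
    (hnear.mono fun x hx => (hcont x fun t ht => (hx t ht).1).aestronglyMeasurable)
    ((hcont x₀ hK).intervalIntegrable _ _) hcontDeriv.aestronglyMeasurable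
    (.of_forall fun θ _ x hx => (hx _ (hcirc θ)).2.le) intervalIntegrable_const
    (.of_forall fun θ _ x hx => ?_)).differentiableAt.const_smul (2 * Real.pi)⁻¹
  exact (hasFDerivAt_comp_add_right _).mpr (hx _ (hcirc θ)).1.differentiableAt.hasFDerivAt

lemma exists_mem_dense_eventually_ne_zero {P : E → ℂ} {r : ℝ} (hP : AnalyticOnNhd ℂ P (ball 0 r))
    (hPne : ∃ x ∈ ball 0 r, P x ≠ 0) {D : Set E} (hD : Dense D) :
    ∃ v ∈ D, ∀ᶠ t : ℂ in 𝓝[≠] 0, P (t • v) ≠ 0 := by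
  have hopen : IsOpen (ball 0 r ∩ P ⁻¹' {0}ᶜ) :=
    hP.continuousOn.isOpen_inter_preimage isOpen_ball isOpen_compl_singleton
  obtain ⟨v, ⟨hvr, hPv⟩, hvD⟩ := hD.inter_open_nonempty _ hopen hPne
  have hr : 0 < r := pos_of_mem_ball hvr
  have hconv : Convex ℝ ((fun t : ℂ => t • v) ⁻¹' ball 0 r) :=
    (convex_ball (0 : E) r).is_linear_preimage
      ((ContinuousLinearMap.toSpanSingleton ℂ v).restrictScalars ℝ).isLinear
  have hline : AnalyticOnNhd ℂ (fun t : ℂ => P (t • v)) ((fun t : ℂ => t • v) ⁻¹' ball 0 r) :=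
    fun t ht => AnalyticAt.fun_comp (f := fun t : ℂ => t • v) (hP _ ht) (by fun_prop)
  have h0 : (0 : ℂ) ∈ (fun t : ℂ => t • v) ⁻¹' ball 0 r := by simpa using hr
  refine ⟨v, hvD, (hline 0 h0).eventually_eq_zero_or_eventually_ne_zero.resolve_left fun h => ?_⟩
  refine hPv (?_ : P v = 0)
  simpa using hline.eqOn_zero_of_preconnected_of_eventuallyEq_zero hconv.isPreconnected h0 h
    (show (1 : ℂ) ∈ _ by simpa using hvr)

lemma exists_circle_avoiding_zeros {P : E → ℂ} {r : ℝ} (hr : 0 < r)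
    (hP : AnalyticOnNhd ℂ P (ball 0 r)) {v : E} (hv : ∀ᶠ t : ℂ in 𝓝[≠] 0, P (t • v) ≠ 0) :
    ∃ ε > 0, ∀ᶠ x in 𝓝 (0 : E), (∀ t ∈ closedBall (0 : ℂ) ε, x + t • v ∈ ball 0 r) ∧
      ∀ t ∈ sphere (0 : ℂ) ε, P (x + t • v) ≠ 0 := by
  have hball : ∀ᶠ t : ℂ in 𝓝 0, t • v ∈ ball (0 : E) r :=
    (by fun_prop : Continuous fun t : ℂ => t • v).continuousAt.eventually_mem
      (by simpa using ball_mem_nhds (0 : E) hr)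
  obtain ⟨η, hη, hnear⟩ := Metric.eventually_nhds_iff.mp
    (hball.and (eventually_nhdsWithin_iff.mp hv))
  have hlt {t : ℂ} (ht : t ∈ closedBall 0 (η / 2)) : dist t 0 < η :=
    (mem_closedBall.mp ht).trans_lt (half_lt_self hη)
  have hadd (t : ℂ) : Tendsto (fun z : E × ℂ => z.1 + z.2 • v) (𝓝 (0, t)) (𝓝 (t • v)) := by
    simpa using (by fun_prop : Continuous fun z : E × ℂ => z.1 + z.2 • v).tendsto (0, t)
  refine ⟨η / 2, half_pos hη,
    ((isCompact_closedBall 0 _).eventually_forall_of_forall_eventually fun t ht => ?_).and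
    ((isCompact_sphere 0 _).eventually_forall_of_forall_eventually fun t ht => ?_)⟩
  · exact (hadd t).eventually_mem (isOpen_ball.mem_nhds (hnear (hlt ht)).1)
  · obtain ⟨hmem, hPt⟩ := hnear (hlt (sphere_subset_closedBall ht))
    exact (hadd t).eventually
      ((hP _ hmem).continuousAt.eventually_ne (hPt (ne_of_mem_sphere ht (half_pos hη).ne')))

lemma circleAverage_add_smul_div_pow_mul_pow {S : Set ℂ} (hS : ∃ᶠ w in 𝓝[≠] 0, w ∈ S)
    {P h : E → ℂ} {x v : E} {ε : ℝ} (hε : 0 ≤ ε)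
    (hh : ∀ t ∈ closedBall (0 : ℂ) ε, AnalyticAt ℂ h (x + t • v))
    (hP : ∀ t ∈ closedBall (0 : ℂ) ε, AnalyticAt ℂ P (x + t • v))
    (hPne : ∀ t ∈ sphere (0 : ℂ) ε, P (x + t • v) ≠ 0) {n : ℕ} {C : ℝ}
    (hb : ∀ t₀ ∈ closedBall (0 : ℂ) ε, ∀ᶠ t in 𝓝[≠] t₀,
      P (x + t • v) ∈ S → ‖h (x + t • v)‖ ≤ C * ‖P (x + t • v)‖ ^ n) :
    Real.circleAverage (fun t => h (x + t • v) / P (x + t • v) ^ n) 0 ε * P x ^ n = h x := by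
  have hline (t : ℂ) : AnalyticAt ℂ (fun t : ℂ => x + t • v) t := by fun_prop
  simpa using circleAverage_div_pow_mul_pow hS hε
    (fun t ht => AnalyticAt.fun_comp (f := fun t : ℂ => x + t • v) (hh t ht) (hline t))
    (fun t ht => AnalyticAt.fun_comp (f := fun t : ℂ => x + t • v) (hP t ht) (hline t)) hPne hb

lemma eventually_nhdsNE_add_smul_apply_ne_zero {ι : Type*} [Finite ι] (x : ι → ℂ) {v : ι → ℂ}
    (hv : ∀ j, v j ≠ 0) (t₀ : ℂ) : ∀ᶠ t in 𝓝[≠] t₀, ∀ j, (x + t • v) j ≠ 0 := by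
  refine eventually_all.mpr fun j => nhdsNE_le_cofinite t₀ (Set.Subsingleton.finite ?_)
  intro s hs t ht
  simp only [mem_compl_iff, mem_ofPred_eq, not_not, Pi.add_apply, Pi.smul_apply,
    smul_eq_mul] at hs ht
  exact mul_right_cancel₀ (hv j) (add_left_cancel (hs.trans ht.symm))

theorem exists_differentiableOn_mul_pow_eq {ι : Type*} [Fintype ι] {S : Set ℂ}
    (hS : ∃ᶠ w in 𝓝[≠] 0, w ∈ S) {P : (ι → ℂ) → ℂ} {r : ℝ} (hP : AnalyticOnNhd ℂ P (ball 0 r))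
    (hPne : ∃ x ∈ ball 0 r, P x ≠ 0) :
    ∃ ρ > 0, ∀ (n : ℕ) (C : ℝ) (h : (ι → ℂ) → ℂ), AnalyticOnNhd ℂ h (ball 0 r) →
      (∀ x ∈ ball 0 r, (∀ j, x j ≠ 0) → P x ∈ S → ‖h x‖ ≤ C * ‖P x‖ ^ n) →
      ∃ u, DifferentiableOn ℂ u (ball 0 ρ) ∧ ∀ x ∈ ball 0 ρ, u x * P x ^ n = h x := by
  have hdense : Dense {x : ι → ℂ | ∀ j, x j ≠ 0} := by
    simpa [Set.pi] using dense_pi univ fun (_ : ι) _ => dense_compl_singleton (0 : ℂ)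
  obtain ⟨v, hv, hPv⟩ := exists_mem_dense_eventually_ne_zero hP hPne hdense
  obtain ⟨x₀, hx₀, -⟩ := hPne
  obtain ⟨ε, hε, hnear⟩ := exists_circle_avoiding_zeros (pos_of_mem_ball hx₀) hP hPv
  obtain ⟨ρ, hρ, hball⟩ := Metric.eventually_nhds_iff_ball.mp hnear
  refine ⟨ρ, hρ, fun n C h hh hb => ⟨fun x =>
    Real.circleAverage (fun t => h (x + t • v) / P (x + t • v) ^ n) 0 ε, fun x hx => ?_,
    fun x hx => ?_⟩⟩
  all_goals obtain ⟨hmem, hne⟩ := hball x hx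
  · refine (differentiableAt_circleAverage_add_smul (K := fun y => h y / P y ^ n)
      fun t ht => ?_).differentiableWithinAt
    rw [abs_of_pos hε] at ht
    have ht' := hmem t (sphere_subset_closedBall ht)
    exact (hh _ ht').fun_div ((hP _ ht').fun_pow n) (pow_ne_zero n (hne t ht))
  · refine circleAverage_add_smul_div_pow_mul_pow hS hε.le (fun t ht => hh _ (hmem t ht))
      (fun t ht => hP _ (hmem t ht)) hne (C := C) fun t₀ ht₀ => ?_
    have hin : ∀ᶠ t in 𝓝 t₀, x + t • v ∈ ball 0 r :=
      (by fun_prop : Continuous fun t : ℂ => x + t • v).continuousAt.eventually_mem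
        (isOpen_ball.mem_nhds (hmem t₀ ht₀))
    filter_upwards [nhdsWithin_le_nhds hin, eventually_nhdsNE_add_smul_apply_ne_zero x hv t₀]
      with t htr ht0 using hb _ htr ht0

end DivisibilityByPowers

section DominantExponent

open Filter Topology

lemma tendsto_rpow_nhdsGT_zero {e : ℝ} (he : 0 < e) :
    Tendsto (fun σ : ℝ => σ ^ e) (𝓝[>] 0) (𝓝 0) := by
  have h := (Real.continuousAt_rpow_const 0 e (.inr he.le)).tendsto
  rw [Real.zero_rpow he.ne'] at h
  exact h.mono_left nhdsWithin_le_nhds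

lemma tendsto_tsum_mul_rpow_nhdsGT_zero {κ : Type*} {w e : κ → ℝ} {a : κ} (ha : e a = 0)
    (he : ∀ β ≠ a, w β ≠ 0 → 0 < e β) {σ₀ : ℝ} (hσ₀ : 0 < σ₀)
    (hsum : Summable fun β => |w β| * σ₀ ^ e β) :
    Tendsto (fun σ : ℝ => ∑' β, w β * σ ^ e β) (𝓝[>] 0) (𝓝 (w a)) := by
  classical
  rw [← tsum_pi_single a (w a)]
  refine tendsto_tsum_of_dominated_convergence hsum (fun β => ?_) ?_
  · rcases eq_or_ne β a with rfl | hβ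
    · simp [ha]
    · rw [Pi.single_eq_of_ne hβ]
      by_cases hw : w β = 0
      · simp [hw]
      · simpa using (tendsto_rpow_nhdsGT_zero (he β hβ hw)).const_mul (w β)
  · filter_upwards [Ioo_mem_nhdsGT hσ₀] with σ hσ β
    rw [norm_mul, Real.norm_eq_abs, Real.norm_of_nonneg (Real.rpow_nonneg hσ.1.le _)]
    by_cases hw : w β = 0
    · simp [hw]
    · have hnonneg : 0 ≤ e β := by
        rcases eq_or_ne β a with rfl | hβ
        exacts [ha.ge, (he β hβ hw).le]
      exact mul_le_mul_of_nonneg_left (Real.rpow_le_rpow hσ.1.le hσ.2.le hnonneg) (abs_nonneg _)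

variable {ι : Type*} [Fintype ι]

lemma monomialChar_rpow (ℓ : ι → ℝ) {σ : ℝ} (hσ : 0 < σ) (β : ι → ℕ) :
    monomialChar (fun j => σ ^ ℓ j) β = σ ^ ∑ j, ℓ j * (β j : ℝ) := by
  rw [monomialChar_apply, Real.rpow_sum_of_pos hσ]
  exact Finset.prod_congr rfl fun j _ => (Real.rpow_mul_natCast hσ.le _ _).symm

/-- The polyradii `s_j = σ ^ ℓ_j` with `σ → 0` give `x^β` the weight `σ ^ ℓ(β)`. -/
theorem HasMonomialSeries.exists_isDominantExponent {r : ℝ} (hr : 0 < r) {P : (ι → ℂ) → ℂ}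
    {p : (ι → ℕ) → ℂ} (hP : HasMonomialSeries (fun _ => r) P p) {ℓ : ι → ℝ} (hℓ : ∀ j, 0 < ℓ j)
    {a : ι → ℕ} (ha : p a ≠ 0)
    (hmin : ∀ β ≠ a, p β ≠ 0 → ∑ j, ℓ j * (a j : ℝ) < ∑ j, ℓ j * (β j : ℝ)) :
    ∃ s : ι → ℝ, (∀ j, 0 < s j) ∧ (∀ j, s j ≤ r) ∧ IsDominantExponent s p a := by
  set L : (ι → ℕ) → ℝ := fun β => ∑ j, ℓ j * (β j : ℝ)
  have hsmall : ∀ᶠ σ : ℝ in 𝓝[>] 0, 0 < σ ∧ ∀ j, σ ^ ℓ j ≤ r :=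
    eventually_mem_nhdsWithin.and (eventually_all.mpr fun j =>
      (tendsto_rpow_nhdsGT_zero (hℓ j)).eventually_le_const hr)
  have hterm {σ : ℝ} (hσ : 0 < σ) (β : ι → ℕ) :
      ‖p β‖ * monomialChar (fun j => σ ^ ℓ j) β = ‖p β‖ * σ ^ (L β - L a) * σ ^ L a := by
    rw [monomialChar_rpow ℓ hσ, mul_assoc, ← Real.rpow_add hσ, sub_add_cancel]
  obtain ⟨σ₀, hσ₀, hσ₀r⟩ := hsmall.exists
  have hsum : Summable fun β => ‖p β‖ * σ₀ ^ (L β - L a) := by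
    have h := (hP.mono (fun j => Real.rpow_nonneg hσ₀.le (ℓ j)) hσ₀r).summable
    simpa only [hterm hσ₀, summable_mul_right_iff (Real.rpow_pos_of_pos hσ₀ _).ne'] using h
  have hlim : Tendsto (fun σ : ℝ => ∑' β, ‖p β‖ * σ ^ (L β - L a)) (𝓝[>] 0) (𝓝 ‖p a‖) :=
    tendsto_tsum_mul_rpow_nhdsGT_zero (sub_self _)
      (fun β hβ hp => sub_pos.mpr (hmin β hβ (norm_ne_zero_iff.mp hp))) hσ₀
      (by simpa only [abs_norm] using hsum)
  have hlt : ‖p a‖ < 2 * ‖p a‖ := lt_two_mul_self (norm_pos_iff.mpr ha)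
  obtain ⟨σ, ⟨hσ, hσr⟩, hσlt⟩ := (hsmall.and (hlim.eventually_lt_const hlt)).exists
  refine ⟨fun j => σ ^ ℓ j, fun j => Real.rpow_pos_of_pos hσ _, hσr, ?_⟩
  rw [IsDominantExponent, monomialChar_rpow ℓ hσ, ← mul_assoc]
  simp only [hterm hσ, tsum_mul_right]
  exact mul_lt_mul_of_pos_right hσlt (Real.rpow_pos_of_pos hσ _)

end DominantExponent

section StandardForm

open Filter Topology Metric

theorem HasMonomialSeries.exists_remainder_expansion {ι : Type*} [Fintype ι] {s : ι → ℝ}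
    (hs : ∀ j, 0 < s j) {P : (ι → ℂ) → ℂ} {p : (ι → ℕ) → ℂ} {a : ι → ℕ}
    (hP : HasMonomialSeries s P p) (ha : IsDominantExponent s p a) {F u : ℕ → (ι → ℂ) → ℂ}
    (hF : ∃ c, HasMonomialSeries s (F 0) c) (hu : ∀ n, ∃ c, HasMonomialSeries s (u n) c)
    (hFu : ∀ n x, (∀ j, ‖x j‖ ≤ s j) → F (n + 1) x = F n x + u n x * P x ^ n) :
    ∃ (g Q : ℕ → (ι → ℂ) → ℂ) (cg cQ : ℕ → (ι → ℕ) → ℂ),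
      (∀ n, HasMonomialSeries s (g n) (cg n)) ∧ (∀ n, HasMonomialSeries s (Q n) (cQ n)) ∧
      (∀ n γ, cg n (γ + a) = 0) ∧
      ∀ N x, (∀ j, ‖x j‖ ≤ s j) →
        F N x = ∑ n ∈ Finset.range N, g n x * P x ^ n + Q N x * P x ^ N := by
  choose cu hu using hu
  obtain ⟨cF, hF⟩ := hF
  have hdiv (h : {h : (ι → ℂ) → ℂ // ∃ c, HasMonomialSeries s h c}) :=
    h.2.elim fun _ hc => hP.exists_division hs ha hc
  choose quot rem cquot crem hquot hrem hcrem hdiv using hdiv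
  let addU (h : {h : (ι → ℂ) → ℂ // ∃ c, HasMonomialSeries s h c}) (n : ℕ) :
      {h : (ι → ℂ) → ℂ // ∃ c, HasMonomialSeries s h c} :=
    ⟨h.1 + u n, h.2.elim fun _ hc => ⟨_, hc.add (hu n) fun j => (hs j).le⟩⟩
  let Q : ℕ → {h : (ι → ℂ) → ℂ // ∃ c, HasMonomialSeries s h c} :=
    Nat.rec ⟨F 0, cF, hF⟩ fun n h => ⟨quot (addU h n), _, hquot (addU h n)⟩
  choose cQ hQ using fun n => (Q n).2
  refine ⟨fun n => rem (addU (Q n) n), fun n => (Q n).1, _, cQ, fun n => hrem _, hQ,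
    fun n => hcrem _, fun N x hx => ?_⟩
  induction N with
  | zero => simp [Q]
  | succ N ih =>
    have hstep : (Q N).1 x + u N x = (Q (N + 1)).1 x * P x + rem (addU (Q N) N) x :=
      hdiv (addU (Q N) N) x hx
    rw [hFu N x hx, ih, Finset.sum_range_succ]
    linear_combination P x ^ N * hstep

theorem exists_differentiableOn_succ_eq_add_mul_pow {ι : Type*} [Fintype ι] {S : Set ℂ}
    (hS : ∃ᶠ w in 𝓝[≠] 0, w ∈ S) {P : (ι → ℂ) → ℂ} {r : ℝ} (hr : 0 < r)
    (hP : AnalyticOnNhd ℂ P (ball 0 r)) (hPne : ∃ᶠ x in 𝓝 0, P x ≠ 0)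
    {f : (ι → ℂ) → ℂ} {F : ℕ → (ι → ℂ) → ℂ} (hF : ∀ n, AnalyticOnNhd ℂ (F n) (ball 0 r))
    {K : ℕ → ℝ} (hest : ∀ n, ∀ x ∈ ball 0 r, (∀ j, x j ≠ 0) → P x ∈ S →
      ‖f x - F n x‖ ≤ K n * ‖P x‖ ^ n) :
    ∃ ρ > 0, ∀ n, ∃ u, DifferentiableOn ℂ u (ball 0 ρ) ∧
      ∀ x ∈ ball 0 ρ, F (n + 1) x = F n x + u x * P x ^ n := by
  have hsub : ball (0 : ι → ℂ) (r / 2) ⊆ ball 0 r := ball_subset_ball (half_le_self hr.le)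
  obtain ⟨M, hM⟩ := (isCompact_closedBall (0 : ι → ℂ) (r / 2)).exists_bound_of_continuousOn
    (hP.continuousOn.mono (closedBall_subset_ball (half_lt_self hr)))
  obtain ⟨x₀, hPx₀, hx₀⟩ := (hPne.and_eventually (ball_mem_nhds 0 (half_pos hr))).exists
  obtain ⟨ρ, hρ, hdiv⟩ := exists_differentiableOn_mul_pow_eq hS (hP.mono hsub) ⟨x₀, hx₀, hPx₀⟩
  refine ⟨ρ, hρ, fun n => ?_⟩
  have hbound (x : ι → ℂ) (hx : x ∈ ball 0 (r / 2)) (hx0 : ∀ j, x j ≠ 0) (hxS : P x ∈ S) :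
      ‖F (n + 1) x - F n x‖ ≤ (K n + |K (n + 1)| * M) * ‖P x‖ ^ n := calc
    ‖F (n + 1) x - F n x‖ = ‖(f x - F n x) - (f x - F (n + 1) x)‖ := by
        rw [sub_sub_sub_cancel_left]
    _ ≤ K n * ‖P x‖ ^ n + K (n + 1) * ‖P x‖ ^ (n + 1) :=
        norm_sub_le_of_le (hest n x (hsub hx) hx0 hxS) (hest (n + 1) x (hsub hx) hx0 hxS)
    _ = (K n + K (n + 1) * ‖P x‖) * ‖P x‖ ^ n := by ring
    _ ≤ (K n + |K (n + 1)| * M) * ‖P x‖ ^ n := by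
        gcongr
        · exact le_abs_self _
        · exact hM x (ball_subset_closedBall hx)
  obtain ⟨u, hu, hueq⟩ := hdiv n _ (fun x => F (n + 1) x - F n x)
    (fun x hx => (hF (n + 1) x (hsub hx)).fun_sub (hF n x (hsub hx))) hbound
  exact ⟨u, hu, fun x hx => by rw [hueq x hx, add_sub_cancel]⟩

variable {d : ℕ} {P : (Fin d → ℂ) → ℂ} {a : Fin d → ℕ}

lemma frequently_ne_zero_of_mixedPartial_ne_zero (ha : mixedPartial a P 0 ≠ 0) :
    ∃ᶠ x in 𝓝 0, P x ≠ 0 := fun hP => by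
  obtain ⟨r, hr, hP⟩ := Metric.eventually_nhds_iff_ball.mp hP
  have hzero : HasMonomialSeries (fun _ => r / 2) P 0 :=
    .of_hasSum (fun _ => (half_pos hr).le) fun x hx => by
      have hxr : x ∈ ball 0 r := mem_ball_zero_iff.mpr
        (((pi_norm_le_iff_of_nonneg (half_pos hr).le).mpr hx).trans_lt (half_lt_self hr))
      simp [not_not.mp (hP x hxr)]
  exact ha ((hzero.mixedPartial_zero_eq_zero_iff (half_pos hr) a).mpr rfl)

theorem exists_standard_expansion {ℓ : Fin d → ℝ} (hℓ : ∀ j, 0 < ℓ j)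
    (ha : mixedPartial a P 0 ≠ 0)
    (hmin : ∀ β, mixedPartial β P 0 ≠ 0 → β ≠ a → ∑ j, ℓ j * (a j : ℝ) < ∑ j, ℓ j * (β j : ℝ))
    {r : ℝ} (hr : 0 < r) (hP : DifferentiableOn ℂ P (ball 0 r))
    {F u : ℕ → (Fin d → ℂ) → ℂ} (hF : DifferentiableOn ℂ (F 0) (ball 0 r))
    (hu : ∀ n, DifferentiableOn ℂ (u n) (ball 0 r))
    (hFu : ∀ n, ∀ x ∈ ball 0 r, F (n + 1) x = F n x + u n x * P x ^ n) :
    ∃ ρ ∈ Ioc 0 r, ∃ (g Q : ℕ → (Fin d → ℂ) → ℂ) (cg cQ : ℕ → (Fin d → ℕ) → ℂ),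
      (∀ n, HasMonomialSeries (fun _ => ρ) (g n) (cg n)) ∧
      (∀ n, HasMonomialSeries (fun _ => ρ) (Q n) (cQ n)) ∧ (∀ n γ, cg n (γ + a) = 0) ∧
      ∀ N, ∀ x ∈ ball 0 ρ, F N x = ∑ n ∈ Finset.range N, g n x * P x ^ n + Q N x * P x ^ N := by
  have ht : 0 < r / 2 := half_pos hr
  have series {h : (Fin d → ℂ) → ℂ} (hh : DifferentiableOn ℂ h (ball 0 r)) :=
    exists_hasMonomialSeries_of_differentiableOn hh ht.le (half_lt_self hr)
  obtain ⟨p, hp⟩ := series hP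
  have hpne (β : Fin d → ℕ) : p β ≠ 0 ↔ mixedPartial β P 0 ≠ 0 :=
    (hp.mixedPartial_zero_eq_zero_iff ht β).not.symm
  obtain ⟨s, hs, hst, hdom⟩ := hp.exists_isDominantExponent ht hℓ ((hpne a).mpr ha)
    fun β hβ hpβ => hmin β ((hpne β).mp hpβ) hβ
  have restrict {h : (Fin d → ℂ) → ℂ} (hh : DifferentiableOn ℂ h (ball 0 r)) :
      ∃ c, HasMonomialSeries s h c :=
    (series hh).imp fun _ hc => hc.mono (fun j => (hs j).le) hst
  have hball {x : Fin d → ℂ} (hx : ∀ j, ‖x j‖ ≤ s j) : x ∈ ball 0 r := mem_ball_zero_iff.mpr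
    (((pi_norm_le_iff_of_nonneg ht.le).mpr fun j => (hx j).trans (hst j)).trans_lt
      (half_lt_self hr))
  obtain ⟨g, Q, cg, cQ, hg, hQ, hcg, hexp⟩ :=
    (hp.mono (fun j => (hs j).le) hst).exists_remainder_expansion hs hdom (restrict hF)
      (fun n => restrict (hu n)) fun n x hx => hFu n x (hball hx)
  obtain ⟨ρ, hρ, hρs⟩ : ∃ ρ ∈ Ioc 0 r, ∀ j, ρ ≤ s j :=
    (Filter.Eventually.and (Ioc_mem_nhdsGT hr) (eventually_all.mpr fun j =>
      nhdsWithin_le_nhds (eventually_le_nhds (hs j)))).exists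
  exact ⟨ρ, hρ, g, Q, cg, cQ, fun n => (hg n).mono (fun _ => hρ.1.le) hρs,
    fun n => (hQ n).mono (fun _ => hρ.1.le) hρs, hcg, fun N x hx => hexp N x fun j =>
      ((norm_le_pi_norm x j).trans (mem_ball_zero_iff.mp hx).le).trans (hρs j)⟩

theorem exists_standard_expansion_of_norm_sub_le {ℓ : Fin d → ℝ} (hℓ : ∀ j, 0 < ℓ j)
    (ha : mixedPartial a P 0 ≠ 0)
    (hmin : ∀ β, mixedPartial β P 0 ≠ 0 → β ≠ a → ∑ j, ℓ j * (a j : ℝ) < ∑ j, ℓ j * (β j : ℝ))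
    {S : Set ℂ} (hS : ∃ᶠ w in 𝓝[≠] 0, w ∈ S) {r : ℝ} (hr : 0 < r)
    (hP : AnalyticOnNhd ℂ P (ball 0 r)) {f : (Fin d → ℂ) → ℂ} {F : ℕ → (Fin d → ℂ) → ℂ}
    (hF : ∀ n, AnalyticOnNhd ℂ (F n) (ball 0 r)) {K : ℕ → ℝ}
    (hest : ∀ n, ∀ x ∈ ball 0 r, (∀ j, x j ≠ 0) → P x ∈ S →
      ‖f x - F n x‖ ≤ K n * ‖P x‖ ^ n) :
    ∃ ρ ∈ Ioc 0 r, ∃ (g Q : ℕ → (Fin d → ℂ) → ℂ) (cg cQ : ℕ → (Fin d → ℕ) → ℂ),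
      (∀ n, HasMonomialSeries (fun _ => ρ) (g n) (cg n)) ∧
      (∀ n, HasMonomialSeries (fun _ => ρ) (Q n) (cQ n)) ∧ (∀ n γ, cg n (γ + a) = 0) ∧
      ∀ N, ∀ x ∈ ball 0 ρ, F N x = ∑ n ∈ Finset.range N, g n x * P x ^ n + Q N x * P x ^ N := by
  obtain ⟨ρ', hρ', hu⟩ := exists_differentiableOn_succ_eq_add_mul_pow hS hr hP
    (frequently_ne_zero_of_mixedPartial_ne_zero ha) hF hest
  choose u hu hFu using hu
  have hsub : ball (0 : Fin d → ℂ) (min r ρ') ⊆ ball 0 r := ball_subset_ball (min_le_left _ _)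
  have hsub' : ball (0 : Fin d → ℂ) (min r ρ') ⊆ ball 0 ρ' := ball_subset_ball (min_le_right _ _)
  obtain ⟨ρ, ⟨hρ, hρr⟩, hexp⟩ := exists_standard_expansion hℓ ha hmin (lt_min hr hρ')
    (hP.mono hsub).differentiableOn ((hF 0).mono hsub).differentiableOn
    (fun n => (hu n).mono hsub') fun n x hx => hFu n x (hsub' hx)
  exact ⟨ρ, ⟨hρ, hρr.trans (min_le_left _ _)⟩, hexp⟩

lemma polydisk_eq_ball {r : ℝ} (hr : 0 < r) : polydisk d r = ball 0 r := by
  ext x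
  rw [mem_ball_zero_iff, pi_norm_lt_iff hr]
  rfl

/-- The part of the polydisk of radius `r`, off the coordinate hyperplanes, on which `P` takes
values in `S`. A `P`-sector is the case where `S` is an angular sector. -/
def valueSector (P : (Fin d → ℂ) → ℂ) (S : Set ℂ) (r : ℝ) : Set (Fin d → ℂ) :=
  {x | (∀ j, 0 < ‖x j‖ ∧ ‖x j‖ < r) ∧ P x ∈ S}

/-- The open sector in `ℂ \ {0}` of the points having an argument in `(α, β)`. -/
def angularSector (α β : ℝ) : Set ℂ :=
  {w | w ≠ 0 ∧ ∃ θ ∈ Ioo α β, w = (‖w‖ : ℂ) * exp (θ * I)}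

lemma frequently_mem_angularSector {α β : ℝ} (h : α < β) :
    ∃ᶠ w in 𝓝[≠] 0, w ∈ angularSector α β := by
  obtain ⟨θ, hθ⟩ := nonempty_Ioo.mpr h
  have hray : Tendsto (fun t : ℝ => (t : ℂ) * exp (θ * I)) (𝓝[>] 0) (𝓝[≠] 0) := by
    refine tendsto_nhdsWithin_iff.mpr ⟨tendsto_nhdsWithin_of_tendsto_nhds ?_, ?_⟩
    · simpa using (by fun_prop : Continuous fun t : ℝ => (t : ℂ) * exp (θ * I)).tendsto 0
    · filter_upwards [self_mem_nhdsWithin] with t (ht : 0 < t)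
      exact mul_ne_zero (ofReal_ne_zero.mpr ht.ne') (exp_ne_zero _)
  refine hray.frequently (Eventually.frequently ?_)
  filter_upwards [self_mem_nhdsWithin] with t (ht : 0 < t)
  refine ⟨mul_ne_zero (ofReal_ne_zero.mpr ht.ne') (exp_ne_zero _), θ, hθ, ?_⟩
  rw [norm_mul, norm_exp_ofReal_mul_I, mul_one, norm_real, Real.norm_of_nonneg ht.le]

end StandardForm

end PAsymptotic

open Filter Topology Metric PAsymptotic in
theorem standard_form_of_P_asymptotic_expansions_general {d : ℕ} {ℓ : Fin d → ℝ}
    (hℓ : ∀ j, 0 < ℓ j) {R : ℝ} (hR : 0 < R) {P : (Fin d → ℂ) → ℂ}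
    (hP : AnalyticOnNhd ℂ P (polydisk d R)) {a : Fin d → ℕ} (ha : mixedPartial a P 0 ≠ 0)
    (hmin : ∀ β, mixedPartial β P 0 ≠ 0 → β ≠ a → ∑ j, ℓ j * (a j : ℝ) < ∑ j, ℓ j * (β j : ℝ))
    {S : Set ℂ} (hS : ∃ᶠ w in 𝓝[≠] 0, w ∈ S) {f : (Fin d → ℂ) → ℂ} {ρ₁ : ℝ} (hρ₁ : 0 < ρ₁)
    {F : ℕ → (Fin d → ℂ) → ℂ} (hF : ∀ n, AnalyticOnNhd ℂ (F n) (polydisk d ρ₁)) {K : ℕ → ℝ}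
    (hest : ∀ n, ∀ x ∈ valueSector P S R ∩ polydisk d ρ₁, ‖f x - F n x‖ ≤ K n * ‖P x‖ ^ n) :
    ∃ ρ > 0, ∃ g : ℕ → (Fin d → ℂ) → ℂ, ∃ L : ℕ → ℝ,
      (∀ n, AnalyticOnNhd ℂ (g n) (polydisk d ρ)) ∧
      (∀ n, ∃ M, ∀ x ∈ polydisk d ρ, ‖g n x‖ ≤ M) ∧
      (∀ n, ∀ β : Fin d → ℕ, (∀ j, a j ≤ β j) → mixedPartial β (g n) 0 = 0) ∧
      (∀ N, 0 < L N) ∧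
      ∀ N, ∀ x ∈ valueSector P S R ∩ polydisk d ρ,
        ‖f x - ∑ n ∈ Finset.range N, g n x * P x ^ n‖ ≤ L N * ‖P x‖ ^ N := by
  have hr : 0 < min R ρ₁ := lt_min hR hρ₁
  rw [polydisk_eq_ball hR] at hP
  simp only [polydisk_eq_ball hρ₁] at hF hest
  have hsub : ball (0 : Fin d → ℂ) (min R ρ₁) ⊆ ball 0 ρ₁ := ball_subset_ball (min_le_right _ _)
  obtain ⟨ρ, ⟨hρ, hρr⟩, g, Q, cg, cQ, hg, hQ, hcg, hexp⟩ :=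
    exists_standard_expansion_of_norm_sub_le hℓ ha hmin hS hr
      (hP.mono (ball_subset_ball (min_le_left _ _))) (fun n => (hF n).mono hsub)
      fun n x hx hx0 hxS => hest n x ⟨⟨fun j => ⟨norm_pos_iff.mpr (hx0 j),
        (norm_le_pi_norm x j).trans_lt (lt_min_iff.mp (mem_ball_zero_iff.mp hx)).1⟩, hxS⟩, hsub hx⟩
  have hnorm {x : Fin d → ℂ} (hx : x ∈ ball 0 ρ) (j : Fin d) : ‖x j‖ ≤ ρ :=
    (norm_le_pi_norm x j).trans (mem_ball_zero_iff.mp hx).le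
  let B (N : ℕ) : ℝ := ∑' β, ‖cQ N β‖ * monomialChar (fun _ => ρ) β
  refine ⟨ρ, hρ, g, fun N => |K N + B N| + 1, ?_⟩
  rw [polydisk_eq_ball hρ]
  refine ⟨fun n => (hg n).analyticOnNhd hρ, fun n => ⟨_, fun x hx => (hg n).norm_le (hnorm hx)⟩,
    fun n β hβ => ?_, fun N => by positivity, fun N x hx => ?_⟩
  · rw [(hg n).mixedPartial_zero_eq_zero_iff hρ, ← tsub_add_cancel_of_le (show a ≤ β from hβ), hcg]
  · calc ‖f x - ∑ n ∈ Finset.range N, g n x * P x ^ n‖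
        = ‖(f x - F N x) + Q N x * P x ^ N‖ := by
          rw [hexp N x hx.2, sub_add_eq_sub_sub, sub_add_cancel]
      _ ≤ K N * ‖P x‖ ^ N + B N * ‖P x‖ ^ N := by
          refine norm_add_le_of_le (hest N x ⟨hx.1, hsub (ball_subset_ball hρr hx.2)⟩) ?_
          rw [norm_mul, norm_pow]
          gcongr
          exact (hQ N).norm_le (hnorm hx.2)
      _ ≤ (|K N + B N| + 1) * ‖P x‖ ^ N := by
          rw [← add_mul]
          exact mul_le_mul_of_nonneg_right ((le_abs_self _).trans (lt_add_one _).le) (by positivity)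

/-- **Standard form of `P`-asymptotic expansions** (Theorem 4.7, part (1)).
If a holomorphic `f` on a `P`-sector admits a `P`-asymptotic expansion in the estimate
sense (witnessed by `fseq`, `Kseq`), then there are bounded holomorphic coefficients `g_n`
with Taylor coefficients supported off `a + ℕ^d` (where `a` is the `ℓ`-minimal exponent of
`P`) such that `|f − Σ_{n<N} g_n·P^n| ≤ L_N·|P|^N` on the sector near `0`. -/
theorem standard_form_of_P_asymptotic_expansions
    (d : ℕ) (hd : 1 ≤ d) (ℓ : Fin d → ℝ) (hℓpos : ∀ j, 0 < ℓ j)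
    (hℓinj : Function.Injective fun β : Fin d → ℕ => ∑ j, ℓ j * (β j : ℝ))
    (R : ℝ) (hR : 0 < R)
    (P : (Fin d → ℂ) → ℂ) (hP : AnalyticOnNhd ℂ P (polydisk d R))
    (hP0 : P 0 = 0) (hPne : ∃ x ∈ polydisk d R, P x ≠ 0)
    (a : Fin d → ℕ)
    (ha : mixedPartial a P 0 ≠ 0)
    (hamin : ∀ β : Fin d → ℕ, mixedPartial β P 0 ≠ 0 → β ≠ a →
      ∑ j, ℓ j * (a j : ℝ) < ∑ j, ℓ j * (β j : ℝ))
    (θ₁ θ₂ : ℝ) (hθ : θ₁ < θ₂) (hθ2 : θ₂ ≤ θ₁ + 2 * Real.pi)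
    (f : (Fin d → ℂ) → ℂ) (hf : AnalyticOnNhd ℂ f (PSector d P θ₁ θ₂ R))
    (ρ₁ : ℝ) (hρ₁ : 0 < ρ₁)
    (fseq : ℕ → (Fin d → ℂ) → ℂ)
    (hfseqA : ∀ n, AnalyticOnNhd ℂ (fseq n) (polydisk d ρ₁))
    (hfseqB : ∀ n, ∃ M, ∀ x ∈ polydisk d ρ₁, ‖fseq n x‖ ≤ M)
    (Kseq : ℕ → ℝ) (hKseq : ∀ n, 0 < Kseq n)
    (hest : ∀ n, ∀ x ∈ PSector d P θ₁ θ₂ R ∩ polydisk d ρ₁,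
      ‖f x - fseq n x‖ ≤ Kseq n * ‖P x‖ ^ n) :
    ∃ ρ > 0, ∃ g : ℕ → (Fin d → ℂ) → ℂ, ∃ L : ℕ → ℝ,
      (∀ n, AnalyticOnNhd ℂ (g n) (polydisk d ρ)) ∧
      (∀ n, ∃ M, ∀ x ∈ polydisk d ρ, ‖g n x‖ ≤ M) ∧
      (∀ n, ∀ β : Fin d → ℕ, (∀ j, a j ≤ β j) → mixedPartial β (g n) 0 = 0) ∧
      (∀ N, 0 < L N) ∧
      (∀ N : ℕ, ∀ x ∈ PSector d P θ₁ θ₂ R ∩ polydisk d ρ,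
        ‖f x - ∑ n ∈ Finset.range N, g n x * P x ^ n‖ ≤
          L N * ‖P x‖ ^ N) :=
  standard_form_of_P_asymptotic_expansions_general hℓpos hR hP ha hamin
    (PAsymptotic.frequently_mem_angularSector hθ) hρ₁ hfseqA hest
end
end
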